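/- Let p ≥ 1 be an integer and a > 2p a real number. Assume (ε_n) is a martingale difference sequence with E[ε_{n+1}² | F_n] = σ² a.s. for all n and sup_{n≥0} E[|ε_{n+1}|^a | F_n] < ∞ a.s. Assume the explosion coefficient f_n tends to zero a.s. and that there exists a positive random sequence (α_n) increasing to infinity and a symmetric positive definite d×d matrix L such that S_n/α_n → L a.s. Then almost surely lim_{n→∞} (1/log d_n) Σ_{k=1}^n [ (M_k^t S_{k-1}^{-1} M_k)^p − (M_k^t S_k^{-1} M_k)^p ] = λ(p), where λ(p) = (p/d) ℓ(p) and ℓ(p) = d σ^{2p} ∏_{j=1}^{p-1} (d + 2j). -/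

import Mathlib

open MeasureTheory ProbabilityTheory Filter Finset Matrix Topology

noncomputable section

/-- `S_n = S + ∑_{k=0}^n Φ_k Φ_kᵗ`. -/
def Smat {Ω : Type*} {d : ℕ} (S : Matrix (Fin d) (Fin d) ℝ)
    (Φ : ℕ → Ω → Fin d → ℝ) (n : ℕ) (ω : Ω) : Matrix (Fin d) (Fin d) ℝ :=
  S + ∑ k ∈ Finset.range (n + 1), vecMulVec (Φ k ω) (Φ k ω)

/-- The explosion coefficient `f_n = Φ_nᵗ S_n⁻¹ Φ_n`. -/
def expl {Ω : Type*} {d : ℕ} (S : Matrix (Fin d) (Fin d) ℝ)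
    (Φ : ℕ → Ω → Fin d → ℝ) (n : ℕ) (ω : Ω) : ℝ :=
  Φ n ω ⬝ᵥ ((Smat S Φ n ω)⁻¹ *ᵥ Φ n ω)

/-- The vector martingale transform `M_n = M_0 + ∑_{k=1}^n Φ_{k-1} ε_k`. -/
def Mart {Ω : Type*} {d : ℕ} (M0 : Ω → Fin d → ℝ) (Φ : ℕ → Ω → Fin d → ℝ)
    (ε : ℕ → Ω → ℝ) (n : ℕ) (ω : Ω) : Fin d → ℝ :=
  M0 ω + ∑ k ∈ Finset.range n, ε (k + 1) ω • Φ k ω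

/-- `ℓ(p) = d σ^{2p} ∏_{j=1}^{p-1} (d + 2j)`. -/
def elllim (d p : ℕ) (σ : ℝ) : ℝ :=
  (d : ℝ) * σ ^ (2 * p) * ∏ j ∈ Finset.Icc 1 (p - 1), ((d : ℝ) + 2 * (j : ℝ))


/-- Local martingale difference with respect to `m`. -/
def LMD {Ω : Type*} {m0 : MeasurableSpace Ω} (μ : Measure Ω) (m : MeasurableSpace Ω) (Y : Ω → ℝ) :
    Prop :=
  ∃ ρ : Ω → ℝ, StronglyMeasurable[m] ρ ∧ (∀ ω, 0 < ρ ω ∧ ρ ω ≤ 1) ∧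
    Integrable (fun ω => ρ ω * Y ω) μ ∧ μ[fun ω => ρ ω * Y ω|m] =ᵐ[μ] 0

theorem bdd_mul_zero {Ω : Type*} {m0 : MeasurableSpace Ω} {μ : Measure Ω} [IsProbabilityMeasure μ]
    {m : MeasurableSpace Ω} (hm : m ≤ m0) {f g : Ω → ℝ} (hf : StronglyMeasurable[m] f)
    {c : ℝ} (hc : ∀ ω, |f ω| ≤ c) (hg : Integrable g μ) (h0 : μ[g|m] =ᵐ[μ] 0) :
    Integrable (fun ω => f ω * g ω) μ ∧ μ[fun ω => f ω * g ω|m] =ᵐ[μ] 0 := by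
  have hi : Integrable (fun ω => f ω * g ω) μ :=
    hg.bdd_mul (hf.mono hm).aestronglyMeasurable (c := c) (Eventually.of_forall hc)
  refine ⟨hi, ?_⟩
  have := condExp_stronglyMeasurable_mul_of_bound hm hf hg c (Eventually.of_forall hc)
  filter_upwards [this, h0] with ω h1 h2
  have h3 : (μ[fun ω => f ω * g ω|m]) ω = (f * μ[g|m]) ω := h1
  rw [h3]; simp [h2]

theorem LMD.base {Ω : Type*} {m0 : MeasurableSpace Ω} {μ : Measure Ω} [IsProbabilityMeasure μ]
    {m : MeasurableSpace Ω} (hm : m ≤ m0) {f : Ω → ℝ} (hf : Integrable f μ) :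
    LMD μ m (fun ω => f ω - (μ[f|m]) ω) := by
  refine ⟨fun _ => 1, stronglyMeasurable_const, fun _ => ⟨one_pos, le_rfl⟩, ?_, ?_⟩
  · simp only [one_mul]; exact hf.sub integrable_condExp
  · simp only [one_mul]
    have h1 := condExp_sub hf (integrable_condExp (μ := μ) (m := m) (f := f)) m
    have h2 : μ[μ[f|m]|m] = μ[f|m] :=
      condExp_of_stronglyMeasurable hm stronglyMeasurable_condExp integrable_condExp
    have h3 : (fun ω => f ω - (μ[f|m]) ω) = f - μ[f|m] := rfl
    rw [h3]
    filter_upwards [h1] with ω h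
    rw [h, h2]; simp

theorem LMD.mul {Ω : Type*} {m0 : MeasurableSpace Ω} {μ : Measure Ω} [IsProbabilityMeasure μ]
    {m : MeasurableSpace Ω} (hm : m ≤ m0) {c Y : Ω → ℝ} (hc : Measurable[m] c)
    (hY : LMD μ m Y) : LMD μ m (fun ω => c ω * Y ω) := by
  obtain ⟨ρ, h1, h2, h3, h4⟩ := hY
  have hca : Measurable[m] (fun ω => |c ω|) := hc.abs
  have hcb : Measurable[m] (fun ω => (1 + |c ω|)⁻¹) := (hca.const_add 1).inv
  refine ⟨fun ω => (1 + |c ω|)⁻¹ * ρ ω, ?_, ?_, ?_⟩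
  · exact (hcb.mul h1.measurable).stronglyMeasurable
  · intro ω
    have : 0 ≤ |c ω| := abs_nonneg _
    have h5 : (1 + |c ω|)⁻¹ ≤ 1 := inv_le_one_of_one_le₀ (by linarith)
    exact ⟨mul_pos (by positivity) (h2 ω).1, mul_le_one₀ h5 (h2 ω).1.le (h2 ω).2⟩
  · have := bdd_mul_zero (μ := μ) hm (f := fun ω => c ω * (1 + |c ω|)⁻¹) (c := 1)
      (hc.mul hcb).stronglyMeasurable ?_ h3 h4
    · have e : (fun ω => (1 + |c ω|)⁻¹ * ρ ω * (c ω * Y ω)) =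
          fun ω => c ω * (1 + |c ω|)⁻¹ * (ρ ω * Y ω) := by ext ω; ring
      rw [e]; exact this
    · intro ω
      have : 0 ≤ |c ω| := abs_nonneg _
      rw [abs_mul, abs_of_nonneg (a := (1 + |c ω|)⁻¹) (by positivity), ← div_eq_mul_inv,
        div_le_one (by positivity)]
      linarith

theorem LMD.add {Ω : Type*} {m0 : MeasurableSpace Ω} {μ : Measure Ω} [IsProbabilityMeasure μ]
    {m : MeasurableSpace Ω} (hm : m ≤ m0) {Y Z : Ω → ℝ} 
    (hY : LMD μ m Y) (hZ : LMD μ m Z) : LMD μ m (fun ω => Y ω + Z ω) := by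
  obtain ⟨ρ, h1, h2, h3, h4⟩ := hY
  obtain ⟨τ, k1, k2, k3, k4⟩ := hZ
  have a1 := bdd_mul_zero (μ := μ) hm k1 (c := 1)
    (fun ω => by rw [abs_of_pos (k2 ω).1]; exact (k2 ω).2) h3 h4
  have a2 := bdd_mul_zero (μ := μ) hm h1 (c := 1)
    (fun ω => by rw [abs_of_pos (h2 ω).1]; exact (h2 ω).2) k3 k4
  have e : (fun ω => ρ ω * τ ω * (Y ω + Z ω)) =
    (fun ω => τ ω * (ρ ω * Y ω)) + (fun ω => ρ ω * (τ ω * Z ω)) := by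
    ext ω; simp only [Pi.add_apply]; ring
  refine ⟨fun ω => ρ ω * τ ω, h1.mul k1, fun ω => ⟨mul_pos (h2 ω).1 (k2 ω).1,
    mul_le_one₀ (h2 ω).2 (k2 ω).1.le (k2 ω).2⟩, ?_, ?_⟩
  · rw [e]; exact a1.1.add a2.1
  · rw [e]
    filter_upwards [condExp_add a1.1 a2.1 m, a1.2, a2.2] with ω b1 b2 b3
    rw [b1]; simp [b2, b3]

theorem tight_one {Ω : Type*} {m0 : MeasurableSpace Ω} {μ : Measure Ω} [IsProbabilityMeasure μ]
    {f : Ω → ℝ} (hf : Measurable f) {δ : ENNReal} (hδ : 0 < δ) :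
    ∃ K : ℝ, 0 < K ∧ μ {ω | K < f ω} < δ := by
  have h := tendsto_measure_iInter_atTop (μ := μ) (s := fun n : ℕ => {ω | (n : ℝ) < f ω})
    (fun n => (measurableSet_lt measurable_const hf).nullMeasurableSet)
    (fun i j hij ω (h : (j : ℝ) < f ω) => by
      have : (i : ℝ) ≤ j := by exact_mod_cast hij
      exact lt_of_le_of_lt this h) ⟨0, measure_ne_top _ _⟩
  have he : (⋂ n : ℕ, {ω | (n : ℝ) < f ω}) = ∅ := by
    ext ω
    simp only [Set.mem_iInter, Set.mem_ofPred_eq, Set.mem_empty_iff_false, iff_false, not_forall,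
      not_lt]
    exact exists_nat_ge (f ω)
  rw [he, measure_empty] at h
  obtain ⟨n, hn1, hn2⟩ := ((h.eventually_lt_const hδ).and (eventually_gt_atTop 0)).exists
  exact ⟨n, by exact_mod_cast hn2, hn1⟩

theorem tight_seq {Ω : Type*} {m0 : MeasurableSpace Ω} {μ : Measure Ω} [IsProbabilityMeasure μ]
    {f : ℕ → Ω → ℝ} (hf : ∀ k, Measurable (f k)) :
    ∃ K : ℕ → ℝ, (∀ k, 0 < K k) ∧ ∀ᵐ ω ∂μ, ∃ N : ℕ, ∀ k, f k ω ≤ N * K k := by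
  obtain ⟨δ, hδ, hsum⟩ := ENNReal.exists_pos_sum_of_countable' (ε := 1) one_ne_zero ℕ
  choose K hK1 hK2 using fun k => tight_one (μ := μ) (hf k) (hδ k)
  refine ⟨K, hK1, ?_⟩
  have := ae_eventually_notMem (μ := μ) (s := fun k => {ω | K k < f k ω})
    (ne_top_of_le_ne_top (ne_top_of_lt hsum) (ENNReal.tsum_le_tsum fun k => (hK2 k).le))
  filter_upwards [this] with ω hω
  obtain ⟨n0, hn0⟩ := eventually_atTop.1 hω
  obtain ⟨N, hN⟩ := exists_nat_ge (1 + ∑ k ∈ Finset.range n0, |f k ω| / K k)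
  refine ⟨N, fun k => ?_⟩
  have hs : 0 ≤ ∑ k ∈ Finset.range n0, |f k ω| / K k :=
    Finset.sum_nonneg fun k _ => div_nonneg (abs_nonneg _) (hK1 k).le
  by_cases hk : n0 ≤ k
  · have := hn0 k hk
    simp only [Set.mem_ofPred_eq, not_lt] at this
    have h1 : (1 : ℝ) ≤ N := by linarith
    nlinarith [hK1 k]
  · have h2 : |f k ω| / K k ≤ ∑ k ∈ Finset.range n0, |f k ω| / K k :=
      Finset.single_le_sum (f := fun k => |f k ω| / K k)
        (fun k _ => div_nonneg (abs_nonneg _) (hK1 k).le) (Finset.mem_range.2 (by omega))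
    have h3 : |f k ω| / K k ≤ N := by linarith
    rw [div_le_iff₀ (hK1 k)] at h3
    exact (le_abs_self _).trans h3

/-- Local martingales which are predictably bounded below converge. -/
theorem lmc {Ω : Type*} {m0 : MeasurableSpace Ω} {μ : Measure Ω} [IsProbabilityMeasure μ]
    (F : Filtration ℕ m0) {Y B : ℕ → Ω → ℝ} (hY : ∀ k, LMD μ (F k) (Y k))
    (hYm : ∀ k, Measurable[F (k + 1)] (Y k)) (hB : ∀ k, Measurable[F k] (B k))
    (hb : ∀ᵐ ω ∂μ, ∀ n, -B n ω ≤ ∑ k ∈ Finset.range (n + 1), Y k ω)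
    (hBb : ∀ᵐ ω ∂μ, ∃ C, ∀ n, B n ω ≤ C) :
    ∀ᵐ ω ∂μ, ∃ l, Tendsto (fun n => ∑ k ∈ Finset.range n, Y k ω) atTop (𝓝 l) := by
  choose ρ hρ1 hρ2 hρ3 hρ4 using hY
  obtain ⟨K, hK, hKa⟩ := tight_seq (μ := μ) (f := fun k ω => (ρ k ω)⁻¹)
    (fun k => ((hρ1 k).measurable.mono (F.le k) le_rfl).inv)
  set A : ℕ → ℕ → Set Ω := fun N k => ⋂ j ∈ Finset.range (k + 1),
    ({ω | B j ω ≤ N} ∩ {ω | (ρ j ω)⁻¹ ≤ N * K j}) with hA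
  have hAm : ∀ N k, MeasurableSet[F k] (A N k) := by
    intro N k
    refine Finset.measurableSet_biInter _ fun j hj => ?_
    have hjk : j ≤ k := by have := Finset.mem_range.1 hj; omega
    refine F.mono hjk _ ?_
    refine MeasurableSet.inter ?_ ?_
    · exact (hB j) measurableSet_Iic
    · exact ((hρ1 j).measurable.inv) measurableSet_Iic
  have hAmem : ∀ N k ω, ω ∈ A N k ↔ ∀ j ≤ k, B j ω ≤ N ∧ (ρ j ω)⁻¹ ≤ N * K j := by
    intro N k ω
    simp only [hA, Set.mem_iInter, Finset.mem_range, Nat.lt_succ_iff]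
    rfl
  have key : ∀ N : ℕ, ∀ᵐ ω ∂μ, ∃ l, Tendsto (fun n => ∑ k ∈ Finset.range n,
      (A N k).indicator (Y k) ω) atTop (𝓝 l) := by
    intro N
    have hinc : ∀ k, Integrable ((A N k).indicator (Y k)) μ ∧
        μ[(A N k).indicator (Y k)|F k] =ᵐ[μ] 0 := by
      intro k
      have := bdd_mul_zero (μ := μ) (F.le k) (f := (A N k).indicator (fun ω => (ρ k ω)⁻¹))
        (c := N * K k) ?_ ?_ (hρ3 k) (hρ4 k)
      · have e : (A N k).indicator (Y k) = fun ω =>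
            (A N k).indicator (fun ω => (ρ k ω)⁻¹) ω * (ρ k ω * Y k ω) := by
          ext ω
          by_cases h : ω ∈ A N k
          · simp only [Set.indicator_of_mem h]
            have := (hρ2 k ω).1.ne'
            field_simp
          · simp [Set.indicator_of_notMem h]
        rw [e]; exact this
      · exact ((hρ1 k).measurable.inv.indicator (hAm N k)).stronglyMeasurable
      · intro ω
        by_cases h : ω ∈ A N k
        · simp only [Set.indicator_of_mem h]
          rw [abs_of_pos (inv_pos.2 (hρ2 k ω).1)]
          exact (((hAmem N k ω).1 h) k le_rfl).2
        · simp only [Set.indicator_of_notMem h, abs_zero]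
          have := (hK k).le
          positivity
    have hint : ∀ n, Integrable (fun ω => ∑ k ∈ Finset.range n, (A N k).indicator (Y k) ω) μ :=
      fun n => integrable_finsetSum _ fun k _ => (hinc k).1
    have hmart : Martingale (fun n ω => ∑ k ∈ Finset.range n, (A N k).indicator (Y k) ω) F μ := by
      refine martingale_of_condExp_sub_eq_zero_nat ?_ hint ?_
      · intro n
        refine Measurable.stronglyMeasurable ?_
        refine Finset.measurable_fun_sum _ fun k hk => ?_
        have hkn : k + 1 ≤ n := Finset.mem_range.1 hk
        exact ((hYm k).mono (F.mono hkn) le_rfl).indicator (F.mono (by omega : k ≤ n) _ (hAm N k))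
      · intro n
        have e : ((fun ω => ∑ k ∈ Finset.range (n + 1), (A N k).indicator (Y k) ω) -
          fun ω => ∑ k ∈ Finset.range n, (A N k).indicator (Y k) ω) = (A N n).indicator (Y n) := by
          ext ω; simp [Finset.sum_range_succ]
        rw [e]; exact (hinc n).2
    have hlow : ∀ᵐ ω ∂μ, ∀ n, -(N : ℝ) ≤ ∑ k ∈ Finset.range n, (A N k).indicator (Y k) ω := by
      filter_upwards [hb] with ω hω n
      induction n with
      | zero => simp
      | succ n ih =>
        by_cases h : ω ∈ A N n
        · have h1 : ∑ k ∈ Finset.range (n + 1), (A N k).indicator (Y k) ω =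
              ∑ k ∈ Finset.range (n + 1), Y k ω := by
            refine Finset.sum_congr rfl fun k hk => ?_
            have hk' : k ≤ n := by have := Finset.mem_range.1 hk; omega
            rw [Set.indicator_of_mem]
            rw [hAmem] at h ⊢
            exact fun j hj => h j (hj.trans hk')
          rw [h1]
          have := hω n
          have h2 := ((hAmem N n ω).1 h n le_rfl).1
          linarith
        · rw [Finset.sum_range_succ, Set.indicator_of_notMem h]
          simpa using ih
    refine hmart.submartingale.exists_ae_tendsto_of_bdd (R := (2 * N : ℕ)) fun n => ?_
    have h0 : ∫ ω, ∑ k ∈ Finset.range n, (A N k).indicator (Y k) ω ∂μ = 0 := by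
      rw [integral_finsetSum _ fun k _ => (hinc k).1]
      refine Finset.sum_eq_zero fun k _ => ?_
      rw [← integral_condExp (F.le k), integral_congr_ae (hinc k).2]
      simp
    rw [eLpNorm_one_eq_lintegral_enorm, ← ofReal_integral_norm_eq_lintegral_enorm (hint n)]
    have h1 : ∫ ω, ‖∑ k ∈ Finset.range n, (A N k).indicator (Y k) ω‖ ∂μ ≤
        ∫ ω, (∑ k ∈ Finset.range n, (A N k).indicator (Y k) ω + 2 * N) ∂μ := by
      refine integral_mono_ae (hint n).norm ((hint n).add (integrable_const _)) ?_
      filter_upwards [hlow] with ω hω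
      have := hω n
      have hN : (0 : ℝ) ≤ N := Nat.cast_nonneg _
      simp only [Real.norm_eq_abs]
      rw [abs_le]; constructor <;> linarith
    rw [integral_add (hint n) (integrable_const _), h0] at h1
    simp only [integral_const, probReal_univ, smul_eq_mul, one_mul, zero_add] at h1
    refine (ENNReal.ofReal_le_ofReal h1).trans ?_
    rw [show (2 * (N : ℝ)) = ((2 * N : ℕ) : ℝ) by push_cast; ring, ENNReal.ofReal_natCast]
    simp
  filter_upwards [ae_all_iff.2 key, hBb, hKa] with ω h1 ⟨C, hC⟩ ⟨N1, hN1⟩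
  obtain ⟨N2, hN2⟩ := exists_nat_ge C
  obtain ⟨l, hl⟩ := h1 (N1 + N2)
  refine ⟨l, hl.congr fun n => Finset.sum_congr rfl fun k _ => ?_⟩
  rw [Set.indicator_of_mem]
  rw [hAmem]
  intro j _
  have := hC j
  have h3 := hN1 j
  have h4 := (hK j).le
  push_cast
  have h5 : (0 : ℝ) ≤ N1 := Nat.cast_nonneg _
  have h6 : (0 : ℝ) ≤ N2 := Nat.cast_nonneg _
  constructor
  · linarith
  · nlinarith

theorem chow_ineq_nonneg {b : ℝ} (hb : 1 < b) (hb2 : b ≤ 2) {x : ℝ} (hx : 0 ≤ x) (y : ℝ) :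
    |x + y| ^ b ≤ x ^ b + b * x ^ (b - 1) * y + 13 * |y| ^ b := by
  have hb0 : 0 < b := by linarith
  rcases le_or_gt (x / 2) |y| with h | h
  · have hy := abs_nonneg y
    have h1 : |x + y| ^ b ≤ 9 * |y| ^ b := by
      have : |x + y| ≤ 3 * |y| := by
        calc |x + y| ≤ |x| + |y| := abs_add_le _ _
          _ ≤ 3 * |y| := by rw [abs_of_nonneg hx]; linarith
      calc |x + y| ^ b ≤ (3 * |y|) ^ b := Real.rpow_le_rpow (abs_nonneg _) this hb0.le
        _ = 3 ^ b * |y| ^ b := Real.mul_rpow (by norm_num) hy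
        _ ≤ 9 * |y| ^ b := by
          gcongr
          calc (3 : ℝ) ^ b ≤ 3 ^ (2 : ℝ) := Real.rpow_le_rpow_of_exponent_le (by norm_num) hb2
            _ = 9 := by norm_num
    have h2 : x ^ (b - 1) * |y| ≤ 2 * |y| ^ b := by
      have e : |y| ^ b = |y| ^ (b - 1) * |y| := by
        rcases hy.eq_or_lt with h0 | h0
        · rw [← h0]; simp [hb0.ne']
        · rw [← Real.rpow_add_one h0.ne']; simp
      rw [e, ← mul_assoc]
      gcongr
      calc x ^ (b - 1) ≤ (2 * |y|) ^ (b - 1) := Real.rpow_le_rpow hx (by linarith) (by linarith)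
        _ = 2 ^ (b - 1) * |y| ^ (b - 1) := Real.mul_rpow (by norm_num) hy
        _ ≤ 2 * |y| ^ (b - 1) := by
          gcongr
          calc (2 : ℝ) ^ (b - 1) ≤ 2 ^ (1 : ℝ) :=
                Real.rpow_le_rpow_of_exponent_le (by norm_num) (by linarith)
            _ = 2 := by norm_num
    have h3 : 0 ≤ x ^ b := Real.rpow_nonneg hx _
    have h4 : 0 ≤ x ^ (b - 1) := Real.rpow_nonneg hx _
    have h5 : -(x ^ (b - 1) * |y|) ≤ x ^ (b - 1) * y := by
      rw [← mul_neg]; gcongr; exact neg_abs_le y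
    have h6 : 0 ≤ x ^ (b - 1) * |y| := by positivity
    nlinarith
  · have hx0 : 0 < x := by linarith [abs_nonneg y]
    obtain ⟨u, rfl⟩ : ∃ u, y = x * u := ⟨y / x, by field_simp⟩
    rw [abs_mul, abs_of_pos hx0] at h
    have hu : |u| ≤ 1 / 2 := by nlinarith
    have hu1 := abs_le.1 hu
    have e1 : |x + x * u| = x * (1 + u) := by
      rw [abs_of_nonneg] <;> nlinarith
    have e2 : x ^ b = x ^ (b - 1) * x := by rw [← Real.rpow_add_one hx0.ne']; simp
    rw [e1, abs_mul, abs_of_pos hx0, Real.mul_rpow hx0.le (by linarith),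
      Real.mul_rpow hx0.le (abs_nonneg _)]
    have e3 : b * x ^ (b - 1) * (x * u) = x ^ b * (b * u) := by rw [e2]; ring
    rw [e3]
    have h1 : (1 + u) ^ b ≤ 1 + b * u + |u| ^ b := by
      have e4 : (1 + u) ^ b = (1 + u) ^ (b - 1) * (1 + u) := by
        rw [← Real.rpow_add_one (by linarith)]; simp
      have h7 := rpow_one_add_le_one_add_mul_self (s := u) (by linarith) (p := b - 1)
        (by linarith) (by linarith)
      have h8 : u ^ 2 ≤ |u| ^ b := by
        rw [← sq_abs, ← Real.rpow_two]
        rcases (abs_nonneg u).eq_or_lt with h0 | h0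
        · rw [← h0]; simp [hb0.ne']
        · exact Real.rpow_le_rpow_of_exponent_ge h0 (by linarith) hb2
      rw [e4]
      nlinarith [sq_nonneg u]
    have h9 : 0 ≤ x ^ b := Real.rpow_nonneg hx _
    have h10 : 0 ≤ |u| ^ b := Real.rpow_nonneg (abs_nonneg _) _
    nlinarith

theorem chow_ineq {b : ℝ} (hb : 1 < b) (hb2 : b ≤ 2) : ∃ ψ : ℝ → ℝ, Measurable ψ ∧
    ∀ x y, |x + y| ^ b ≤ |x| ^ b + ψ x * y + 13 * |y| ^ b := by
  refine ⟨fun x => b * |x| ^ (b - 1) * (if 0 ≤ x then 1 else -1), ?_, ?_⟩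
  · refine Measurable.mul (by fun_prop) (Measurable.ite measurableSet_Ici measurable_const
      measurable_const)
  · intro x y
    by_cases h : 0 ≤ x
    · have := chow_ineq_nonneg hb hb2 h y
      simp only [h, if_true, abs_of_nonneg h]; linarith
    · have := chow_ineq_nonneg hb hb2 (x := -x) (by linarith) (-y)
      rw [← neg_add, abs_neg, abs_neg] at this
      simp only [h, if_false, abs_of_neg (not_le.1 h)]; linarith

theorem add_rpow_le4 {b : ℝ} (hb : 1 < b) (hb2 : b ≤ 2) (u v : ℝ) :
    |u - v| ^ b ≤ 4 * (|u| ^ b + |v| ^ b) := by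
  have hm : 0 ≤ max |u| |v| := le_max_of_le_left (abs_nonneg _)
  have h1 : |u - v| ≤ 2 * max |u| |v| := by
    have := abs_sub u v
    linarith [le_max_left |u| |v|, le_max_right |u| |v|]
  have hu : 0 ≤ |u| ^ b := Real.rpow_nonneg (abs_nonneg _) _
  have hv : 0 ≤ |v| ^ b := Real.rpow_nonneg (abs_nonneg _) _
  calc |u - v| ^ b ≤ (2 * max |u| |v|) ^ b := Real.rpow_le_rpow (abs_nonneg _) h1 (by linarith)
    _ = 2 ^ b * (max |u| |v|) ^ b := Real.mul_rpow (by norm_num) hm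
    _ ≤ 4 * (max |u| |v|) ^ b := by
      gcongr
      calc (2 : ℝ) ^ b ≤ 2 ^ (2 : ℝ) := Real.rpow_le_rpow_of_exponent_le (by norm_num) hb2
        _ = 4 := by norm_num
    _ ≤ 4 * (|u| ^ b + |v| ^ b) := by
      gcongr
      rcases max_choice |u| |v| with h | h <;> rw [h] <;> linarith

theorem meas_rpow {Ω : Type*} {m : MeasurableSpace Ω} {f : Ω → ℝ} (hf : Measurable[m] f) (b : ℝ) :
    Measurable[m] (fun ω => f ω ^ b) :=
  (by fun_prop : Measurable fun x : ℝ => x ^ b).comp hf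

theorem meas_abs {Ω : Type*} {m : MeasurableSpace Ω} {f : Ω → ℝ} (hf : Measurable[m] f) :
    Measurable[m] (fun ω => |f ω|) :=
  (by fun_prop : Measurable fun x : ℝ => |x|).comp hf

theorem chow {Ω : Type*} {m0 : MeasurableSpace Ω} {μ : Measure Ω} [IsProbabilityMeasure μ]
    (F : Filtration ℕ m0) {η c : ℕ → Ω → ℝ} {b : ℝ} (hb : 1 < b) (hb2 : b ≤ 2)
    (hηm : ∀ k, Measurable[F (k + 1)] (η k)) (hηi : ∀ k, Integrable (η k) μ)
    (hηb : ∀ k, Integrable (fun ω => |η k ω| ^ b) μ) (hc : ∀ k, Measurable[F k] (c k))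
    (hbd : ∀ᵐ ω ∂μ, ∃ C, ∀ k, |(μ[η k|F k]) ω| ≤ C)
    (hbd2 : ∀ᵐ ω ∂μ, ∃ C, ∀ k, |(μ[fun ω => |η k ω| ^ b|F k]) ω| ≤ C)
    (hs : ∀ᵐ ω ∂μ, Summable fun k => |c k ω| ^ b) :
    ∀ᵐ ω ∂μ, ∃ l, Tendsto (fun n => ∑ k ∈ Finset.range n, c k ω * (η k ω - (μ[η k|F k]) ω))
      atTop (𝓝 l) := by
  obtain ⟨ψ, hψ, hψi⟩ := chow_ineq hb hb2
  set e : ℕ → Ω → ℝ := fun k => μ[η k|F k] with he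
  set E : ℕ → Ω → ℝ := fun k => μ[fun ω => |η k ω| ^ b|F k] with hE
  set S : ℕ → Ω → ℝ := fun n ω => ∑ k ∈ Finset.range n, c k ω * (η k ω - e k ω) with hS
  have hem : ∀ k, Measurable[F k] (e k) := fun k => stronglyMeasurable_condExp.measurable
  have hEm : ∀ k, Measurable[F k] (E k) := fun k => stronglyMeasurable_condExp.measurable
  have hdm : ∀ k, Measurable[F (k + 1)] (fun ω => η k ω - e k ω) := fun k =>
    (hηm k).sub ((hem k).mono (F.mono k.le_succ) le_rfl)
  have hSm : ∀ n, Measurable[F n] (S n) := by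
    intro n
    refine Finset.measurable_fun_sum _ fun k hk => ?_
    have hkn : k + 1 ≤ n := Finset.mem_range.1 hk
    exact ((hc k).mono (F.mono (by omega)) le_rfl).mul ((hdm k).mono (F.mono hkn) le_rfl)
  have hcb : ∀ k, Measurable[F k] (fun ω => 52 * |c k ω| ^ b) := fun k =>
    (meas_rpow (meas_abs (hc k)) b).const_mul 52
  set Y1 : ℕ → Ω → ℝ := fun k ω => (ψ (S k ω) * c k ω) * (η k ω - e k ω) +
    (52 * |c k ω| ^ b) * (|η k ω| ^ b - E k ω) with hY1
  set Y2 : ℕ → Ω → ℝ := fun k ω => c k ω * (η k ω - e k ω) + Y1 k ω with hY2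
  have l0 : ∀ k, LMD μ (F k) (fun ω => η k ω - e k ω) := fun k => LMD.base (F.le k) (hηi k)
  have l1 : ∀ k, LMD μ (F k) (Y1 k) := fun k =>
    ((l0 k).mul (F.le k) ((hψ.comp (hSm k)).mul (hc k))).add (F.le k)
      ((LMD.base (F.le k) (hηb k)).mul (F.le k) (hcb k))
  have l2 : ∀ k, LMD μ (F k) (Y2 k) := fun k =>
    ((l0 k).mul (F.le k) (hc k)).add (F.le k) (l1 k)
  have m1 : ∀ k, Measurable[F (k + 1)] (Y1 k) := by
    intro k
    have hle := F.mono k.le_succ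
    refine Measurable.add (Measurable.mul ?_ (hdm k)) (Measurable.mul ?_ ?_)
    · exact ((hψ.comp (hSm k)).mul (hc k)).mono hle le_rfl
    · exact (hcb k).mono hle le_rfl
    · exact (meas_rpow (meas_abs (hηm k)) b).sub ((hEm k).mono hle le_rfl)
  have m2 : ∀ k, Measurable[F (k + 1)] (Y2 k) := fun k =>
    (((hc k).mono (F.mono k.le_succ) le_rfl).mul (hdm k)).add (m1 k)
  set B : ℕ → Ω → ℝ := fun n ω => 1 + ∑ k ∈ Finset.range (n + 1),
    (52 * |c k ω| ^ b) * (|E k ω| + |e k ω| ^ b) with hB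
  have hBm : ∀ n, Measurable[F n] (B n) := by
    intro n
    refine Measurable.const_add (Finset.measurable_fun_sum _ fun k hk => ?_) 1
    have hkn : k ≤ n := by have := Finset.mem_range.1 hk; omega
    have : Measurable[F k] (fun ω => (52 * |c k ω| ^ b) * (|E k ω| + |e k ω| ^ b)) :=
      (hcb k).mul ((meas_abs (hEm k)).add (meas_rpow (meas_abs (hem k)) b))
    exact this.mono (F.mono hkn) le_rfl
  have hBb : ∀ᵐ ω ∂μ, ∃ C, ∀ n, B n ω ≤ C := by
    filter_upwards [hbd, hbd2, hs] with ω ⟨C1, h1⟩ ⟨C2, h2⟩ h3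
    have hC1 : 0 ≤ C1 := (abs_nonneg _).trans (h1 0)
    have hC2 : 0 ≤ C2 := (abs_nonneg _).trans (h2 0)
    have hD : 0 ≤ C2 + C1 ^ b := by positivity
    refine ⟨1 + ∑' k, 52 * |c k ω| ^ b * (C2 + C1 ^ b), fun n => ?_⟩
    have hsm : Summable fun k => 52 * |c k ω| ^ b * (C2 + C1 ^ b) :=
      (h3.mul_left 52).mul_right _
    have h4 := hsm.sum_le_tsum (Finset.range (n + 1)) (fun k _ => by positivity)
    simp only [hB]
    refine add_le_add le_rfl (le_trans (Finset.sum_le_sum fun k _ => ?_) h4)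
    have h5 : |e k ω| ^ b ≤ C1 ^ b := Real.rpow_le_rpow (abs_nonneg _) (h1 k) (by linarith)
    have h6 : |E k ω| ≤ C2 := h2 k
    gcongr
  have step : ∀ ω n, |S n ω| ^ b ≤ ∑ k ∈ Finset.range n, Y1 k ω +
      ∑ k ∈ Finset.range n, (52 * |c k ω| ^ b) * (|E k ω| + |e k ω| ^ b) := by
    intro ω n
    induction n with
    | zero => simp [hS]; rw [Real.zero_rpow (by linarith)]
    | succ n ih =>
      rw [Finset.sum_range_succ, Finset.sum_range_succ]
      have e1 : S (n + 1) ω = S n ω + c n ω * (η n ω - e n ω) := by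
        simp only [hS, Finset.sum_range_succ]
      rw [e1]
      have h1 := hψi (S n ω) (c n ω * (η n ω - e n ω))
      rw [abs_mul, Real.mul_rpow (abs_nonneg _) (abs_nonneg _)] at h1
      have h2 := add_rpow_le4 hb hb2 (η n ω) (e n ω)
      have h3 : 0 ≤ |c n ω| ^ b := Real.rpow_nonneg (abs_nonneg _) _
      have h4 := mul_le_mul_of_nonneg_left h2 h3
      have h5 := mul_le_mul_of_nonneg_left (le_abs_self (E n ω)) h3
      simp only [hY1] at ih ⊢
      nlinarith
  have r1 := lmc F l1 m1 hBm (Eventually.of_forall fun ω n => by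
    have h1 := step ω (n + 1)
    have h2 : 0 ≤ |S (n + 1) ω| ^ b := Real.rpow_nonneg (abs_nonneg _) _
    simp only [hB]; linarith) hBb
  have r2 := lmc F l2 m2 hBm (Eventually.of_forall fun ω n => by
    have h1 := step ω (n + 1)
    have h2 : |S (n + 1) ω| ≤ 1 + |S (n + 1) ω| ^ b := by
      rcases le_total |S (n + 1) ω| 1 with h | h
      · have : 0 ≤ |S (n + 1) ω| ^ b := Real.rpow_nonneg (abs_nonneg _) _
        linarith
      · have := Real.rpow_le_rpow_of_exponent_le h hb.le
        rw [Real.rpow_one] at this; linarith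
    have h3 := neg_abs_le (S (n + 1) ω)
    have h4 : ∑ k ∈ Finset.range (n + 1), Y2 k ω =
      S (n + 1) ω + ∑ k ∈ Finset.range (n + 1), Y1 k ω := by
      simp only [hY2, hS, Finset.sum_add_distrib]
    rw [h4]
    simp only [hB]; linarith) hBb
  filter_upwards [r1, r2] with ω ⟨a1, h1⟩ ⟨a2, h2⟩
  refine ⟨a2 - a1, (h2.sub h1).congr fun n => ?_⟩
  simp only [hY2, Finset.sum_add_distrib]; ring

/-- Toeplitz-type lemma -/
theorem toeplitz {f u N : ℕ → ℝ} (hu : ∀ k, 0 ≤ u k) (hN : Monotone N)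
    (hN0 : ∀ k, 1 ≤ N k) (hNt : Tendsto N atTop atTop)
    (hf : f =o[atTop] u) {C : ℝ} (hC : ∀ n, ∑ k ∈ Finset.range n, u k ≤ C * N n) :
    (fun n => ∑ k ∈ Finset.range n, f k) =o[atTop] N := by
  have h1 : f =o[atTop] fun k => u k + (N (k + 1) - N k) := by
    refine hf.trans_le fun k => ?_
    have h2 := hN k.le_succ
    rw [Real.norm_eq_abs, Real.norm_eq_abs, abs_of_nonneg (hu k),
      abs_of_nonneg (by linarith [hu k])]
    linarith
  have h2 : ∀ n, ∑ k ∈ Finset.range n, (u k + (N (k + 1) - N k)) =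
      ∑ k ∈ Finset.range n, u k + (N n - N 0) := by
    intro n; rw [Finset.sum_add_distrib, Finset.sum_range_sub]
  have h3 := h1.sum_range (fun k => by have := hN k.le_succ; have := hu k; simp; linarith) (by
    simp only [h2]
    refine tendsto_atTop_mono (f := fun n => N n - N 0) (fun n => ?_)
      (tendsto_atTop_add_const_right _ _ hNt)
    have := Finset.sum_nonneg (s := Finset.range n) fun k _ => hu k
    linarith)
  refine h3.trans_isBigO (Asymptotics.IsBigO.of_bound (C + 1) (Eventually.of_forall fun n => ?_))
  rw [h2, Real.norm_eq_abs, Real.norm_eq_abs, abs_of_nonneg, abs_of_nonneg]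
  · have := hC n; have := hN0 0; nlinarith
  · linarith [hN0 n]
  · have := Finset.sum_nonneg (s := Finset.range n) fun k _ => hu k
    have := hN (Nat.zero_le n); linarith

theorem kronecker {y N : ℕ → ℝ} (hN : Monotone N)
    (hN0 : ∀ k, 1 ≤ N k) (hNt : Tendsto N atTop atTop) {l : ℝ}
    (hl : Tendsto (fun n => ∑ k ∈ Finset.range n, (N (k + 1))⁻¹ * y k) atTop (𝓝 l)) :
    (fun n => ∑ k ∈ Finset.range n, y k) =o[atTop] N := by
  set s : ℕ → ℝ := fun n => ∑ k ∈ Finset.range n, (N (k + 1))⁻¹ * y k with hs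
  have e : ∀ n, ∑ k ∈ Finset.range n, y k = N n * (s n - l) + N 0 * l
      - ∑ k ∈ Finset.range n, (N (k + 1) - N k) * (s k - l) := by
    intro n
    induction n with
    | zero => simp [hs]
    | succ n ih =>
      rw [Finset.sum_range_succ, ih, Finset.sum_range_succ _ n]
      have : s (n + 1) = s n + (N (n + 1))⁻¹ * y n := by simp only [hs, Finset.sum_range_succ]
      rw [this]
      have : N (n + 1) ≠ 0 := by linarith [hN0 (n + 1)]
      field_simp
      ring
  simp only [e]
  have hsl : Tendsto (fun n => s n - l) atTop (𝓝 0) := by simpa using hl.sub_const l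
  have hsl' : (fun n => s n - l) =o[atTop] (fun _ => (1 : ℝ)) :=
    (Asymptotics.isLittleO_one_iff ℝ).2 hsl
  refine Asymptotics.IsLittleO.sub (Asymptotics.IsLittleO.add ?_ ?_) ?_
  · simpa using (Asymptotics.isBigO_refl N atTop).mul_isLittleO hsl'
  · exact Asymptotics.isLittleO_const_left.2 (Or.inr (tendsto_norm_atTop_atTop.comp hNt))
  · refine toeplitz (u := fun k => N (k + 1) - N k) (C := 1) (fun k => ?_) hN hN0 hNt ?_ ?_
    · have := hN k.le_succ; simp at this; linarith
    · simpa using (Asymptotics.isBigO_refl (fun k => N (k + 1) - N k) atTop).mul_isLittleO hsl'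
    · intro n; rw [Finset.sum_range_sub]; linarith [hN0 0]

theorem pow_taylor (p : ℕ) : ∃ C : ℝ, 0 ≤ C ∧ ∀ u : ℝ, -1 ≤ u → u ≤ 3 →
    (1 + u) ^ p ≤ 1 + p * u + C * u ^ 2 := by
  induction p with
  | zero => exact ⟨0, le_rfl, fun u _ _ => by simp⟩
  | succ p ih =>
    obtain ⟨C, hC, h⟩ := ih
    refine ⟨p + 4 * C, by positivity, fun u h1 h2 => ?_⟩
    have h3 := mul_le_mul_of_nonneg_right (h u h1 h2) (by linarith : 0 ≤ 1 + u)
    rw [pow_succ]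
    refine h3.trans ?_
    push_cast
    nlinarith [mul_nonneg (mul_nonneg hC (sq_nonneg u)) (by linarith : 0 ≤ 3 - u)]

theorem rpow_taylor {p : ℕ} {r : ℝ} (h1 : (p : ℝ) ≤ r) (h2 : r ≤ p + 1) : ∃ C : ℝ, 0 ≤ C ∧
    ∀ u : ℝ, -1 ≤ u → u ≤ 3 → (1 + u) ^ r ≤ 1 + r * u + C * u ^ 2 := by
  obtain ⟨C, hC, h⟩ := pow_taylor p
  refine ⟨p + 4 * C, by positivity, fun u hu1 hu2 => ?_⟩
  obtain ⟨s, rfl⟩ : ∃ s, r = p + s := ⟨r - p, by ring⟩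
  have hs0 : 0 ≤ s := by linarith
  have hs1 : s ≤ 1 := by linarith
  have hu : 0 ≤ 1 + u := by linarith
  rw [Real.rpow_add_of_nonneg hu (by positivity) hs0, Real.rpow_natCast]
  have h3 := rpow_one_add_le_one_add_mul_self (s := u) hu1 hs0 hs1
  have h4 : 0 ≤ 1 + s * u := by nlinarith
  have h5 : 1 + s * u ≤ 4 := by nlinarith
  have h6 := mul_le_mul_of_nonneg_left h3 (pow_nonneg hu p)
  have h7 := mul_le_mul_of_nonneg_right (h u hu1 hu2) h4
  refine h6.trans (h7.trans ?_)
  have hp : (0 : ℝ) ≤ p := by positivity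
  have h8 : C * u ^ 2 * (1 + s * u) ≤ C * u ^ 2 * 4 := by gcongr
  have h9 : (p : ℝ) * s * u ^ 2 ≤ p * 1 * u ^ 2 := by gcongr
  nlinarith

theorem rpow_taylor2 {p : ℕ} {r : ℝ} (hr : 1 ≤ r) (h1 : (p : ℝ) ≤ r) (h2 : r ≤ p + 1) :
    ∃ C : ℝ, 0 ≤ C ∧
    ∀ τ v : ℝ, |τ| ≤ v → (1 + (2 * τ + v ^ 2)) ^ r ≤ 1 + 2 * r * τ + C * (v ^ 2 + (v ^ 2) ^ r) := by
  obtain ⟨C, hC, h⟩ := rpow_taylor h1 h2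
  refine ⟨r + 9 * C + 4 ^ r + 2 * r, by positivity, fun τ v hτ => ?_⟩
  have hv : 0 ≤ v := (abs_nonneg _).trans hτ
  have hτ' := abs_le.1 hτ
  have hvr : 0 ≤ (v ^ 2) ^ r := by positivity
  have h4 : (0 : ℝ) ≤ 4 ^ r := by positivity
  have hu : -1 ≤ 2 * τ + v ^ 2 := by nlinarith [sq_nonneg (v - 1)]
  rcases le_total v 1 with hv1 | hv1
  · have h3 := h (2 * τ + v ^ 2) hu (by nlinarith)
    have h5 : (2 * τ + v ^ 2) ^ 2 ≤ 9 * v ^ 2 := by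
      have : |2 * τ + v ^ 2| ≤ 3 * v := by rw [abs_le]; constructor <;> nlinarith
      calc _ = |2 * τ + v ^ 2| ^ 2 := (sq_abs _).symm
        _ ≤ (3 * v) ^ 2 := by gcongr
        _ = 9 * v ^ 2 := by ring
    have h6 := mul_le_mul_of_nonneg_left h5 hC
    have h7 : 0 ≤ (r + 9 * C + 4 ^ r + 2 * r) * (v ^ 2) ^ r := by positivity
    have h8 : 0 ≤ (4 ^ r + 2 * r) * v ^ 2 := by positivity
    nlinarith
  · have h3 : (1 + (2 * τ + v ^ 2)) ^ r ≤ 4 ^ r * (v ^ 2) ^ r := by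
      rw [← Real.mul_rpow (by norm_num) (by positivity)]
      exact Real.rpow_le_rpow (by linarith) (by nlinarith) (by linarith)
    have h5 : v ≤ (v ^ 2) ^ r := by
      have := Real.rpow_le_rpow_of_exponent_le (x := v ^ 2) (by nlinarith) hr
      rw [Real.rpow_one] at this
      nlinarith
    have h6 : 0 ≤ (r + 9 * C + 4 ^ r + 2 * r) * v ^ 2 := by positivity
    have h7 : 0 ≤ (r + 9 * C) * (v ^ 2) ^ r := by positivity
    have h8 : -(2 * r * (v ^ 2) ^ r) ≤ 2 * r * τ := by
      rw [← mul_neg]; gcongr; linarith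
    nlinarith

theorem quad_rpow_le {p : ℕ} {r : ℝ} (hr : 1 < r) (h1 : (p : ℝ) ≤ r) (h2 : r ≤ p + 1) :
    ∃ C : ℝ, 0 ≤ C ∧ ∀ A β γ e : ℝ, 0 ≤ A → 0 ≤ γ → β ^ 2 ≤ A * γ →
      (A + 2 * e * β + e ^ 2 * γ) ^ r ≤ A ^ r + 2 * r * A ^ (r - 1) * β * e +
        C * (A ^ (r - 1) * γ * e ^ 2 + γ ^ r * |e| ^ (2 * r)) := by
  obtain ⟨C, hC, h⟩ := rpow_taylor2 hr.le h1 h2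
  refine ⟨C + 1, by positivity, fun A β γ e hA hγ hβ => ?_⟩
  have hr0 : 0 < r := by linarith
  have he : |e| ^ (2 * r) = (e ^ 2) ^ r := by
    rw [Real.rpow_mul (abs_nonneg _), Real.rpow_two, sq_abs]
  rw [he]
  rcases hA.eq_or_lt with h0 | h0
  · subst h0
    have hb : β = 0 := by
      have : β ^ 2 ≤ 0 := by simpa using hβ
      exact pow_eq_zero_iff (two_ne_zero) |>.1 (le_antisymm this (sq_nonneg _))
    subst hb
    rw [Real.zero_rpow hr0.ne', Real.zero_rpow (by linarith : r - 1 ≠ 0)]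
    simp only [mul_zero, zero_mul, zero_add]
    rw [Real.mul_rpow (sq_nonneg _) hγ]
    have : 0 ≤ (e ^ 2) ^ r * γ ^ r := by positivity
    nlinarith
  · set v : ℝ := Real.sqrt (e ^ 2 * γ / A) with hv
    have hv2 : v ^ 2 = e ^ 2 * γ / A := Real.sq_sqrt (by positivity)
    have hτ : |e * β / A| ≤ v := by
      apply Real.abs_le_sqrt
      rw [div_pow, mul_pow, div_le_div_iff₀ (by positivity) h0]
      nlinarith [mul_le_mul_of_nonneg_left hβ (mul_nonneg (sq_nonneg e) hA)]
    have h3 := h (e * β / A) v hτ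
    rw [hv2] at h3
    have e1 : A + 2 * e * β + e ^ 2 * γ = A * (1 + (2 * (e * β / A) + e ^ 2 * γ / A)) := by
      field_simp
      try ring
    have hnn : 0 ≤ 1 + (2 * (e * β / A) + e ^ 2 * γ / A) := by
      rw [← hv2]
      have := abs_le.1 hτ
      nlinarith [sq_nonneg (v - 1)]
    have e2 : A ^ r = A ^ (r - 1) * A := by rw [← Real.rpow_add_one h0.ne']; simp
    rw [e1, Real.mul_rpow hA hnn]
    have hAr : 0 ≤ A ^ r := by positivity
    refine (mul_le_mul_of_nonneg_left h3 hAr).trans ?_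
    have e3 : A ^ r * (e ^ 2 * γ / A) ^ r = γ ^ r * (e ^ 2) ^ r := by
      rw [← Real.mul_rpow hA (by positivity), ← Real.mul_rpow hγ (by positivity)]
      congr 1; field_simp
    have e4 : A ^ r * (e ^ 2 * γ / A) = A ^ (r - 1) * γ * e ^ 2 := by
      rw [e2]; field_simp
    have e5 : A ^ r * (2 * r * (e * β / A)) = 2 * r * A ^ (r - 1) * β * e := by
      rw [e2]; field_simp
    have h5 : 0 ≤ A ^ (r - 1) * γ * e ^ 2 + γ ^ r * (e ^ 2) ^ r := by positivity
    calc A ^ r * (1 + 2 * r * (e * β / A) + C * (e ^ 2 * γ / A + (e ^ 2 * γ / A) ^ r))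
        = A ^ r + A ^ r * (2 * r * (e * β / A)) + C * (A ^ r * (e ^ 2 * γ / A)
          + A ^ r * (e ^ 2 * γ / A) ^ r) := by ring
      _ = A ^ r + 2 * r * A ^ (r - 1) * β * e + C * (A ^ (r - 1) * γ * e ^ 2 +
          γ ^ r * (e ^ 2) ^ r) := by rw [e3, e4, e5]
      _ ≤ _ := by nlinarith

/-- the quadratic coefficient -/
def c2 (q : ℕ) (A β γ : ℝ) : ℝ := q * A ^ (q - 1) * γ + 2 * q * ((q - 1 : ℕ) : ℝ) * A ^ (q - 2) * β ^ 2

theorem c2_bound {K : ℝ} (hK : 0 ≤ K) (q : ℕ) : ∃ C : ℝ, 0 ≤ C ∧ ∀ A β γ X W : ℝ, 0 ≤ X → 0 ≤ W →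
    |A| ≤ K * X ^ 2 → |β| ≤ K * X * W → |γ| ≤ K * W ^ 2 →
    |c2 q A β γ| ≤ C * (X ^ (2 * (q - 1)) * W ^ 2) := by
  refine ⟨q * K ^ (q - 1) * K + 2 * q * ((q - 1 : ℕ) : ℝ) * K ^ (q - 2) * K ^ 2, by positivity,
    fun A β γ X W hX hW hA hβ hγ => ?_⟩
  have h1 : |(q : ℝ) * A ^ (q - 1) * γ| ≤ q * K ^ (q - 1) * K * (X ^ (2 * (q - 1)) * W ^ 2) := by
    rw [abs_mul, abs_mul, abs_pow, Nat.abs_cast]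
    calc (q : ℝ) * |A| ^ (q - 1) * |γ| ≤ q * (K * X ^ 2) ^ (q - 1) * (K * W ^ 2) := by gcongr
      _ = _ := by rw [mul_pow, ← pow_mul]; ring
  have h2 : |2 * (q : ℝ) * ((q - 1 : ℕ) : ℝ) * A ^ (q - 2) * β ^ 2| ≤
      2 * q * ((q - 1 : ℕ) : ℝ) * K ^ (q - 2) * K ^ 2 * (X ^ (2 * (q - 1)) * W ^ 2) := by
    rcases Nat.lt_or_ge q 2 with h | h
    · have : q - 1 = 0 := by omega
      rw [this]; simp
    · rw [abs_mul, abs_mul, abs_mul, abs_mul, abs_pow, abs_pow, Nat.abs_cast, Nat.abs_cast, abs_two]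
      calc 2 * (q : ℝ) * ((q - 1 : ℕ) : ℝ) * |A| ^ (q - 2) * |β| ^ 2
          ≤ 2 * (q : ℝ) * ((q - 1 : ℕ) : ℝ) * (K * X ^ 2) ^ (q - 2) * (K * X * W) ^ 2 := by gcongr
        _ = _ := by
          obtain ⟨j, rfl⟩ : ∃ j, q = j + 2 := ⟨q - 2, by omega⟩
          simp only [Nat.add_sub_cancel, show j + 2 - 1 = j + 1 by omega]
          rw [mul_pow, ← pow_mul]; ring
  unfold c2
  calc _ ≤ _ := abs_add_le _ _
    _ ≤ _ := add_le_add h1 h2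
    _ = _ := by ring

theorem quad_pow_rem {K : ℝ} (hK : 0 ≤ K) (j : ℕ) : ∃ C : ℝ, 0 ≤ C ∧ ∀ A β γ X W e : ℝ,
    0 ≤ X → 0 ≤ W → |A| ≤ K * X ^ 2 → |β| ≤ K * X * W → |γ| ≤ K * W ^ 2 →
    |(A + 2 * e * β + e ^ 2 * γ) ^ (j + 2) - A ^ (j + 2) - 2 * ((j + 2 : ℕ) : ℝ) * A ^ (j + 1) * β * e
      - c2 (j + 2) A β γ * e ^ 2| ≤ C * ((W * |e|) ^ 3 * (X + W * |e|) ^ (2 * j + 1)) := by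
  induction j with
  | zero =>
    refine ⟨4 * K ^ 2 + K ^ 2, by positivity, fun A β γ X W e hX hW hA hβ hγ => ?_⟩
    have e1 : (A + 2 * e * β + e ^ 2 * γ) ^ (0 + 2) - A ^ (0 + 2)
        - 2 * ((0 + 2 : ℕ) : ℝ) * A ^ (0 + 1) * β * e
        - c2 (0 + 2) A β γ * e ^ 2 = 4 * β * γ * e ^ 3 + γ ^ 2 * e ^ 4 := by
      simp [c2]; ring
    rw [e1]
    calc |4 * β * γ * e ^ 3 + γ ^ 2 * e ^ 4| ≤ |4 * β * γ * e ^ 3| + |γ ^ 2 * e ^ 4| := abs_add_le _ _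
      _ = 4 * |β| * |γ| * |e| ^ 3 + |γ| ^ 2 * |e| ^ 4 := by
        simp [abs_mul, abs_pow]
      _ ≤ 4 * (K * X * W) * (K * W ^ 2) * |e| ^ 3 + (K * W ^ 2) ^ 2 * |e| ^ 4 := by gcongr
      _ ≤ (4 * K ^ 2 + K ^ 2) * ((W * |e|) ^ 3 * (X + W * |e|) ^ (2 * 0 + 1)) := by
        have h : 0 ≤ |e| := abs_nonneg e
        have h1 : 0 ≤ K ^ 2 * (W * |e|) ^ 3 * X := by positivity
        have h2 : 0 ≤ K ^ 2 * (W * |e|) ^ 3 * (W * |e|) := by positivity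
        have h3 : (4 * K ^ 2 + K ^ 2) * ((W * |e|) ^ 3 * (X + W * |e|) ^ (2 * 0 + 1)) =
            4 * (K * X * W) * (K * W ^ 2) * |e| ^ 3 + (K * W ^ 2) ^ 2 * |e| ^ 4 +
            K ^ 2 * (W * |e|) ^ 3 * X + 4 * (K ^ 2 * (W * |e|) ^ 3 * (W * |e|)) := by ring
        linarith
  | succ j ih =>
    obtain ⟨C, hC, h⟩ := ih
    obtain ⟨D, hD, hc⟩ := c2_bound hK (j + 2)
    refine ⟨2 * K * C + 2 * K * D + 2 * (j + 2 : ℕ) * K * K ^ (j + 1) * K + K * D, by positivity,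
      fun A β γ X W e hX hW hA hβ hγ => ?_⟩
    have h1 := h A β γ X W e hX hW hA hβ hγ
    have h2 := hc A β γ X W hX hW hA hβ hγ
    set R := (A + 2 * e * β + e ^ 2 * γ) ^ (j + 2) - A ^ (j + 2)
      - 2 * ((j + 2 : ℕ) : ℝ) * A ^ (j + 1) * β * e - c2 (j + 2) A β γ * e ^ 2 with hR
    set c := c2 (j + 2) A β γ with hcdef
    have e1 : (A + 2 * e * β + e ^ 2 * γ) ^ (j + 1 + 2) - A ^ (j + 1 + 2)
        - 2 * ((j + 1 + 2 : ℕ) : ℝ) * A ^ (j + 1 + 1) * β * e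
        - c2 (j + 1 + 2) A β γ * e ^ 2 =
        (A + 2 * e * β + e ^ 2 * γ) * R + 2 * β * c * e ^ 3 +
          2 * ((j + 2 : ℕ) : ℝ) * γ * A ^ (j + 1) * β * e ^ 3 + γ * c * e ^ 4 := by
      rw [hR, hcdef]
      simp only [c2, Nat.add_sub_cancel, show j + 2 - 1 = j + 1 by omega,
        show j + 1 + 2 - 1 = j + 2 by omega, show j + 1 + 2 - 2 = j + 1 by omega]
      push_cast
      ring
    rw [e1]
    have he : 0 ≤ |e| := abs_nonneg e
    set g := W * |e| with hg
    have hg0 : 0 ≤ g := by positivity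
    have b1 : |A + 2 * e * β + e ^ 2 * γ| ≤ 2 * K * (X + g) ^ 2 := by
      calc |A + 2 * e * β + e ^ 2 * γ| ≤ |A| + |2 * e * β| + |e ^ 2 * γ| := abs_add_three _ _ _
        _ = |A| + 2 * |e| * |β| + |e| ^ 2 * |γ| := by simp [abs_mul, abs_pow]
        _ ≤ K * X ^ 2 + 2 * |e| * (K * X * W) + |e| ^ 2 * (K * W ^ 2) := by gcongr
        _ = K * (X + g) ^ 2 := by rw [hg]; ring
        _ ≤ 2 * K * (X + g) ^ 2 := by nlinarith [mul_nonneg hK (sq_nonneg (X + g))]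
    have hXg : X ≤ X + g := by linarith
    have t1 : |(A + 2 * e * β + e ^ 2 * γ) * R| ≤ 2 * K * C * (g ^ 3 * (X + g) ^ (2 * (j + 1) + 1)) := by
      rw [abs_mul]
      calc _ ≤ 2 * K * (X + g) ^ 2 * (C * (g ^ 3 * (X + g) ^ (2 * j + 1))) := by gcongr
        _ = _ := by ring
    have t2 : |2 * β * c * e ^ 3| ≤ 2 * K * D * (g ^ 3 * (X + g) ^ (2 * (j + 1) + 1)) := by
      calc |2 * β * c * e ^ 3| = 2 * |β| * |c| * |e| ^ 3 := by simp [abs_mul, abs_pow]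
        _ ≤ 2 * (K * X * W) * (D * (X ^ (2 * (j + 2 - 1)) * W ^ 2)) * |e| ^ 3 := by gcongr
        _ = 2 * K * D * (g ^ 3 * X ^ (2 * (j + 1) + 1)) := by
          rw [hg, show j + 2 - 1 = j + 1 by omega]; ring
        _ ≤ _ := by gcongr
    have t3 : |2 * ((j + 2 : ℕ) : ℝ) * γ * A ^ (j + 1) * β * e ^ 3| ≤
        2 * (j + 2 : ℕ) * K * K ^ (j + 1) * K * (g ^ 3 * (X + g) ^ (2 * (j + 1) + 1)) := by
      calc |2 * ((j + 2 : ℕ) : ℝ) * γ * A ^ (j + 1) * β * e ^ 3|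
          = 2 * ((j + 2 : ℕ) : ℝ) * |γ| * |A| ^ (j + 1) * |β| * |e| ^ 3 := by
            rw [abs_mul, abs_mul, abs_mul, abs_mul, abs_mul, abs_pow, abs_pow, abs_two, Nat.abs_cast]
        _ ≤ 2 * ((j + 2 : ℕ) : ℝ) * (K * W ^ 2) * (K * X ^ 2) ^ (j + 1) * (K * X * W) * |e| ^ 3 := by
          gcongr
        _ = 2 * (j + 2 : ℕ) * K * K ^ (j + 1) * K * (g ^ 3 * X ^ (2 * (j + 1) + 1)) := by
          rw [hg]; ring
        _ ≤ _ := by gcongr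
    have t4 : |γ * c * e ^ 4| ≤ K * D * (g ^ 3 * (X + g) ^ (2 * (j + 1) + 1)) := by
      calc |γ * c * e ^ 4| = |γ| * |c| * |e| ^ 4 := by rw [abs_mul, abs_mul, abs_pow]
        _ ≤ (K * W ^ 2) * (D * (X ^ (2 * (j + 2 - 1)) * W ^ 2)) * |e| ^ 4 := by gcongr
        _ = K * D * (g ^ 3 * (X ^ (2 * (j + 1)) * g)) := by
          rw [hg, show j + 2 - 1 = j + 1 by omega]; ring
        _ ≤ K * D * (g ^ 3 * ((X + g) ^ (2 * (j + 1)) * (X + g))) := by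
          gcongr; linarith
        _ = _ := by ring
    calc _ ≤ |(A + 2 * e * β + e ^ 2 * γ) * R| + |2 * β * c * e ^ 3| +
          |2 * ((j + 2 : ℕ) : ℝ) * γ * A ^ (j + 1) * β * e ^ 3| + |γ * c * e ^ 4| :=
          (abs_add_le _ _).trans (add_le_add (abs_add_three _ _ _) le_rfl)
      _ ≤ _ := by linarith

structure Noise {Ω : Type*} {m0 : MeasurableSpace Ω} (μ : Measure Ω) (F : Filtration ℕ m0)
    (e : ℕ → Ω → ℝ) (σ a : ℝ) : Prop where
  meas : ∀ k, Measurable[F (k + 1)] (e k)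
  int : ∀ k, Integrable (e k) μ
  mds : ∀ k, μ[e k|F k] =ᵐ[μ] 0
  var : ∀ k, μ[fun ω => e k ω ^ 2|F k] =ᵐ[μ] fun _ => σ ^ 2
  momint : ∀ k, Integrable (fun ω => |e k ω| ^ a) μ
  mom : ∀ᵐ ω ∂μ, ∃ C : ℝ, ∀ k, (μ[fun ω => |e k ω| ^ a|F k]) ω ≤ C

theorem rpow_le_one_add {x s a : ℝ} (hx : 0 ≤ x) (hs : 0 ≤ s) (hsa : s ≤ a) :
    x ^ s ≤ 1 + x ^ a := by
  rcases le_total x 1 with h | h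
  · have := Real.rpow_le_one hx h hs
    have := Real.rpow_nonneg hx a
    linarith
  · have := Real.rpow_le_rpow_of_exponent_le h hsa
    linarith

theorem Noise.rint {Ω : Type*} {m0 : MeasurableSpace Ω} {μ : Measure Ω} [IsProbabilityMeasure μ]
    {F : Filtration ℕ m0} {e : ℕ → Ω → ℝ} {σ a : ℝ} (H : Noise μ F e σ a) {s : ℝ} (hs : 0 ≤ s)
    (hsa : s ≤ a) (k : ℕ) : Integrable (fun ω => |e k ω| ^ s) μ := by
  refine Integrable.mono' ((integrable_const (1 : ℝ)).add (H.momint k)) ?_ ?_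
  · exact ((meas_rpow (meas_abs (H.meas k)) s).mono (F.le _) le_rfl).aestronglyMeasurable
  · refine ae_of_all _ fun ω => ?_
    rw [Real.norm_eq_abs, abs_of_nonneg (Real.rpow_nonneg (abs_nonneg _) _)]
    exact rpow_le_one_add (abs_nonneg _) hs hsa

theorem Noise.rbdd {Ω : Type*} {m0 : MeasurableSpace Ω} {μ : Measure Ω} [IsProbabilityMeasure μ]
    {F : Filtration ℕ m0} {e : ℕ → Ω → ℝ} {σ a : ℝ} (H : Noise μ F e σ a) {s : ℝ} (hs : 0 ≤ s)
    (hsa : s ≤ a) : ∀ᵐ ω ∂μ, ∃ C, ∀ k, |(μ[fun ω => |e k ω| ^ s|F k]) ω| ≤ C := by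
  have h1 : ∀ᵐ ω ∂μ, ∀ k, 0 ≤ (μ[fun ω => |e k ω| ^ s|F k]) ω := by
    rw [ae_all_iff]
    intro k
    exact condExp_nonneg (ae_of_all _ fun ω => Real.rpow_nonneg (abs_nonneg _) _)
  have h2 : ∀ᵐ ω ∂μ, ∀ k, (μ[fun ω => |e k ω| ^ s|F k]) ω ≤ 1 + (μ[fun ω => |e k ω| ^ a|F k]) ω := by
    rw [ae_all_iff]
    intro k
    have h3 : μ[fun ω => |e k ω| ^ s|F k] ≤ᵐ[μ] μ[(fun _ => (1 : ℝ)) + fun ω => |e k ω| ^ a|F k] :=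
      condExp_mono (H.rint hs hsa k) ((integrable_const (1 : ℝ)).add (H.momint k))
        (ae_of_all _ fun ω => rpow_le_one_add (abs_nonneg _) hs hsa)
    have h4 := condExp_add (integrable_const (1 : ℝ)) (H.momint k) (F k)
    filter_upwards [h3, h4] with ω h5 h6
    rw [h6] at h5
    simpa [condExp_const (F.le k)] using h5
  filter_upwards [h1, h2, H.mom] with ω h1 h2 h3
  obtain ⟨C, hC⟩ := h3
  exact ⟨1 + C, fun k => by rw [abs_of_nonneg (h1 k)]; linarith [h2 k, hC k]⟩

theorem rpow_diff_le {κ x y : ℝ} (hκ : 1 < κ) (hx : 0 < x) (hxy : x ≤ y) :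
    (y - x) * y ^ (-κ) ≤ (x ^ (1 - κ) - y ^ (1 - κ)) / (κ - 1) := by
  have hy : 0 < y := hx.trans_le hxy
  have hρ : 0 < x / y := by positivity
  have h1 : 1 + (κ - 1) * (1 - x / y) ≤ (x / y) ^ (1 - κ) := by
    rw [Real.rpow_def_of_pos hρ]
    have h2 := Real.add_one_le_exp (Real.log (x / y) * (1 - κ))
    have h3 := Real.log_le_sub_one_of_pos hρ
    nlinarith
  have h4 : x ^ (1 - κ) = (x / y) ^ (1 - κ) * y ^ (1 - κ) := by
    rw [← Real.mul_rpow hρ.le hy.le]; congr 1; field_simp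
  have h5 : y ^ (1 - κ) = y * y ^ (-κ) := by
    rw [sub_eq_add_neg, Real.rpow_add hy, Real.rpow_one]
  rw [le_div_iff₀ (by linarith), h4]
  have h6 := mul_le_mul_of_nonneg_right h1 (Real.rpow_nonneg hy.le (1 - κ))
  have h7 : (y - x) * y ^ (-κ) = (1 - x / y) * y ^ (1 - κ) := by rw [h5]; field_simp
  rw [h7]
  linarith

theorem summable_N {N : ℕ → ℝ} {κ : ℝ} (hκ : 1 < κ) (hN : Monotone N) (hN0 : ∀ k, 1 ≤ N k) :
    Summable fun k => (N (k + 1) - N k) * N (k + 1) ^ (-κ) := by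
  refine summable_of_sum_range_le (c := N 0 ^ (1 - κ) / (κ - 1)) (fun k => ?_) fun n => ?_
  · exact mul_nonneg (sub_nonneg.2 (hN k.le_succ)) (Real.rpow_nonneg (by linarith [hN0 (k + 1)]) _)
  · calc _ ≤ ∑ k ∈ Finset.range n, (N k ^ (1 - κ) / (κ - 1) - N (k + 1) ^ (1 - κ) / (κ - 1)) := by
          refine Finset.sum_le_sum fun k _ => ?_
          rw [← sub_div]
          exact rpow_diff_le hκ (by linarith [hN0 k]) (hN k.le_succ)
      _ = N 0 ^ (1 - κ) / (κ - 1) - N n ^ (1 - κ) / (κ - 1) := Finset.sum_range_sub' _ _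
      _ ≤ _ := by
        have : 0 ≤ N n ^ (1 - κ) / (κ - 1) :=
          div_nonneg (Real.rpow_nonneg (by linarith [hN0 n]) _) (by linarith)
        linarith

theorem absorb {r c δ : ℝ} (hr : 1 < r) (hc : 0 ≤ c) (hδ : 0 < δ) :
    ∃ K, 0 ≤ K ∧ ∀ A : ℝ, 0 ≤ A → c * A ^ (r - 1) ≤ A ^ r / δ + K := by
  refine ⟨c * (δ * c) ^ (r - 1), by positivity, fun A hA => ?_⟩
  have h0 : 0 ≤ c * (δ * c) ^ (r - 1) := by positivity
  rcases le_total A (δ * c) with h | h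
  · have : c * A ^ (r - 1) ≤ c * (δ * c) ^ (r - 1) := by
      gcongr
    have : 0 ≤ A ^ r / δ := by positivity
    linarith
  · rcases hA.eq_or_lt with h1 | h1
    · subst h1
      rw [Real.zero_rpow (by linarith), Real.zero_rpow (by linarith)]; simpa using h0
    · have e2 : A ^ r = A ^ (r - 1) * A := by rw [← Real.rpow_add_one h1.ne']; simp
      have : c * A ^ (r - 1) ≤ A ^ r / δ := by
        rw [le_div_iff₀ hδ, e2]
        nlinarith [mul_le_mul_of_nonneg_left h (Real.rpow_nonneg hA (r - 1))]
      linarith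

/-- logarithmic clock -/
def NN {Ω : Type*} (T : ℕ → Ω → ℝ) (k : ℕ) (ω : Ω) : ℝ := 1 + Real.log (T k ω / T 0 ω)

structure Scal {Ω : Type*} {m0 : MeasurableSpace Ω} (F : Filtration ℕ m0)
    (e T V A β γ : ℕ → Ω → ℝ) (δ : ℝ) : Prop where
  δpos : 0 < δ
  Tpos : ∀ k ω, 0 < T k ω
  Tmono : ∀ ω, Monotone fun k => T k ω
  T0m : Measurable[F 0] (T 0)
  Tm : ∀ k, Measurable[F k] (T (k + 1))
  Am : ∀ k, Measurable[F k] (A k)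
  βm : ∀ k, Measurable[F k] (β k)
  A0 : ∀ k ω, 0 ≤ A k ω
  cs : ∀ k ω, β k ω ^ 2 ≤ A k ω * γ k ω
  hγ : ∀ k ω, γ k ω = δ * (1 - T k ω / T (k + 1) ω)
  V1 : ∀ k ω, V (k + 1) ω = A k ω + 2 * e k ω * β k ω + e k ω ^ 2 * γ k ω
  V0 : ∀ k ω, V k ω * T k ω = A k ω * T (k + 1) ω

section
variable {Ω : Type*} {m0 : MeasurableSpace Ω} {F : Filtration ℕ m0}
    {e T V A β γ : ℕ → Ω → ℝ} {δ : ℝ}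

theorem Scal.N1 (H : Scal F e T V A β γ δ) (k : ℕ) (ω : Ω) : 1 ≤ NN T k ω := by
  have : 0 ≤ Real.log (T k ω / T 0 ω) :=
    Real.log_nonneg ((one_le_div (H.Tpos 0 ω)).2 (H.Tmono ω (Nat.zero_le k)))
  unfold NN; linarith

theorem Scal.Nmono (H : Scal F e T V A β γ δ) (ω : Ω) : Monotone fun k => NN T k ω := by
  intro i j hij
  have h1 := H.Tpos 0 ω
  have h2 := H.Tpos i ω
  have h3 := H.Tmono ω hij
  simp only [NN]
  gcongr

theorem meas_div {Ω : Type*} {m : MeasurableSpace Ω} {f g : Ω → ℝ} (hf : Measurable f)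
    (hg : Measurable g) : Measurable fun ω => f ω / g ω := hf.div hg

theorem meas_N {Ω : Type*} {m : MeasurableSpace Ω} {f g : Ω → ℝ} (hf : Measurable f)
    (hg : Measurable g) : Measurable fun ω => 1 + Real.log (f ω / g ω) := by fun_prop

theorem Scal.Nm (H : Scal F e T V A β γ δ) (k : ℕ) : Measurable[F k] (NN T (k + 1)) :=
  meas_N (H.Tm k) (H.T0m.mono (F.mono (Nat.zero_le k)) le_rfl)

theorem Scal.Tm' (H : Scal F e T V A β γ δ) (k : ℕ) : Measurable[F k] (T k) := by
  cases k with
  | zero => exact H.T0m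
  | succ k => exact (H.Tm k).mono (F.mono k.le_succ) le_rfl

theorem meas_g {Ω : Type*} {m : MeasurableSpace Ω} {f g : Ω → ℝ} (δ : ℝ) (hf : Measurable f)
    (hg : Measurable g) : Measurable fun ω => δ * (1 - f ω / g ω) := by fun_prop

theorem Scal.γm (H : Scal F e T V A β γ δ) (k : ℕ) : Measurable[F k] (γ k) := by
  have := meas_g δ (H.Tm' k) (H.Tm k)
  rwa [← funext (H.hγ k)] at this

theorem Scal.γ0 (H : Scal F e T V A β γ δ) (k : ℕ) (ω : Ω) : 0 ≤ γ k ω := by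
  rw [H.hγ]
  have := (div_le_one (H.Tpos (k + 1) ω)).2 (H.Tmono ω k.le_succ)
  exact mul_nonneg H.δpos.le (by linarith)

theorem Scal.γδ (H : Scal F e T V A β γ δ) (k : ℕ) (ω : Ω) : γ k ω ≤ δ := by
  rw [H.hγ]
  have := div_pos (H.Tpos k ω) (H.Tpos (k + 1) ω)
  nlinarith [H.δpos]

theorem Scal.Nd (H : Scal F e T V A β γ δ) (k : ℕ) (ω : Ω) :
    NN T (k + 1) ω - NN T k ω = -Real.log (T k ω / T (k + 1) ω) := by
  have h0 := (H.Tpos 0 ω).ne'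
  have h1 := (H.Tpos k ω).ne'
  have h2 := (H.Tpos (k + 1) ω).ne'
  simp only [NN, Real.log_div h1 h0, Real.log_div h2 h0, Real.log_div h1 h2]
  ring

theorem Scal.γN (H : Scal F e T V A β γ δ) (k : ℕ) (ω : Ω) :
    γ k ω ≤ δ * (NN T (k + 1) ω - NN T k ω) := by
  rw [H.hγ, H.Nd]
  have := Real.log_le_sub_one_of_pos (div_pos (H.Tpos k ω) (H.Tpos (k + 1) ω))
  have := H.δpos
  gcongr
  linarith

theorem Scal.AV (H : Scal F e T V A β γ δ) (k : ℕ) (ω : Ω) :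
    A k ω * (1 + γ k ω / δ) ≤ V k ω := by
  have h1 := H.Tpos k ω
  have h2 := H.Tpos (k + 1) ω
  have h3 : V k ω = A k ω * (T (k + 1) ω / T k ω) := by
    have := H.V0 k ω
    field_simp; linarith
  rw [h3]
  have h4 := H.A0 k ω
  gcongr
  rw [H.hγ, mul_div_cancel_left₀ _ H.δpos.ne', le_div_iff₀ h1]
  have : (1 + (1 - T k ω / T (k + 1) ω)) * T k ω = T (k + 1) ω - (T (k + 1) ω - T k ω) ^ 2 / T (k + 1) ω := by
    field_simp; ring
  rw [this]
  have : 0 ≤ (T (k + 1) ω - T k ω) ^ 2 / T (k + 1) ω := by positivity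
  linarith

theorem Scal.AV' (H : Scal F e T V A β γ δ) (k : ℕ) (ω : Ω) : A k ω ≤ V k ω := by
  refine le_trans ?_ (H.AV k ω)
  have := H.A0 k ω
  have := div_nonneg (H.γ0 k ω) H.δpos.le
  nlinarith

theorem Scal.Vm (H : Scal F e T V A β γ δ) (k : ℕ) : Measurable[F k] (V k) := by
  have h : V k = (fun ω => A k ω * T (k + 1) ω / T k ω) := by
    ext ω
    have := H.V0 k ω
    have h1 := H.Tpos k ω
    field_simp; linarith
  rw [h]
  exact meas_div ((H.Am k).mul (H.Tm k)) (H.Tm' k)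

end

theorem ms1 {Ω : Type*} {m : MeasurableSpace Ω} {N A β : Ω → ℝ} (hN : Measurable N)
    (hA : Measurable A) (hβ : Measurable β) (κ r : ℝ) :
    Measurable fun ω => N ω ^ (-κ) * (2 * r * A ω ^ (r - 1) * β ω) := by fun_prop
theorem ms2 {Ω : Type*} {m : MeasurableSpace Ω} {N A γ : Ω → ℝ} (hN : Measurable N)
    (hA : Measurable A) (hγ : Measurable γ) (κ r C : ℝ) :
    Measurable fun ω => N ω ^ (-κ) * (C * A ω ^ (r - 1) * γ ω) := by fun_prop
theorem ms3 {Ω : Type*} {m : MeasurableSpace Ω} {N γ : Ω → ℝ} (hN : Measurable N)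
    (hγ : Measurable γ) (κ r C : ℝ) :
    Measurable fun ω => N ω ^ (-κ) * (C * γ ω ^ r) := by fun_prop
theorem ms4 {Ω : Type*} {m : MeasurableSpace Ω} {N γ E : Ω → ℝ} (hN : Measurable N)
    (hγ : Measurable γ) (hE : Measurable E) (κ K D : ℝ) :
    Measurable fun ω => N ω ^ (-κ) * γ ω * (K + D * |E ω|) := by fun_prop
theorem ms5 {Ω : Type*} {m : MeasurableSpace Ω} {V : Ω → ℝ} {B : ℕ → Ω → ℝ} (n : ℕ) (hV : Measurable V)
    (hB : ∀ k ≤ n, Measurable (B k)) (r : ℝ) :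
    Measurable fun ω => V ω ^ r + ∑ k ∈ range (n + 1), B k ω := by
  refine (hV.pow_const r).add ?_
  exact Finset.measurable_sum _ fun k hk => hB k (by simpa [Nat.lt_succ_iff] using hk)
theorem ms6 {Ω : Type*} {m : MeasurableSpace Ω} {c1 c2 c3 e f g h : Ω → ℝ} (a1 : Measurable c1)
    (a2 : Measurable c2) (a3 : Measurable c3) (a4 : Measurable e) (a5 : Measurable f)
    (a6 : Measurable g) (a7 : Measurable h) (s : ℝ) :
    Measurable fun ω => c1 ω * (e ω - f ω) + c2 ω * (e ω ^ 2 - g ω) + c3 ω * (|e ω| ^ s - h ω) := by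
  fun_prop

theorem robbins {Ω : Type*} {m0 : MeasurableSpace Ω} {μ : Measure Ω} [IsProbabilityMeasure μ]
    {F : Filtration ℕ m0} {e T V A β γ : ℕ → Ω → ℝ} {δ σ a : ℝ} (hn : Noise μ F e σ a)
    (H : Scal F e T V A β γ δ) {p : ℕ} {r κ : ℝ} (hr : 1 < r) (h1 : (p : ℝ) ≤ r) (h2 : r ≤ p + 1)
    (hra : 2 * r ≤ a) (hκ : 1 < κ) :
    ∀ᵐ ω ∂μ, (Summable fun k => γ k ω * (1 + A k ω ^ r) * NN T (k + 1) ω ^ (-κ)) ∧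
      ∃ C, ∀ n, V n ω ^ r ≤ C * NN T n ω ^ κ := by
  obtain ⟨C, hC, hq⟩ := quad_rpow_le hr h1 h2
  have hδ := H.δpos
  obtain ⟨K, hK, hab⟩ := absorb (r := r) (c := C * σ ^ 2) (δ := 2 * δ) hr (by positivity) (by positivity)
  have hr2 : 0 ≤ 2 * r := by linarith
  set E : ℕ → Ω → ℝ := fun k => μ[fun ω => |e k ω| ^ (2 * r)|F k] with hE
  set G : ℕ → Ω → ℝ := fun k => μ[fun ω => e k ω ^ 2|F k] with hG
  set O : ℕ → Ω → ℝ := fun k => μ[e k|F k] with hO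
  have hEm : ∀ k, Measurable[F k] (E k) := fun k => stronglyMeasurable_condExp.measurable
  have hGm : ∀ k, Measurable[F k] (G k) := fun k => stronglyMeasurable_condExp.measurable
  have hOm : ∀ k, Measurable[F k] (O k) := fun k => stronglyMeasurable_condExp.measurable
  have hNA : ∀ k ω, 0 ≤ NN T k ω ^ (-κ) := fun k ω => Real.rpow_nonneg (by linarith [H.N1 k ω]) _
  set c1 : ℕ → Ω → ℝ := fun k ω => NN T (k + 1) ω ^ (-κ) * (2 * r * A k ω ^ (r - 1) * β k ω) with hc1
  set c2 : ℕ → Ω → ℝ := fun k ω => NN T (k + 1) ω ^ (-κ) * (C * A k ω ^ (r - 1) * γ k ω) with hc2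
  set c3 : ℕ → Ω → ℝ := fun k ω => NN T (k + 1) ω ^ (-κ) * (C * γ k ω ^ r) with hc3
  have m1 : ∀ k, Measurable[F k] (c1 k) := fun k => ms1 (H.Nm k) (H.Am k) (H.βm k) κ r
  have m2 : ∀ k, Measurable[F k] (c2 k) := fun k => ms2 (H.Nm k) (H.Am k) (H.γm k) κ r C
  have m3 : ∀ k, Measurable[F k] (c3 k) := fun k => ms3 (H.Nm k) (H.γm k) κ r C
  set Y : ℕ → Ω → ℝ := fun k ω => c1 k ω * (e k ω - O k ω) + c2 k ω * (e k ω ^ 2 - G k ω)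
    + c3 k ω * (|e k ω| ^ (2 * r) - E k ω) with hY
  have ha2 : (2 : ℝ) ≤ a := by linarith
  have hint2 : ∀ k, Integrable (fun ω => e k ω ^ 2) μ := by
    intro k
    have := hn.rint (s := 2) (by norm_num) ha2 k
    simpa using this
  have hYl : ∀ k, LMD μ (F k) (Y k) := by
    intro k
    refine LMD.add (F.le k) (LMD.add (F.le k) (LMD.mul (F.le k) (m1 k) (LMD.base (F.le k) (hn.int k)))
      (LMD.mul (F.le k) (m2 k) (LMD.base (F.le k) (hint2 k)))) (LMD.mul (F.le k) (m3 k)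
      (LMD.base (F.le k) (hn.rint hr2 hra k)))
  set B : ℕ → Ω → ℝ := fun k ω => NN T (k + 1) ω ^ (-κ) * γ k ω * (K + (C * δ ^ (r - 1)) * |E k ω|) with hB
  have hBm : ∀ k, Measurable[F k] (B k) := fun k => ms4 (H.Nm k) (H.γm k) (hEm k) κ K _
  have key : ∀ᵐ ω ∂μ, ∀ n, V n ω ^ r * NN T n ω ^ (-κ) +
      ∑ k ∈ range n, γ k ω * A k ω ^ r * NN T (k + 1) ω ^ (-κ) / (2 * δ) ≤
      V 0 ω ^ r + ∑ k ∈ range n, Y k ω + ∑ k ∈ range n, B k ω := by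
    have hv : ∀ᵐ ω ∂μ, ∀ k, G k ω = σ ^ 2 := ae_all_iff.2 fun k => hn.var k
    have ho : ∀ᵐ ω ∂μ, ∀ k, O k ω = 0 := ae_all_iff.2 fun k => hn.mds k
    filter_upwards [hv, ho] with ω hv ho n
    induction n with
    | zero => simp [NN, (H.Tpos 0 ω).ne']
    | succ n ih =>
      rw [sum_range_succ, sum_range_succ, sum_range_succ]
      suffices V (n + 1) ω ^ r * NN T (n + 1) ω ^ (-κ) +
          γ n ω * A n ω ^ r * NN T (n + 1) ω ^ (-κ) / (2 * δ) ≤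
          V n ω ^ r * NN T n ω ^ (-κ) + Y n ω + B n ω by linarith
      set w := NN T (n + 1) ω ^ (-κ) with hw
      have hw0 : 0 ≤ w := hNA _ _
      have hA := H.A0 n ω
      have hγ := H.γ0 n ω
      have hwN : w ≤ NN T n ω ^ (-κ) :=
        Real.rpow_le_rpow_of_nonpos (by linarith [H.N1 n ω]) (H.Nmono ω n.le_succ) (by linarith)
      have hV : A n ω ^ r * (1 + γ n ω / δ) ≤ V n ω ^ r := by
        have hx : 1 ≤ 1 + γ n ω / δ := by have := div_nonneg hγ hδ.le; linarith
        calc A n ω ^ r * (1 + γ n ω / δ) ≤ A n ω ^ r * (1 + γ n ω / δ) ^ r := by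
              gcongr
              exact Real.self_le_rpow_of_one_le hx hr.le
          _ = (A n ω * (1 + γ n ω / δ)) ^ r := (Real.mul_rpow hA (by linarith)).symm
          _ ≤ _ := Real.rpow_le_rpow (by positivity) (H.AV n ω) (by linarith)
      have hV0 : 0 ≤ V n ω ^ r := le_trans (by positivity) hV
      have s1 : w * (A n ω ^ r * (1 + γ n ω / δ)) ≤ V n ω ^ r * NN T n ω ^ (-κ) := by
        calc _ ≤ w * V n ω ^ r := by gcongr
          _ ≤ NN T n ω ^ (-κ) * V n ω ^ r := by gcongr
          _ = _ := mul_comm _ _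
      have s2 := mul_le_mul_of_nonneg_left (hq _ _ _ (e n ω) hA hγ (H.cs n ω)) hw0
      rw [← H.V1] at s2
      have s3 := mul_le_mul_of_nonneg_left (hab _ hA) (mul_nonneg hw0 hγ)
      have s4 : γ n ω ^ r ≤ γ n ω * δ ^ (r - 1) := by
        rcases hγ.eq_or_lt with h | h
        · rw [← h, Real.zero_rpow (by linarith)]; simp
        · have : γ n ω ^ r = γ n ω * γ n ω ^ (r - 1) := by
            rw [mul_comm, ← Real.rpow_add_one h.ne']; simp
          rw [this]
          have := H.γδ n ω
          gcongr
      have s5 : w * C * (γ n ω ^ r * E n ω) ≤ w * C * (γ n ω * δ ^ (r - 1) * |E n ω|) := by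
        refine mul_le_mul_of_nonneg_left ?_ (mul_nonneg hw0 hC)
        exact (mul_le_mul_of_nonneg_left (le_abs_self (E n ω)) (Real.rpow_nonneg hγ r)).trans
          (mul_le_mul_of_nonneg_right s4 (abs_nonneg _))
      simp only [hY, hB, hc1, hc2, hc3, hv, ho]
      have e1 : γ n ω * A n ω ^ r * w / (2 * δ) = w * γ n ω * (A n ω ^ r / (2 * δ)) := by ring
      have e2 : w * (A n ω ^ r * (1 + γ n ω / δ)) = w * A n ω ^ r + 2 * (w * γ n ω * (A n ω ^ r / (2 * δ))) := by
        field_simp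
      rw [e1]
      rw [e2] at s1
      rw [← hw]
      nlinarith
  have hVnn : ∀ ω n, 0 ≤ V n ω := fun ω n => (H.A0 n ω).trans (H.AV' n ω)
  have hGs : ∀ ω, Summable fun k => γ k ω * NN T (k + 1) ω ^ (-κ) := by
    intro ω
    refine Summable.of_nonneg_of_le (fun k => mul_nonneg (H.γ0 k ω) (hNA _ ω)) (fun k => ?_)
      ((summable_N hκ (H.Nmono ω) (fun k => H.N1 k ω)).mul_left δ)
    rw [← mul_assoc]
    exact mul_le_mul_of_nonneg_right (H.γN k ω) (hNA _ ω)
  have hBs : ∀ᵐ ω ∂μ, Summable fun k => B k ω := by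
    filter_upwards [hn.rbdd hr2 hra] with ω hω
    obtain ⟨D, hD⟩ := hω
    refine Summable.of_nonneg_of_le (fun k => ?_) (fun k => ?_) ((hGs ω).mul_right (K + C * δ ^ (r - 1) * D))
    · have := H.γ0 k ω
      have := hNA (k + 1) ω
      positivity
    · have := H.γ0 k ω
      have := hNA (k + 1) ω
      simp only [hB]
      rw [mul_comm (NN T (k + 1) ω ^ (-κ))]
      gcongr
      exact hD k
  have hB0 : ∀ k ω, 0 ≤ B k ω := by
    intro k ω
    have := H.γ0 k ω
    have := hNA (k + 1) ω
    positivity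
  have hlim := lmc (μ := μ) F hYl (B := fun n ω => V 0 ω ^ r + ∑ k ∈ range (n + 1), B k ω)
    (fun k => by
      have hle := F.mono k.le_succ
      exact ms6 ((m1 k).mono hle le_rfl) ((m2 k).mono hle le_rfl) ((m3 k).mono hle le_rfl)
        (hn.meas k) ((hOm k).mono hle le_rfl) ((hGm k).mono hle le_rfl) ((hEm k).mono hle le_rfl) _)
    (fun n => ms5 n ((H.Vm 0).mono (F.mono (Nat.zero_le n)) le_rfl)
      (fun k hk => (hBm k).mono (F.mono hk) le_rfl) r)
    (by
      filter_upwards [key] with ω h n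
      have h3 := h (n + 1)
      have h4 : 0 ≤ V (n + 1) ω ^ r * NN T (n + 1) ω ^ (-κ) :=
        mul_nonneg (Real.rpow_nonneg (hVnn _ _) _) (hNA _ _)
      have h5 : 0 ≤ ∑ k ∈ range (n + 1), γ k ω * A k ω ^ r * NN T (k + 1) ω ^ (-κ) / (2 * δ) :=
        Finset.sum_nonneg fun k _ => div_nonneg (mul_nonneg (mul_nonneg (H.γ0 k ω)
          (Real.rpow_nonneg (H.A0 k ω) _)) (hNA _ _)) (by linarith)
      linarith)
    (by
      filter_upwards [hBs] with ω h
      exact ⟨V 0 ω ^ r + ∑' k, B k ω, fun n => by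
        have := h.sum_le_tsum (range (n + 1)) (fun k _ => hB0 k ω)
        linarith⟩)
  filter_upwards [key, hBs, hlim] with ω hk hb hl
  obtain ⟨l, hl⟩ := hl
  obtain ⟨D, hD⟩ := hl.bddAbove_range
  have hD' : ∀ n, ∑ k ∈ range n, Y k ω ≤ D := fun n => hD ⟨n, rfl⟩
  have hb' : ∀ n, ∑ k ∈ range n, B k ω ≤ ∑' k, B k ω := fun n => hb.sum_le_tsum (range n) (fun k _ => hB0 k ω)
  have h4 : ∀ n, 0 ≤ V n ω ^ r * NN T n ω ^ (-κ) := fun n =>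
        mul_nonneg (Real.rpow_nonneg (hVnn _ _) _) (hNA _ _)
  have h5 : ∀ k, 0 ≤ γ k ω * A k ω ^ r * NN T (k + 1) ω ^ (-κ) / (2 * δ) :=
        fun k => div_nonneg (mul_nonneg (mul_nonneg (H.γ0 k ω)
          (Real.rpow_nonneg (H.A0 k ω) _)) (hNA _ _)) (by linarith)
  constructor
  · have h6 : Summable fun k => γ k ω * A k ω ^ r * NN T (k + 1) ω ^ (-κ) / (2 * δ) :=
      summable_of_sum_range_le (c := V 0 ω ^ r + D + ∑' k, B k ω) h5 fun n => by
        linarith [hk n, hD' n, hb' n, h4 n]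
    refine ((h6.mul_left (2 * δ)).add (hGs ω)).congr fun k => ?_
    field_simp
    ring
  · refine ⟨V 0 ω ^ r + D + ∑' k, B k ω, fun n => ?_⟩
    have h7 : V n ω ^ r * NN T n ω ^ (-κ) ≤ V 0 ω ^ r + D + ∑' k, B k ω := by
      have := Finset.sum_nonneg (s := range n) fun k _ => h5 k
      linarith [hk n, hD' n, hb' n]
    have hN : 0 < NN T n ω := by linarith [H.N1 n ω]
    rw [Real.rpow_neg hN.le, ← div_eq_mul_inv, div_le_iff₀ (by positivity)] at h7
    exact h7

theorem ms7 {Ω : Type*} {m : MeasurableSpace Ω} {N c : Ω → ℝ} (hN : Measurable N)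
    (hc : Measurable c) : Measurable fun ω => (N ω)⁻¹ * c ω := by fun_prop

theorem chowN {Ω : Type*} {m0 : MeasurableSpace Ω} {μ : Measure Ω} [IsProbabilityMeasure μ]
    (F : Filtration ℕ m0) {η c N : ℕ → Ω → ℝ} {b : ℝ} (hb : 1 < b) (hb2 : b ≤ 2)
    (hηm : ∀ k, Measurable[F (k + 1)] (η k)) (hηi : ∀ k, Integrable (η k) μ)
    (hηb : ∀ k, Integrable (fun ω => |η k ω| ^ b) μ) (hc : ∀ k, Measurable[F k] (c k))
    (hbd : ∀ᵐ ω ∂μ, ∃ C, ∀ k, |(μ[η k|F k]) ω| ≤ C)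
    (hbd2 : ∀ᵐ ω ∂μ, ∃ C, ∀ k, |(μ[fun ω => |η k ω| ^ b|F k]) ω| ≤ C)
    (hN : ∀ ω, Monotone fun k => N k ω) (hN1 : ∀ k ω, 1 ≤ N k ω)
    (hNm : ∀ k, Measurable[F k] (N (k + 1)))
    (hNt : ∀ᵐ ω ∂μ, Tendsto (fun k => N k ω) atTop atTop)
    (hs : ∀ᵐ ω ∂μ, Summable fun k => (|c k ω| / N (k + 1) ω) ^ b) :
    ∀ᵐ ω ∂μ, (fun n => ∑ k ∈ Finset.range n, c k ω * (η k ω - (μ[η k|F k]) ω))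
      =o[atTop] fun n => N n ω := by
  have h := chow F (c := fun k ω => (N (k + 1) ω)⁻¹ * c k ω) hb hb2 hηm hηi hηb
    (fun k => ms7 (hNm k) (hc k)) hbd hbd2 (by
      filter_upwards [hs] with ω h
      refine h.congr fun k => ?_
      rw [abs_mul, abs_inv, abs_of_pos (by linarith [hN1 (k + 1) ω] : 0 < N (k + 1) ω), div_eq_inv_mul])
  filter_upwards [h, hNt] with ω h hNt
  obtain ⟨l, hl⟩ := h
  refine kronecker (hN ω) (fun k => hN1 k ω) hNt (l := l) ?_
  refine hl.congr fun n => ?_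
  exact Finset.sum_congr rfl fun k _ => by rw [mul_assoc]

theorem Noise.chowR {Ω : Type*} {m0 : MeasurableSpace Ω} {μ : Measure Ω} [IsProbabilityMeasure μ]
    {F : Filtration ℕ m0} {e : ℕ → Ω → ℝ} {σ a : ℝ} (H : Noise μ F e σ a) {c N : ℕ → Ω → ℝ}
    {b s : ℝ} (hb : 1 < b) (hb2 : b ≤ 2) (hs0 : 0 ≤ s) (hsb : s * b ≤ a)
    (hc : ∀ k, Measurable[F k] (c k))
    (hN : ∀ ω, Monotone fun k => N k ω) (hN1 : ∀ k ω, 1 ≤ N k ω)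
    (hNm : ∀ k, Measurable[F k] (N (k + 1)))
    (hNt : ∀ᵐ ω ∂μ, Tendsto (fun k => N k ω) atTop atTop)
    (hs : ∀ᵐ ω ∂μ, Summable fun k => (|c k ω| / N (k + 1) ω) ^ b) :
    ∀ᵐ ω ∂μ, (fun n => ∑ k ∈ Finset.range n, c k ω * (|e k ω| ^ s - (μ[fun ω => |e k ω| ^ s|F k]) ω))
      =o[atTop] fun n => N n ω := by
  have hsa : s ≤ a := by nlinarith
  have e1 : ∀ k, (fun ω => |(|e k ω| ^ s)| ^ b) = fun ω => |e k ω| ^ (s * b) := by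
    intro k; ext ω
    rw [abs_of_nonneg (Real.rpow_nonneg (abs_nonneg _) _), Real.rpow_mul (abs_nonneg _)]
  refine chowN F (η := fun k ω => |e k ω| ^ s) hb hb2 (fun k => meas_rpow (meas_abs (H.meas k)) s)
    (H.rint hs0 hsa) (fun k => ?_) hc (H.rbdd hs0 hsa) ?_ hN hN1 hNm hNt hs
  · simp only [e1]; exact H.rint (by positivity) hsb k
  · simp only [e1]; exact H.rbdd (by positivity) hsb

theorem Noise.chow1 {Ω : Type*} {m0 : MeasurableSpace Ω} {μ : Measure Ω} [IsProbabilityMeasure μ]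
    {F : Filtration ℕ m0} {e : ℕ → Ω → ℝ} {σ a : ℝ} (H : Noise μ F e σ a) {c N : ℕ → Ω → ℝ}
    (ha : 2 ≤ a) (hc : ∀ k, Measurable[F k] (c k))
    (hN : ∀ ω, Monotone fun k => N k ω) (hN1 : ∀ k ω, 1 ≤ N k ω)
    (hNm : ∀ k, Measurable[F k] (N (k + 1)))
    (hNt : ∀ᵐ ω ∂μ, Tendsto (fun k => N k ω) atTop atTop)
    (hs : ∀ᵐ ω ∂μ, Summable fun k => (|c k ω| / N (k + 1) ω) ^ (2 : ℝ)) :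
    ∀ᵐ ω ∂μ, (fun n => ∑ k ∈ Finset.range n, c k ω * e k ω)
      =o[atTop] fun n => N n ω := by
  have ho : ∀ᵐ ω ∂μ, ∀ k, (μ[e k|F k]) ω = 0 := ae_all_iff.2 fun k => H.mds k
  have := chowN F (η := e) (b := 2) (by norm_num) le_rfl H.meas H.int
    (H.rint (by norm_num) ha) hc (by
      filter_upwards [ho] with ω h
      exact ⟨0, fun k => by simp [h]⟩) (H.rbdd (by norm_num) ha) hN hN1 hNm hNt hs
  filter_upwards [this, ho] with ω h ho
  simpa [ho] using h

theorem Noise.chow2 {Ω : Type*} {m0 : MeasurableSpace Ω} {μ : Measure Ω} [IsProbabilityMeasure μ]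
    {F : Filtration ℕ m0} {e : ℕ → Ω → ℝ} {σ a : ℝ} (H : Noise μ F e σ a) {c N : ℕ → Ω → ℝ}
    {b : ℝ} (hb : 1 < b) (hb2 : b ≤ 2) (hsb : 2 * b ≤ a)
    (hc : ∀ k, Measurable[F k] (c k))
    (hN : ∀ ω, Monotone fun k => N k ω) (hN1 : ∀ k ω, 1 ≤ N k ω)
    (hNm : ∀ k, Measurable[F k] (N (k + 1)))
    (hNt : ∀ᵐ ω ∂μ, Tendsto (fun k => N k ω) atTop atTop)
    (hs : ∀ᵐ ω ∂μ, Summable fun k => (|c k ω| / N (k + 1) ω) ^ b) :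
    ∀ᵐ ω ∂μ, (fun n => ∑ k ∈ Finset.range n, c k ω * (e k ω ^ 2 - σ ^ 2))
      =o[atTop] fun n => N n ω := by
  have h := H.chowR hb hb2 (s := 2) (by norm_num) hsb hc hN hN1 hNm hNt hs
  have hv : ∀ᵐ ω ∂μ, ∀ k, (μ[fun ω => e k ω ^ 2|F k]) ω = σ ^ 2 := ae_all_iff.2 fun k => H.var k
  have e1 : ∀ k, (fun ω => |e k ω| ^ (2 : ℝ)) = fun ω => e k ω ^ 2 := by
    intro k; ext ω; simp
  filter_upwards [h, hv] with ω h hv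
  refine h.congr_left fun n => ?_
  refine Finset.sum_congr rfl fun k _ => ?_
  rw [e1, hv]; simp

/-- summability criterion, exponent b -/
theorem summ_b {X W N c : ℕ → ℝ} {b κ : ℝ} {p : ℕ} (hb : 1 < b)
    (hκb : κ ≤ b) (hX : ∀ k, 0 ≤ X k) (hW : ∀ k, 0 ≤ W k) (hN1 : ∀ k, 1 ≤ N k)
    (hWt : Tendsto W atTop (𝓝 0))
    (hs : Summable fun k => W k ^ 2 * (1 + (X k ^ 2) ^ (b * p)) * N (k + 1) ^ (-κ))
    {D : ℝ} (hD : 0 ≤ D) (hc : ∀ k, |c k| ≤ D * (W k ^ 2 * (1 + X k ^ (2 * p)))) :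
    Summable fun k => (|c k| / N (k + 1)) ^ b := by
  obtain ⟨B, hB⟩ := hWt.bddAbove_range
  have hB' : ∀ k, W k ≤ B := fun k => hB ⟨k, rfl⟩
  have hB0 : 0 ≤ B := (hW 0).trans (hB' 0)
  refine Summable.of_nonneg_of_le (fun k => Real.rpow_nonneg (div_nonneg (abs_nonneg _) (by linarith [hN1 (k + 1)])) _)
    (fun k => ?_) (hs.mul_left (D ^ b * (B ^ 2) ^ (b - 1) * (2 ^ b)))
  have hN := hN1 (k + 1)
  have hN0 : 0 < N (k + 1) := by linarith
  have hx : 0 ≤ X k ^ 2 := sq_nonneg _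
  have hw := hW k
  have h1 : (1 + X k ^ (2 * p)) ^ b ≤ 2 ^ b * (1 + (X k ^ 2) ^ (b * p)) := by
    have e1 : (X k ^ 2) ^ (b * p) = (X k ^ (2 * p)) ^ b := by
      rw [mul_comm b, Real.rpow_mul hx, Real.rpow_natCast, pow_mul]
    rw [e1]
    set y := X k ^ (2 * p) with hy
    have hy0 : 0 ≤ y := by have := hX k; positivity
    have hyb : 0 ≤ y ^ b := by positivity
    rcases le_total y 1 with h | h
    · calc (1 + y) ^ b ≤ 2 ^ b := by
            apply Real.rpow_le_rpow <;> linarith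
        _ ≤ _ := by nlinarith [Real.rpow_nonneg (by norm_num : (0:ℝ) ≤ 2) b]
    · calc (1 + y) ^ b ≤ (2 * y) ^ b := by
            apply Real.rpow_le_rpow <;> linarith
        _ = 2 ^ b * y ^ b := Real.mul_rpow (by norm_num) hy0
        _ ≤ _ := by nlinarith [Real.rpow_nonneg (by norm_num : (0:ℝ) ≤ 2) b]
  have h2 : (W k ^ 2) ^ b ≤ W k ^ 2 * (B ^ 2) ^ (b - 1) := by
    rcases hw.eq_or_lt with h | h
    · rw [← h]; simp [Real.zero_rpow (by linarith : b ≠ 0)]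
    · have e1 : (W k ^ 2) ^ b = W k ^ 2 * (W k ^ 2) ^ (b - 1) := by
        rw [mul_comm, ← Real.rpow_add_one (by positivity)]; simp
      rw [e1]
      have := hB' k
      gcongr
  have h3 : N (k + 1) ^ (-b) ≤ N (k + 1) ^ (-κ) :=
    Real.rpow_le_rpow_of_exponent_le hN (by linarith)
  have hX' := hX k
  calc (|c k| / N (k + 1)) ^ b = |c k| ^ b * N (k + 1) ^ (-b) := by
        rw [Real.div_rpow (abs_nonneg _) hN0.le, Real.rpow_neg hN0.le, div_eq_mul_inv]
    _ ≤ (D * (W k ^ 2 * (1 + X k ^ (2 * p)))) ^ b * N (k + 1) ^ (-b) := by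
        gcongr
        exact hc k
    _ = D ^ b * ((W k ^ 2) ^ b * (1 + X k ^ (2 * p)) ^ b) * N (k + 1) ^ (-b) := by
        rw [Real.mul_rpow hD (by positivity), Real.mul_rpow (by positivity) (by positivity)]
    _ ≤ D ^ b * ((W k ^ 2 * (B ^ 2) ^ (b - 1)) * (2 ^ b * (1 + (X k ^ 2) ^ (b * p)))) * N (k + 1) ^ (-κ) := by
        gcongr
    _ = _ := by ring

/-- summability criterion, exponent 2 -/
theorem summ_2 {X W N c : ℕ → ℝ} {b κ : ℝ} {p : ℕ} (hp : 1 ≤ p) (hb : 1 < b)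
    (hκp : κ ≤ 1 + 1 / p) (hX : ∀ k, 0 ≤ X k) (hN1 : ∀ k, 1 ≤ N k)
    (hs : Summable fun k => W k ^ 2 * (1 + (X k ^ 2) ^ (b * p)) * N (k + 1) ^ (-κ))
    {B : ℝ} (hXB : ∀ k, X k ^ (2 * p) ≤ B * N (k + 1))
    {D : ℝ} (hc : ∀ k, |c k| ≤ D * (W k * (1 + X k ^ (2 * p - 1)))) :
    Summable fun k => (|c k| / N (k + 1)) ^ (2 : ℝ) := by
  have hB0 : 0 ≤ B := by
    have h1 := hXB 0
    have h2 : 0 ≤ X 0 ^ (2 * p) := by have := hX 0; positivity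
    have h3 := hN1 (0 + 1)
    by_contra h
    push Not at h
    nlinarith
  have hp0 : (0 : ℝ) < p := by exact_mod_cast hp
  have hex : (0 : ℝ) ≤ 1 - 1 / p := by
    have : (1 : ℝ) / p ≤ 1 := by rw [div_le_one hp0]; exact_mod_cast hp
    linarith
  refine Summable.of_nonneg_of_le (fun k => Real.rpow_nonneg (div_nonneg (abs_nonneg _) (by linarith [hN1 (k + 1)])) _)
    (fun k => ?_) (hs.mul_left (2 * D ^ 2 * (1 + B ^ (1 - 1 / (p : ℝ)))))
  have hN := hN1 (k + 1)
  have hN0 : 0 < N (k + 1) := by linarith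
  have hX' := hX k
  set N' := N (k + 1) with hN'
  set x := X k ^ (2 * p) with hx
  have hx0 : 0 ≤ x := by positivity
  set R := (X k ^ 2) ^ (b * p) with hR
  have hR0 : 0 ≤ R := by positivity
  have h1 : x ≤ 1 + R := by
    have e1 : R = x ^ b := by
      rw [hR, mul_comm b, Real.rpow_mul (sq_nonneg _), Real.rpow_natCast, ← pow_mul]
    rw [e1]
    have := rpow_le_one_add (a := b) hx0 (zero_le_one) hb.le
    simpa using this
  have h2 : X k ^ (2 * (p - 1)) ≤ B ^ (1 - 1 / (p : ℝ)) * N' ^ (1 - 1 / (p : ℝ)) := by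
    have e1 : X k ^ (2 * (p - 1)) = x ^ (1 - 1 / (p : ℝ)) := by
      rw [hx, ← Real.rpow_natCast (X k) (2 * p), ← Real.rpow_mul hX', ← Real.rpow_natCast]
      congr 1
      push_cast [Nat.cast_sub hp]
      field_simp
    rw [e1, ← Real.mul_rpow hB0 hN0.le]
    exact Real.rpow_le_rpow hx0 (hXB k) hex
  have hNe : 1 ≤ N' ^ (1 - 1 / (p : ℝ)) := Real.one_le_rpow hN hex
  have h3 : (1 + X k ^ (2 * p - 1)) ^ 2 ≤ 2 * (1 + B ^ (1 - 1 / (p : ℝ))) * (1 + R) * N' ^ (1 - 1 / (p : ℝ)) := by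
    have e1 : (X k ^ (2 * p - 1)) ^ 2 = x * X k ^ (2 * (p - 1)) := by
      rw [hx, ← pow_mul, ← pow_add]; congr 1; omega
    have hy : (1 + X k ^ (2 * p - 1)) ^ 2 ≤ 2 * (1 + (X k ^ (2 * p - 1)) ^ 2) := by
      nlinarith [sq_nonneg (X k ^ (2 * p - 1) - 1)]
    have h4 : x * X k ^ (2 * (p - 1)) ≤ (1 + R) * (B ^ (1 - 1 / (p : ℝ)) * N' ^ (1 - 1 / (p : ℝ))) := by
      gcongr
    have h5 : (1 : ℝ) ≤ (1 + R) * N' ^ (1 - 1 / (p : ℝ)) := by nlinarith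
    rw [e1] at hy
    nlinarith
  have h6 : N' ^ (1 - 1 / (p : ℝ)) * (N' ^ 2)⁻¹ ≤ N' ^ (-κ) := by
    rw [← Real.rpow_two, ← Real.rpow_neg hN0.le, ← Real.rpow_add hN0]
    exact Real.rpow_le_rpow_of_exponent_le hN (by linarith)
  have hW2 : 0 ≤ W k ^ 2 := sq_nonneg _
  have hBp : 0 ≤ B ^ (1 - 1 / (p : ℝ)) := by positivity
  rw [Real.rpow_two]
  calc (|c k| / N') ^ 2 = |c k| ^ 2 * (N' ^ 2)⁻¹ := by rw [div_pow, div_eq_mul_inv]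
    _ ≤ (D * (W k * (1 + X k ^ (2 * p - 1)))) ^ 2 * (N' ^ 2)⁻¹ := by
        gcongr
        exact hc k
    _ = D ^ 2 * W k ^ 2 * (1 + X k ^ (2 * p - 1)) ^ 2 * (N' ^ 2)⁻¹ := by ring
    _ ≤ D ^ 2 * W k ^ 2 * (2 * (1 + B ^ (1 - 1 / (p : ℝ))) * (1 + R) * N' ^ (1 - 1 / (p : ℝ))) * (N' ^ 2)⁻¹ := by
        gcongr
    _ = 2 * D ^ 2 * (1 + B ^ (1 - 1 / (p : ℝ))) * (W k ^ 2 * (1 + R)) * (N' ^ (1 - 1 / (p : ℝ)) * (N' ^ 2)⁻¹) := by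
        ring
    _ ≤ 2 * D ^ 2 * (1 + B ^ (1 - 1 / (p : ℝ))) * (W k ^ 2 * (1 + R)) * N' ^ (-κ) := by
        gcongr
    _ = _ := by ring

theorem pow_le_one_add' {x : ℝ} (hx : 0 ≤ x) {i j : ℕ} (h : i ≤ j) : x ^ i ≤ 1 + x ^ j := by
  rcases le_total x 1 with h1 | h1
  · have := pow_le_one₀ (n := i) hx h1
    have := pow_nonneg hx j
    linarith
  · have := pow_le_pow_right₀ h1 h
    linarith

/-- standing data for the noise lemma -/
structure Dat {Ω : Type*} {m0 : MeasurableSpace Ω} (μ : Measure Ω) (F : Filtration ℕ m0)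
    (N X W : ℕ → Ω → ℝ) (p : ℕ) (b κ : ℝ) : Prop where
  hp : 1 ≤ p
  hb : 1 < b
  hb2 : b ≤ 2
  hκb : κ ≤ b
  hκp : κ ≤ 1 + 1 / p
  Nmono : ∀ ω, Monotone fun k => N k ω
  N1 : ∀ k ω, 1 ≤ N k ω
  Nm : ∀ k, Measurable[F k] (N (k + 1))
  Nt : ∀ᵐ ω ∂μ, Tendsto (fun k => N k ω) atTop atTop
  X0 : ∀ k ω, 0 ≤ X k ω
  W0 : ∀ k ω, 0 ≤ W k ω
  Xm : ∀ k, Measurable[F k] (X k)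
  Wm : ∀ k, Measurable[F k] (W k)
  Wt : ∀ᵐ ω ∂μ, Tendsto (fun k => W k ω) atTop (𝓝 0)
  sm : ∀ᵐ ω ∂μ, Summable fun k => W k ω ^ 2 * (1 + (X k ω ^ 2) ^ (b * p)) * N (k + 1) ω ^ (-κ)
  XB : ∀ᵐ ω ∂μ, ∃ B, ∀ k, X k ω ^ (2 * p) ≤ B * N (k + 1) ω

theorem ms8 {Ω : Type*} {m : MeasurableSpace Ω} {A β : Ω → ℝ} (hA : Measurable A)
    (hβ : Measurable β) (q : ℕ) : Measurable fun ω => 2 * (q : ℝ) * A ω ^ (q - 1) * β ω := by fun_prop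
theorem ms9 {Ω : Type*} {m : MeasurableSpace Ω} {A β γ : Ω → ℝ} (hA : Measurable A)
    (hβ : Measurable β) (hγ : Measurable γ) (q : ℕ) : Measurable fun ω => c2 q (A ω) (β ω) (γ ω) := by
  unfold c2; fun_prop
theorem ms10 {Ω : Type*} {m : MeasurableSpace Ω} {X W : Ω → ℝ} (hX : Measurable X)
    (hW : Measurable W) (i j : ℕ) : Measurable fun ω => W ω ^ i * X ω ^ j := by
  fun_prop

theorem compens {N u c E g : ℕ → ℝ} (hu : ∀ k, 0 ≤ u k) (hN : Monotone N)
    (hN1 : ∀ k, 1 ≤ N k) (hNt : Tendsto N atTop atTop) {C D : ℝ} (hE : ∀ k, |E k| ≤ C)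
    (hc : c =o[atTop] u) (hD : ∀ n, ∑ k ∈ range n, u k ≤ D * N n)
    (h : (fun n => ∑ k ∈ range n, c k * (g k - E k)) =o[atTop] N) :
    (fun n => ∑ k ∈ range n, c k * g k) =o[atTop] N := by
  have h1 : (fun k => c k * E k) =o[atTop] u := by
    have hEO : E =O[atTop] fun _ => (1 : ℝ) :=
      Asymptotics.IsBigO.of_bound C (Eventually.of_forall fun k => by simpa using hE k)
    have := hc.mul_isBigO hEO
    simpa using this
  have h2 := toeplitz hu hN hN1 hNt h1 hD
  refine (h.add h2).congr_left fun n => ?_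
  rw [← Finset.sum_add_distrib]
  exact Finset.sum_congr rfl fun k _ => by ring

theorem lemmaI3 {Ω : Type*} {m0 : MeasurableSpace Ω} {μ : Measure Ω} [IsProbabilityMeasure μ]
    {F : Filtration ℕ m0} {e N X W A β γ : ℕ → Ω → ℝ} {σ a b κ : ℝ} {p q : ℕ}
    (H : Noise μ F e σ a) (D : Dat μ F N X W p b κ) (hpa : 2 * p * b ≤ a)
    (hq1 : 1 ≤ q) (hqp : q ≤ p)
    (hA : ∀ k, Measurable[F k] (A k)) (hβ : ∀ k, Measurable[F k] (β k))
    (hγ : ∀ k, Measurable[F k] (γ k))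
    (hK : ∀ᵐ ω ∂μ, ∃ K, 0 ≤ K ∧ ∀ k, |A k ω| ≤ K * X k ω ^ 2 ∧ |β k ω| ≤ K * X k ω * W k ω ∧
      |γ k ω| ≤ K * W k ω ^ 2) :
    ∀ᵐ ω ∂μ, (∃ C, ∀ n, ∑ k ∈ range n, W k ω ^ 2 * (1 + X k ω ^ (2 * (q - 1))) ≤ C * N n ω) →
      (fun n => ∑ k ∈ range n, ((A k ω + 2 * e k ω * β k ω + e k ω ^ 2 * γ k ω) ^ q - A k ω ^ q
        - 2 * (q : ℝ) * A k ω ^ (q - 1) * β k ω * e k ω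
        - c2 q (A k ω) (β k ω) (γ k ω) * e k ω ^ 2)) =o[atTop] fun n => N n ω := by
  have hb := D.hb
  have hp1 : (1 : ℝ) ≤ p := by exact_mod_cast D.hp
  have hq1' : (1 : ℝ) ≤ q := by exact_mod_cast hq1
  have hqp' : (q : ℝ) ≤ p := by exact_mod_cast hqp
  have ha2b : 2 * b ≤ a := by nlinarith
  have ha2 : 2 ≤ a := by linarith
  rcases Nat.lt_or_ge q 2 with h | h
  · obtain rfl : q = 1 := by omega
    refine ae_of_all _ fun ω _ => ?_
    refine (Asymptotics.isLittleO_zero _ _).congr_left fun n => ?_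
    symm
    refine Finset.sum_eq_zero fun k _ => ?_
    simp [c2]; ring
  · obtain ⟨j, rfl⟩ : ∃ j, q = j + 2 := ⟨q - 2, by omega⟩
    have hjp : (j : ℝ) + 2 ≤ p := by exact_mod_cast hqp
    have P1 := H.chowR (c := fun k ω => W k ω ^ 3 * X k ω ^ (2 * j + 1)) hb D.hb2 (s := (3 : ℕ)) (by positivity)
      (by push_cast; nlinarith [(Nat.cast_nonneg j : (0 : ℝ) ≤ j)]) (fun k => ms10 (D.Xm k) (D.Wm k) _ _) (N := N) D.Nmono D.N1 D.Nm D.Nt (by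
        filter_upwards [D.sm, D.Wt] with ω hs hWt
        obtain ⟨B, hB⟩ := hWt.bddAbove_range
        have hB' : ∀ k, W k ω ≤ B := fun k => hB ⟨k, rfl⟩
        have hB0 : 0 ≤ B := (D.W0 0 ω).trans (hB' 0)
        refine summ_b (N := fun k => N k ω) (p := p) (κ := κ) (X := fun k => X k ω) (W := fun k => W k ω) hb D.hκb
          (fun k => D.X0 k ω) (fun k => D.W0 k ω)
          (fun k => D.N1 k ω) hWt hs (D := B) hB0 fun k => ?_
        have hX := D.X0 k ω
        have hW := D.W0 k ω
        have hBk := hB' k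
        rw [abs_of_nonneg (by positivity)]
        calc W k ω ^ 3 * X k ω ^ (2 * j + 1) = W k ω * (W k ω ^ 2 * X k ω ^ (2 * j + 1)) := by ring
          _ ≤ _ := by
            gcongr
            exact pow_le_one_add' hX (by omega))
    have P2 := H.chowR (c := fun k ω => W k ω ^ (2 * (j + 2)) * X k ω ^ 0) hb D.hb2 (s := (2 * (j + 2) : ℕ)) (by positivity)
      (by push_cast; nlinarith [(Nat.cast_nonneg j : (0 : ℝ) ≤ j)]) (fun k => ms10 (D.Xm k) (D.Wm k) _ _) (N := N) D.Nmono D.N1 D.Nm D.Nt (by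
        filter_upwards [D.sm, D.Wt] with ω hs hWt
        obtain ⟨B, hB⟩ := hWt.bddAbove_range
        have hB' : ∀ k, W k ω ≤ B := fun k => hB ⟨k, rfl⟩
        have hB0 : 0 ≤ B := (D.W0 0 ω).trans (hB' 0)
        refine summ_b (N := fun k => N k ω) (p := p) (κ := κ) (X := fun k => X k ω) (W := fun k => W k ω) hb D.hκb
          (fun k => D.X0 k ω) (fun k => D.W0 k ω)
          (fun k => D.N1 k ω) hWt hs (D := B ^ (2 * (j + 1))) (by positivity) fun k => ?_
        have hX := D.X0 k ω
        have hW := D.W0 k ω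
        have hBk := hB' k
        rw [abs_of_nonneg (by positivity)]
        calc W k ω ^ (2 * (j + 2)) * X k ω ^ 0 = W k ω ^ (2 * (j + 1)) * (W k ω ^ 2 * X k ω ^ 0) := by ring
          _ ≤ _ := by
            gcongr
            exact pow_le_one_add' hX (by omega))
    have E1 := H.rbdd (s := (3 : ℕ)) (by positivity) (by push_cast; nlinarith)
    have E2 := H.rbdd (s := (2 * (j + 2) : ℕ)) (by positivity) (by push_cast; nlinarith)
    filter_upwards [P1, P2, E1, E2, hK, D.Nt, D.Wt] with ω P1 P2 E1 E2 hK hNt hWt hu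
    obtain ⟨C1, E1⟩ := E1
    obtain ⟨C2, E2⟩ := E2
    obtain ⟨K, hK0, hK⟩ := hK
    obtain ⟨Cu, hu⟩ := hu
    obtain ⟨C, hC0, hC⟩ := quad_pow_rem hK0 j
    have hu0 : ∀ k, 0 ≤ W k ω ^ 2 * (1 + X k ω ^ (2 * (j + 2 - 1))) := fun k => by
      have := D.X0 k ω
      positivity
    have o1 : (fun k => W k ω ^ 3 * X k ω ^ (2 * j + 1)) =o[atTop]
        fun k => W k ω ^ 2 * (1 + X k ω ^ (2 * (j + 2 - 1))) := by
      have h1 : (fun k => W k ω) =o[atTop] fun _ => (1 : ℝ) := (Asymptotics.isLittleO_one_iff ℝ).2 hWt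
      have h2 : (fun k => W k ω ^ 2 * X k ω ^ (2 * j + 1)) =O[atTop]
          fun k => W k ω ^ 2 * (1 + X k ω ^ (2 * (j + 2 - 1))) := by
        refine Asymptotics.IsBigO.of_bound 1 (Eventually.of_forall fun k => ?_)
        have hX := D.X0 k ω
        rw [Real.norm_eq_abs, Real.norm_eq_abs, abs_of_nonneg (by positivity), abs_of_nonneg (by positivity), one_mul]
        gcongr
        exact pow_le_one_add' hX (by omega)
      have := h1.mul_isBigO h2
      refine this.congr (fun k => by ring) (fun k => by ring)
    have o2 : (fun k => W k ω ^ (2 * (j + 2)) * X k ω ^ 0) =o[atTop]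
        fun k => W k ω ^ 2 * (1 + X k ω ^ (2 * (j + 2 - 1))) := by
      have h1 : (fun k => W k ω ^ (2 * (j + 1))) =o[atTop] fun _ => (1 : ℝ) := by
        rw [Asymptotics.isLittleO_one_iff ℝ]
        have := hWt.pow (2 * (j + 1))
        rwa [zero_pow (by omega)] at this
      have h2 : (fun k => W k ω ^ 2 * X k ω ^ 0) =O[atTop]
          fun k => W k ω ^ 2 * (1 + X k ω ^ (2 * (j + 2 - 1))) := by
        refine Asymptotics.IsBigO.of_bound 1 (Eventually.of_forall fun k => ?_)
        have hX := D.X0 k ω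
        rw [Real.norm_eq_abs, Real.norm_eq_abs, abs_of_nonneg (by positivity), abs_of_nonneg (by positivity), one_mul]
        gcongr
        exact pow_le_one_add' hX (by omega)
      have := h1.mul_isBigO h2
      refine this.congr (fun k => by ring) (fun k => by ring)
    have Q1 := compens hu0 (D.Nmono ω) (fun k => D.N1 k ω) hNt E1 o1 hu P1
    have Q2 := compens hu0 (D.Nmono ω) (fun k => D.N1 k ω) hNt E2 o2 hu P2
    have Q := (Q1.add Q2).const_mul_left (C * 2 ^ (2 * j + 1))
    refine Asymptotics.IsBigO.trans_isLittleO (Asymptotics.IsBigO.of_bound 1 (Eventually.of_forall fun n => ?_)) Q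
    rw [one_mul, ← Finset.sum_add_distrib, Finset.mul_sum]
    refine (norm_sum_le _ _).trans (le_trans ?_ (Real.le_norm_self _))
    refine Finset.sum_le_sum fun k _ => ?_
    obtain ⟨h1, h2, h3⟩ := hK k
    have hX := D.X0 k ω
    have hW := D.W0 k ω
    rw [Real.norm_eq_abs]
    refine (hC _ _ _ _ _ (e k ω) hX hW h1 h2 h3).trans ?_
    have hg : 0 ≤ W k ω * |e k ω| := by positivity
    have h4 : (X k ω + W k ω * |e k ω|) ^ (2 * j + 1) ≤ 2 ^ (2 * j + 1) * (X k ω ^ (2 * j + 1) + (W k ω * |e k ω|) ^ (2 * j + 1)) := by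
      refine (add_pow_le hX hg _).trans ?_
      gcongr
      · norm_num
      · omega
    rw [Real.rpow_natCast, Real.rpow_natCast]
    calc C * ((W k ω * |e k ω|) ^ 3 * (X k ω + W k ω * |e k ω|) ^ (2 * j + 1))
        ≤ C * ((W k ω * |e k ω|) ^ 3 * (2 ^ (2 * j + 1) * (X k ω ^ (2 * j + 1) + (W k ω * |e k ω|) ^ (2 * j + 1)))) := by
          gcongr
      _ = _ := by ring

theorem lemmaI {Ω : Type*} {m0 : MeasurableSpace Ω} {μ : Measure Ω} [IsProbabilityMeasure μ]
    {F : Filtration ℕ m0} {e N X W A β γ : ℕ → Ω → ℝ} {σ a b κ : ℝ} {p q : ℕ}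
    (H : Noise μ F e σ a) (D : Dat μ F N X W p b κ) (hpa : 2 * p * b ≤ a)
    (hq1 : 1 ≤ q) (hqp : q ≤ p)
    (hA : ∀ k, Measurable[F k] (A k)) (hβ : ∀ k, Measurable[F k] (β k))
    (hγ : ∀ k, Measurable[F k] (γ k))
    (hK : ∀ᵐ ω ∂μ, ∃ K, 0 ≤ K ∧ ∀ k, |A k ω| ≤ K * X k ω ^ 2 ∧ |β k ω| ≤ K * X k ω * W k ω ∧
      |γ k ω| ≤ K * W k ω ^ 2) :
    ∀ᵐ ω ∂μ, (∃ C, ∀ n, ∑ k ∈ range n, W k ω ^ 2 * (1 + X k ω ^ (2 * (q - 1))) ≤ C * N n ω) →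
      (fun n => ∑ k ∈ range n, ((A k ω + 2 * e k ω * β k ω + e k ω ^ 2 * γ k ω) ^ q - A k ω ^ q
        - σ ^ 2 * c2 q (A k ω) (β k ω) (γ k ω))) =o[atTop] fun n => N n ω := by
  have hb := D.hb
  have hp1 : (1 : ℝ) ≤ p := by exact_mod_cast D.hp
  have hq1' : (1 : ℝ) ≤ q := by exact_mod_cast hq1
  have hqp' : (q : ℝ) ≤ p := by exact_mod_cast hqp
  have ha2b : 2 * b ≤ a := by nlinarith
  have ha2 : 2 ≤ a := by linarith
  -- linear part
  have L1 := H.chow1 (c := fun k ω => 2 * (q : ℝ) * A k ω ^ (q - 1) * β k ω) ha2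
    (fun k => ms8 (hA k) (hβ k) q) (N := N) D.Nmono D.N1 D.Nm D.Nt (by
      filter_upwards [hK, D.sm, D.XB] with ω hK hs hXB
      obtain ⟨K, hK0, hK⟩ := hK
      obtain ⟨B, hB⟩ := hXB
      refine summ_2 (N := fun k => N k ω) (X := fun k => X k ω) (p := p) (b := b) (κ := κ) (W := fun k => W k ω) D.hp hb D.hκp (fun k => D.X0 k ω)
        (fun k => D.N1 k ω) hs hB (D := 2 * q * K ^ (q - 1) * K) fun k => ?_
      obtain ⟨h1, h2, h3⟩ := hK k
      have hX := D.X0 k ω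
      have hW := D.W0 k ω
      calc |2 * (q : ℝ) * A k ω ^ (q - 1) * β k ω| = 2 * q * |A k ω| ^ (q - 1) * |β k ω| := by
            rw [abs_mul, abs_mul, abs_mul, abs_pow, abs_two, Nat.abs_cast]
        _ ≤ 2 * q * (K * X k ω ^ 2) ^ (q - 1) * (K * X k ω * W k ω) := by gcongr
        _ = 2 * q * K ^ (q - 1) * K * (W k ω * X k ω ^ (2 * (q - 1) + 1)) := by
            rw [mul_pow, ← pow_mul]; ring
        _ ≤ _ := by
            gcongr
            exact pow_le_one_add' hX (by omega))
  -- quadratic part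
  have L2 := H.chow2 (c := fun k ω => c2 q (A k ω) (β k ω) (γ k ω)) hb D.hb2 ha2b
    (fun k => ms9 (hA k) (hβ k) (hγ k) q) (N := N) D.Nmono D.N1 D.Nm D.Nt (by
      filter_upwards [hK, D.sm, D.Wt] with ω hK hs hWt
      obtain ⟨K, hK0, hK⟩ := hK
      obtain ⟨C, hC0, hC⟩ := c2_bound hK0 q
      refine summ_b (N := fun k => N k ω) (p := p) (κ := κ) (X := fun k => X k ω) (W := fun k => W k ω) hb D.hκb
        (fun k => D.X0 k ω) (fun k => D.W0 k ω)
        (fun k => D.N1 k ω) hWt hs (D := C) hC0 fun k => ?_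
      obtain ⟨h1, h2, h3⟩ := hK k
      have hX := D.X0 k ω
      have hW := D.W0 k ω
      refine (hC _ _ _ _ _ hX hW h1 h2 h3).trans ?_
      rw [mul_comm (X k ω ^ (2 * (q - 1)))]
      gcongr
      exact pow_le_one_add' hX (by omega))
  have L3 := lemmaI3 H D hpa hq1 hqp hA hβ hγ hK
  filter_upwards [L1, L2, L3] with ω L1 L2 L3 hu
  refine ((L3 hu).add (L1.add L2)).congr_left fun n => ?_
  rw [← Finset.sum_add_distrib, ← Finset.sum_add_distrib]
  exact Finset.sum_congr rfl fun k _ => by ring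

open Asymptotics

/-- Cesaro-type limit with normalisation N -/
def CL (N f : ℕ → ℝ) (x : ℝ) : Prop :=
  Tendsto (fun n => (∑ k ∈ range n, f k) / N n) atTop (𝓝 x)

theorem CL.add {N f g : ℕ → ℝ} {x y : ℝ} (hf : CL N f x) (hg : CL N g y) :
    CL N (fun k => f k + g k) (x + y) := by
  refine (Tendsto.add hf hg).congr fun n => ?_
  rw [sum_add_distrib, add_div]

theorem CL.mul {N f : ℕ → ℝ} {x : ℝ} (c : ℝ) (hf : CL N f x) :
    CL N (fun k => c * f k) (c * x) := by
  refine (Tendsto.const_mul c hf).congr fun n => ?_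
  rw [← mul_sum, mul_div_assoc]

theorem CL.of_sub {N f g : ℕ → ℝ} {x : ℝ} (hg : CL N g x) 
    (h : (fun n => ∑ k ∈ range n, (f k - g k)) =o[atTop] N) : CL N f x := by
  have h1 := Tendsto.add h.tendsto_div_nhds_zero hg
  rw [zero_add] at h1
  refine h1.congr fun n => ?_
  rw [← add_div, ← sum_add_distrib]
  simp

theorem CL.bdd {N f : ℕ → ℝ} {x : ℝ} (hf : CL N f x) (hN : ∀ k, 1 ≤ N k) :
    ∃ C, ∀ n, ∑ k ∈ range n, f k ≤ C * N n := by
  obtain ⟨C, hC⟩ := Tendsto.bddAbove_range hf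
  refine ⟨C, fun n => ?_⟩
  have := hC ⟨n, rfl⟩
  rwa [div_le_iff₀ (by linarith [hN n])] at this

theorem CL.shift {N v f : ℕ → ℝ} {x : ℝ} (hN : Tendsto N atTop atTop)
    (h : CL N (fun k => v (k + 1) - f k) x) (hv : v =o[atTop] N) : CL N (fun k => v k - f k) x := by
  have h2 : Tendsto (fun n => v 0 / N n) atTop (𝓝 0) := hN.const_div_atTop _
  have h3 := (Tendsto.add h h2).sub hv.tendsto_div_nhds_zero
  rw [add_zero, sub_zero] at h3
  refine h3.congr fun n => ?_
  rw [← add_div, ← sub_div]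
  congr 1
  have := sum_range_sub v n
  rw [sum_sub_distrib] at this
  rw [sum_sub_distrib, sum_sub_distrib]
  linarith

/-- expansion of a power increment -/
theorem pow_expand {A A' D D0 γ : ℕ → ℝ} (hA : (fun k => A' k - A k) =o[atTop] A)
    (hγ : Tendsto γ atTop (𝓝 0)) (hD : (fun k => D k - D0 k) =o[atTop] fun k => A k * γ k)
    (hD0 : D0 =O[atTop] fun k => A k * γ k) (q : ℕ) :
    (fun k => (A' k + D k) ^ (q + 1) - A' k ^ (q + 1) - ((q + 1 : ℕ) : ℝ) * (A k ^ q * D0 k))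
      =o[atTop] fun k => A k ^ (q + 1) * γ k := by
  have hγ1 : γ =o[atTop] fun _ => (1 : ℝ) := (isLittleO_one_iff ℝ).2 hγ
  have hAA : (fun k => A k) =O[atTop] A := isBigO_refl _ _
  have hAγ : (fun k => A k * γ k) =o[atTop] A := by
    simpa using hAA.mul_isLittleO hγ1
  have hDo : D =o[atTop] A := by
    have := (hD.trans hAγ).add (hD0.trans_isLittleO hAγ)
    simpa using this
  have h1 : (fun k => A' k + D k - A k) =o[atTop] A := by
    refine (hA.add hDo).congr_left fun k => by ring
  have h2 : (fun k => A' k + D k) =O[atTop] A := by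
    refine (h1.isBigO.add hAA).congr_left fun k => by ring
  have hA'O : A' =O[atTop] A := by
    refine (hA.isBigO.add hAA).congr_left fun k => by ring
  have hpow : ∀ q : ℕ, (fun k => A' k ^ q - A k ^ q) =o[atTop] fun k => A k ^ q := by
    intro q
    have h : Asymptotics.IsEquivalent atTop A' A := hA
    exact h.pow q
  induction q with
  | zero => simpa using hD
  | succ q ih =>
    have t1 := h2.mul_isLittleO ih
    have t2 := (hA'O.pow (q + 1)).mul_isLittleO hD
    have t3 := (hpow (q + 1)).mul_isBigO hD0
    have t4 := (((isBigO_refl (fun k => A k ^ q) atTop).mul hD0).mul_isLittleO h1).const_mul_left ((q + 1 : ℕ) : ℝ)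
    have t1' := t1.congr_right (g₂ := fun k => A k ^ (q + 1 + 1) * γ k) fun k => by ring
    have t2' := t2.congr_right (g₂ := fun k => A k ^ (q + 1 + 1) * γ k) fun k => by ring
    have t3' := t3.congr_right (g₂ := fun k => A k ^ (q + 1 + 1) * γ k) fun k => by ring
    have t4' := t4.congr_right (g₂ := fun k => A k ^ (q + 1 + 1) * γ k) fun k => by ring
    refine ((t1'.add t2').add (t3'.add t4')).congr_left fun k => ?_
    push_cast
    ring

/-- Pathwise data -/
structure PW (N V A β γ V' A' β' γ' : ℕ → ℝ) (δ σ : ℝ) (p : ℕ) : Prop where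
  δpos : 0 < δ
  Nmono : Monotone N
  N1 : ∀ k, 1 ≤ N k
  Nt : Tendsto N atTop atTop
  A0 : ∀ k, 0 ≤ A k
  γ0 : ∀ k, 0 ≤ γ k
  cs : ∀ k, β k ^ 2 ≤ A k * γ k
  γt : Tendsto γ atTop (𝓝 0)
  hV : ∀ k, V k * (1 - γ k / δ) = A k
  hAV : ∀ k, A k * (1 + γ k / δ) ≤ V k
  Lγ : CL N γ δ
  Vo : ∀ q, 1 ≤ q → q ≤ p → (fun n => V n ^ q) =o[atTop] N
  hV' : ∀ k, V' k = A' k + β' k ^ 2 / (1 - γ' k)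
  eA : (fun k => A' k - A k) =o[atTop] A
  eγ : (fun k => γ' k - γ k) =o[atTop] γ
  eβ : (fun k => β' k ^ 2 - β k ^ 2) =o[atTop] fun k => A k * γ k
  I : ∀ q, 1 ≤ q → q ≤ p → (∃ C, ∀ n, ∑ k ∈ range n, γ k * (1 + A k ^ (q - 1)) ≤ C * N n) →
    (fun n => ∑ k ∈ range n, (V (k + 1) ^ q - A k ^ q - σ ^ 2 * c2 q (A k) (β k) (γ k))) =o[atTop] N
  I' : ∀ q, 1 ≤ q → q ≤ p → (∃ C, ∀ n, ∑ k ∈ range n, γ k * (1 + A k ^ (q - 1)) ≤ C * N n) →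
    (fun n => ∑ k ∈ range n, (V' (k + 1) ^ q - A' k ^ q - σ ^ 2 * c2 q (A' k) (β' k) (γ' k))) =o[atTop] N

section
variable {N V A β γ V' A' β' γ' : ℕ → ℝ} {δ σ : ℝ} {p : ℕ}

theorem PW.bO (H : PW N V A β γ V' A' β' γ' δ σ p) : (fun k => β k ^ 2) =O[atTop] fun k => A k * γ k :=
  IsBigO.of_bound 1 (Eventually.of_forall fun k => by
    rw [Real.norm_eq_abs, Real.norm_eq_abs, abs_of_nonneg (sq_nonneg _),
      abs_of_nonneg (mul_nonneg (H.A0 k) (H.γ0 k)), one_mul]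
    exact H.cs k)

theorem PW.bO' (H : PW N V A β γ V' A' β' γ' δ σ p) : (fun k => β' k ^ 2) =O[atTop] fun k => A k * γ k :=
  (H.eβ.isBigO.add H.bO).congr_left fun k => by ring

theorem PW.γt' (H : PW N V A β γ V' A' β' γ' δ σ p) : Tendsto γ' atTop (𝓝 0) := by
  have h1 := (isLittleO_one_iff ℝ).2 H.γt
  have h2 := (H.eγ.trans h1).add h1
  have := (isLittleO_one_iff ℝ).1 h2
  simpa using this

theorem inv_sub_O {g : ℕ → ℝ} (hg : Tendsto g atTop (𝓝 0)) : 
    (fun k => (1 - g k)⁻¹) =O[atTop] fun _ => (1 : ℝ) := by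
  have : Tendsto (fun k => (1 - g k)⁻¹) atTop (𝓝 ((1 - 0)⁻¹)) :=
    (tendsto_const_nhds.sub hg).inv₀ (by norm_num)
  exact this.isBigO_one ℝ

theorem PW.D' (H : PW N V A β γ V' A' β' γ' δ σ p) :
    (fun k => β' k ^ 2 / (1 - γ' k) - β k ^ 2) =o[atTop] fun k => A k * γ k := by
  have h1 := (isLittleO_one_iff ℝ).2 H.γt'
  have h2 := H.bO'.mul_isLittleO (h1.mul_isBigO (inv_sub_O H.γt'))
  simp only [mul_one] at h2
  refine (h2.add H.eβ).congr' ?_ (by rfl)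
  have h3 : ∀ᶠ k in atTop, γ' k < 1 := H.γt'.eventually_lt_const (by norm_num)
  filter_upwards [h3] with k hk
  have : 1 - γ' k ≠ 0 := by linarith
  field_simp
  ring

theorem PW.D (H : PW N V A β γ V' A' β' γ' δ σ p) :
    (fun k => (V k - A k) - A k * γ k / δ) =o[atTop] fun k => A k * γ k := by
  have hd := H.δpos.ne'
  have hg : Tendsto (fun k => γ k / δ) atTop (𝓝 0) := by simpa using H.γt.div_const δ
  have h1 := (isLittleO_one_iff ℝ).2 hg
  have h2 := ((isBigO_refl (fun k => A k * γ k) atTop).const_mul_left δ⁻¹).mul_isLittleO (h1.mul_isBigO (inv_sub_O hg))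
  simp only [mul_one] at h2
  refine h2.congr' ?_ (by rfl)
  have h3 : ∀ᶠ k in atTop, γ k / δ < 1 := hg.eventually_lt_const (by norm_num)
  filter_upwards [h3] with k hk
  have h4 : 1 - γ k / δ ≠ 0 := by linarith
  have h5 : V k = A k * (1 - γ k / δ)⁻¹ := by
    rw [← H.hV k, mul_assoc, mul_inv_cancel₀ h4, mul_one]
  rw [h5]
  generalize hx : γ k / δ = x at *
  have h6 : γ k = x * δ := by rw [← hx]; field_simp
  rw [h6]
  field_simp
  ring

theorem PW.Vo' (H : PW N V A β γ V' A' β' γ' δ σ p) {q : ℕ} (h1 : 1 ≤ q) (h2 : q ≤ p) :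
    (fun n => V' n ^ q) =o[atTop] N := by
  have hγ1 : γ =O[atTop] fun _ => (1 : ℝ) := ((isLittleO_one_iff ℝ).2 H.γt).isBigO
  have hAA : (fun k => A k) =O[atTop] A := isBigO_refl _ _
  have hAγ : (fun k => A k * γ k) =O[atTop] A := by
    simpa using hAA.mul hγ1
  have h3 : V' =O[atTop] A := by
    refine ((H.eA.isBigO.add hAA).add ((H.D'.isBigO.add H.bO).trans hAγ)).congr_left fun k => ?_
    rw [H.hV']; ring
  have h4 : A =O[atTop] V := IsBigO.of_bound 1 (Eventually.of_forall fun k => by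
    have h5 := H.hAV k
    have h6 := H.A0 k
    have h7 := div_nonneg (H.γ0 k) H.δpos.le
    have h8 : A k ≤ V k := by nlinarith
    rw [Real.norm_eq_abs, Real.norm_eq_abs, abs_of_nonneg h6, abs_of_nonneg (h6.trans h8)]
    linarith)
  exact ((h3.trans h4).pow q).trans_isLittleO (H.Vo q h1 h2)

theorem PW.c2o (H : PW N V A β γ V' A' β' γ' δ σ p) (q : ℕ) :
    (fun k => c2 (q + 1) (A' k) (β' k) (γ' k) - c2 (q + 1) (A k) (β k) (γ k)) =o[atTop]
      fun k => γ k * A k ^ q := by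
  have hA : IsEquivalent atTop A' A := H.eA
  have hγ : IsEquivalent atTop γ' γ := H.eγ
  have h1 : (fun k => A' k ^ q * γ' k - A k ^ q * γ k) =o[atTop] fun k => γ k * A k ^ q := by
    have : (fun k => A' k ^ q * γ' k - A k ^ q * γ k) =o[atTop] fun k => A k ^ q * γ k :=
      (hA.pow q).mul hγ
    exact this.congr_right fun k => mul_comm _ _
  cases q with
  | zero => 
    refine h1.congr_left fun k => ?_
    simp [c2]
  | succ q =>
    have h2 : (fun k => A' k ^ q - A k ^ q) =o[atTop] fun k => A k ^ q := hA.pow q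
    have h3 := (h2.mul_isBigO H.bO').add ((isBigO_refl (fun k => A k ^ q) atTop).mul_isLittleO H.eβ)
    have h4 := h3.congr_right (g₂ := fun k => γ k * A k ^ (q + 1)) fun k => by ring
    refine ((h1.const_mul_left ((q + 1 + 1 : ℕ) : ℝ)).add
      (h4.const_mul_left (2 * ((q + 1 + 1 : ℕ) : ℝ) * ((q + 1 : ℕ) : ℝ)))).congr_left fun k => ?_
    simp only [c2, Nat.add_sub_cancel, show q + 1 + 1 - 2 = q by omega]
    ring

/-- one induction step -/
theorem PW.step (H : PW N V A β γ V' A' β' γ' δ σ p) {q : ℕ} (hq : q + 1 ≤ p) {ξ x : ℝ}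
    (h1 : CL N (fun k => γ k * A k ^ q) ξ) (h2 : CL N (fun k => c2 (q + 1) (A k) (β k) (γ k)) x) :
    CL N (fun k => γ k * A k ^ (q + 1)) (δ * (σ ^ 2 * x) / (q + 1 : ℕ)) ∧
    CL N (fun k => A k ^ q * β k ^ 2) (σ ^ 2 * x / (q + 1 : ℕ)) ∧
    CL N (fun k => V' k ^ (q + 1) - A' k ^ (q + 1)) (σ ^ 2 * x) := by
  have hδ := H.δpos
  have hq0 : ((q + 1 : ℕ) : ℝ) ≠ 0 := by positivity
  have hb : ∃ C, ∀ n, ∑ k ∈ range n, γ k * (1 + A k ^ (q + 1 - 1)) ≤ C * N n := by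
    have := (H.Lγ.add h1).bdd H.N1
    simpa [mul_add] using this
  have hc := h2.mul (σ ^ 2)
  have a1 : CL N (fun k => V (k + 1) ^ (q + 1) - A k ^ (q + 1)) (σ ^ 2 * x) :=
    hc.of_sub (H.I (q + 1) (by omega) hq hb)
  have a2 : CL N (fun k => V k ^ (q + 1) - A k ^ (q + 1)) (σ ^ 2 * x) :=
    CL.shift (v := fun k => V k ^ (q + 1)) H.Nt a1 (H.Vo _ (by omega) hq)
  have a3 : ∃ C, ∀ n, ∑ k ∈ range n, A k ^ (q + 1) * γ k ≤ C * N n := by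
    obtain ⟨C, hC⟩ := a2.bdd H.N1
    refine ⟨δ * C, fun n => ?_⟩
    have : ∑ k ∈ range n, A k ^ (q + 1) * γ k ≤ δ * ∑ k ∈ range n, (V k ^ (q + 1) - A k ^ (q + 1)) := by
      rw [mul_sum]
      refine sum_le_sum fun k _ => ?_
      have hA := H.A0 k
      have hγ := H.γ0 k
      have hg : 0 ≤ γ k / δ := by positivity
      have h3 : A k ^ (q + 1) * (1 + γ k / δ) ≤ V k ^ (q + 1) := by
        calc A k ^ (q + 1) * (1 + γ k / δ) ≤ A k ^ (q + 1) * (1 + γ k / δ) ^ (q + 1) := by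
              gcongr
              exact le_self_pow₀ (by linarith) (by omega)
          _ = (A k * (1 + γ k / δ)) ^ (q + 1) := (mul_pow _ _ _).symm
          _ ≤ _ := by
              gcongr
              exact H.hAV k
      calc A k ^ (q + 1) * γ k = δ * (A k ^ (q + 1) * (1 + γ k / δ) - A k ^ (q + 1)) := by
            field_simp; ring
        _ ≤ _ := by gcongr
    refine this.trans ?_
    rw [mul_assoc]
    exact mul_le_mul_of_nonneg_left (hC n) hδ.le
  obtain ⟨C, hC⟩ := a3
  have tz : ∀ f : ℕ → ℝ, f =o[atTop] (fun k => A k ^ (q + 1) * γ k) →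
      (fun n => ∑ k ∈ range n, f k) =o[atTop] N := fun f hf =>
    toeplitz (fun k => mul_nonneg (pow_nonneg (H.A0 k) _) (H.γ0 k)) H.Nmono H.N1 H.Nt hf hC
  have b1 := pow_expand (A := A) (A' := A) (D := fun k => V k - A k) (D0 := fun k => A k * γ k / δ)
    (by simpa using isLittleO_zero A atTop) H.γt H.D
    (by simpa [div_eq_inv_mul] using (isBigO_refl (fun k => A k * γ k) atTop).const_mul_left δ⁻¹) q
  have b1' := (tz _ b1).neg_left
  have c1 : CL N (fun k => ((q + 1 : ℕ) : ℝ) * (A k ^ q * (A k * γ k / δ))) (σ ^ 2 * x) := by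
    refine a2.of_sub (b1'.congr_left fun n => ?_)
    rw [← sum_neg_distrib]
    refine sum_congr rfl fun k _ => ?_
    ring
  have b2 := pow_expand (A := A) (A' := A') (D := fun k => β' k ^ 2 / (1 - γ' k)) (D0 := fun k => β k ^ 2)
    H.eA H.γt H.D' H.bO q
  have b2' := (tz _ b2).neg_left
  obtain ⟨C1, hC1⟩ := h1.bdd H.N1
  have d1 : CL N (fun k => c2 (q + 1) (A' k) (β' k) (γ' k)) x :=
    h2.of_sub (toeplitz (fun k => mul_nonneg (H.γ0 k) (pow_nonneg (H.A0 k) _)) H.Nmono H.N1 H.Nt (H.c2o q) hC1)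
  have d2 : CL N (fun k => V' (k + 1) ^ (q + 1) - A' k ^ (q + 1)) (σ ^ 2 * x) :=
    (d1.mul (σ ^ 2)).of_sub (H.I' (q + 1) (by omega) hq hb)
  have d3 : CL N (fun k => V' k ^ (q + 1) - A' k ^ (q + 1)) (σ ^ 2 * x) :=
    CL.shift (v := fun k => V' k ^ (q + 1)) H.Nt d2 (H.Vo' (by omega) hq)
  have c2 : CL N (fun k => ((q + 1 : ℕ) : ℝ) * (A k ^ q * β k ^ 2)) (σ ^ 2 * x) := by
    refine d3.of_sub (b2'.congr_left fun n => ?_)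
    rw [← sum_neg_distrib]
    refine sum_congr rfl fun k _ => ?_
    rw [H.hV']
    ring
  refine ⟨?_, ?_, d3⟩
  · have := c1.mul (δ / (q + 1 : ℕ))
    convert this using 1
    · ext k; field_simp; ring
    · field_simp
  · have := c2.mul ((q + 1 : ℕ) : ℝ)⁻¹
    convert this using 1
    · ext k; field_simp
    · field_simp

/-- the constants -/
def hh (δ σ : ℝ) (q : ℕ) : ℝ := δ * σ ^ (2 * (q + 1)) * ∏ j ∈ Finset.Icc 1 q, (δ + 2 * (j : ℝ))

theorem PW.main (H : PW N V A β γ V' A' β' γ' δ σ p) (q : ℕ) (hq : q + 1 ≤ p) :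
    CL N (fun k => γ k * A k ^ (q + 1)) (δ * hh δ σ q) ∧
    CL N (fun k => A k ^ q * β k ^ 2) (hh δ σ q) ∧
    CL N (fun k => V' k ^ (q + 1) - A' k ^ (q + 1)) ((q + 1 : ℕ) * hh δ σ q) := by
  induction q with
  | zero =>
    have h1 : CL N (fun k => γ k * A k ^ 0) δ := by simpa using H.Lγ
    have h2 : CL N (fun k => c2 (0 + 1) (A k) (β k) (γ k)) δ := by simpa [c2] using H.Lγ
    have := H.step hq h1 h2
    have e : hh δ σ 0 = σ ^ 2 * δ := by simp [hh]; ring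
    rw [e]
    simpa [mul_assoc] using this
  | succ q ih =>
    obtain ⟨i1, i2, -⟩ := ih (by omega)
    have h2 : CL N (fun k => c2 (q + 1 + 1) (A k) (β k) (γ k))
        (((q + 1 + 1 : ℕ) : ℝ) * (δ * hh δ σ q) + 2 * ((q + 1 + 1 : ℕ) : ℝ) * ((q + 1 : ℕ) : ℝ) * hh δ σ q) := by
      refine Eq.mp ?_ ((i1.mul ((q + 1 + 1 : ℕ) : ℝ)).add (i2.mul (2 * ((q + 1 + 1 : ℕ) : ℝ) * ((q + 1 : ℕ) : ℝ))))
      congr 1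
      ext k
      simp only [c2, Nat.add_sub_cancel, show q + 1 + 1 - 2 = q by omega]
      ring
    have := H.step hq i1 h2
    have hq0 : ((q + 1 + 1 : ℕ) : ℝ) ≠ 0 := by positivity
    have e : σ ^ 2 * (((q + 1 + 1 : ℕ) : ℝ) * (δ * hh δ σ q) + 2 * ((q + 1 + 1 : ℕ) : ℝ) * ((q + 1 : ℕ) : ℝ) * hh δ σ q)
      = ((q + 1 + 1 : ℕ) : ℝ) * hh δ σ (q + 1) := by
      simp only [hh]
      rw [Finset.prod_Icc_succ_top (by omega)]
      push_cast
      ring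
    rw [e] at this
    obtain ⟨t1, t2, t3⟩ := this
    refine ⟨?_, ?_, t3⟩
    · convert t1 using 1
      field_simp
    · convert t2 using 1
      field_simp

end

/-- bilinear form of a matrix -/
def bf {d : ℕ} (Q : Matrix (Fin d) (Fin d) ℝ) (x y : Fin d → ℝ) : ℝ := x ⬝ᵥ (Q *ᵥ y)

theorem bf_add_left {d : ℕ} (Q : Matrix (Fin d) (Fin d) ℝ) (x y z : Fin d → ℝ) :
    bf Q (x + y) z = bf Q x z + bf Q y z := by simp [bf, add_dotProduct]
theorem bf_add_right {d : ℕ} (Q : Matrix (Fin d) (Fin d) ℝ) (x y z : Fin d → ℝ) :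
    bf Q z (x + y) = bf Q z x + bf Q z y := by simp [bf, mulVec_add, dotProduct_add]
theorem bf_smul_left {d : ℕ} (Q : Matrix (Fin d) (Fin d) ℝ) (c : ℝ) (x z : Fin d → ℝ) :
    bf Q (c • x) z = c * bf Q x z := by simp [bf]
theorem bf_smul_right {d : ℕ} (Q : Matrix (Fin d) (Fin d) ℝ) (c : ℝ) (x z : Fin d → ℝ) :
    bf Q z (c • x) = c * bf Q z x := by simp [bf, mulVec_smul]
theorem bf_symm {d : ℕ} {Q : Matrix (Fin d) (Fin d) ℝ} (hQ : Q.PosDef) (x y : Fin d → ℝ) :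
    bf Q x y = bf Q y x := by
  have h : Qᵀ = Q := by have := hQ.isHermitian; simpa [IsHermitian, conjTranspose_eq_transpose_of_trivial] using this
  unfold bf
  rw [dotProduct_mulVec, dotProduct_comm, ← mulVec_transpose, h]
theorem bf_nonneg {d : ℕ} {Q : Matrix (Fin d) (Fin d) ℝ} (hQ : Q.PosDef) (x : Fin d → ℝ) :
    0 ≤ bf Q x x := by
  have := hQ.posSemidef.dotProduct_mulVec_nonneg x
  simpa [bf] using this
theorem bf_pos {d : ℕ} {Q : Matrix (Fin d) (Fin d) ℝ} (hQ : Q.PosDef) {x : Fin d → ℝ} (hx : x ≠ 0) :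
    0 < bf Q x x := by
  have := hQ.dotProduct_mulVec_pos hx
  simpa [bf] using this
theorem bf_expand {d : ℕ} {Q : Matrix (Fin d) (Fin d) ℝ} (hQ : Q.PosDef) (x y : Fin d → ℝ) (e : ℝ) :
    bf Q (x + e • y) (x + e • y) = bf Q x x + 2 * e * bf Q y x + e ^ 2 * bf Q y y := by
  simp only [bf_add_left, bf_add_right, bf_smul_left, bf_smul_right]
  rw [bf_symm hQ x y]; ring
theorem bf_cs {d : ℕ} {Q : Matrix (Fin d) (Fin d) ℝ} (hQ : Q.PosDef) (x y : Fin d → ℝ) :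
    bf Q x y ^ 2 ≤ bf Q x x * bf Q y y := by
  have h := discrim_le_zero (a := bf Q x x) (b := 2 * bf Q x y) (c := bf Q y y) fun t => by
    have := bf_nonneg hQ (y + t • x)
    rw [bf_expand hQ] at this
    linarith
  unfold discrim at h
  nlinarith

theorem coord_le {d : ℕ} {L : Matrix (Fin d) (Fin d) ℝ} (hL : L.PosDef) (x : Fin d → ℝ) (i : Fin d) :
    |x i| ≤ √(L i i) * √(bf L⁻¹ x x) := by
  have hu : IsUnit L.det := (Matrix.isUnit_iff_isUnit_det _).1 hL.isUnit
  have e0 : L *ᵥ (L⁻¹ *ᵥ x) = x := by rw [mulVec_mulVec, Matrix.mul_nonsing_inv _ hu, one_mulVec]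
  have h := bf_cs hL (Pi.single i 1) (L⁻¹ *ᵥ x)
  have e1 : bf L (Pi.single i 1) (L⁻¹ *ᵥ x) = x i := by
    unfold bf; rw [e0]; simp
  have e2 : bf L (L⁻¹ *ᵥ x) (L⁻¹ *ᵥ x) = bf L⁻¹ x x := by
    unfold bf; rw [e0, dotProduct_comm]
  have e3 : bf L (Pi.single i 1) (Pi.single i 1) = L i i := by
    unfold bf; simp
  rw [e1, e2, e3] at h
  rw [← Real.sqrt_mul hL.diag_pos.le]
  exact Real.abs_le_sqrt h

/-- comparison constant -/
def cc {d : ℕ} (L D : Matrix (Fin d) (Fin d) ℝ) : ℝ := ∑ i, ∑ j, |D i j| * (√(L i i) * √(L j j))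

theorem cc_nonneg {d : ℕ} (L D : Matrix (Fin d) (Fin d) ℝ) : 0 ≤ cc L D :=
  sum_nonneg fun i _ => sum_nonneg fun j _ => by positivity

theorem cc_bound {d : ℕ} {L : Matrix (Fin d) (Fin d) ℝ} (hL : L.PosDef) (D : Matrix (Fin d) (Fin d) ℝ)
    (x y : Fin d → ℝ) : |bf D x y| ≤ cc L D * (√(bf L⁻¹ x x) * √(bf L⁻¹ y y)) := by
  have e : bf D x y = ∑ i, ∑ j, x i * (D i j * y j) := by
    simp only [bf, dotProduct, mulVec, mul_sum]
  rw [e]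
  calc |∑ i, ∑ j, x i * (D i j * y j)| ≤ ∑ i, ∑ j, |x i * (D i j * y j)| :=
        (abs_sum_le_sum_abs _ _).trans (sum_le_sum fun i _ => abs_sum_le_sum_abs _ _)
    _ ≤ ∑ i, ∑ j, |D i j| * (√(L i i) * √(L j j)) * (√(bf L⁻¹ x x) * √(bf L⁻¹ y y)) := by
        refine sum_le_sum fun i _ => sum_le_sum fun j _ => ?_
        rw [abs_mul, abs_mul]
        have h1 := coord_le hL x i
        have h2 := coord_le hL y j
        calc |x i| * (|D i j| * |y j|) ≤ (√(L i i) * √(bf L⁻¹ x x)) * (|D i j| * (√(L j j) * √(bf L⁻¹ y y))) := by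
              gcongr
          _ = _ := by ring
    _ = _ := by
        simp only [cc, sum_mul]

theorem cc_tendsto {d : ℕ} (L : Matrix (Fin d) (Fin d) ℝ) {D : ℕ → Matrix (Fin d) (Fin d) ℝ}
    (h : Tendsto D atTop (𝓝 0)) : Tendsto (fun k => cc L (D k)) atTop (𝓝 0) := by
  have hc : Continuous fun D : Matrix (Fin d) (Fin d) ℝ => cc L D := by
    unfold cc
    refine continuous_finsetSum _ fun i _ => continuous_finsetSum _ fun j _ => ?_
    exact (continuous_id.matrix_elem i j).abs.mul continuous_const
  have := (hc.tendsto 0).comp h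
  simpa [cc, Function.comp_def] using this

theorem inv_tendsto {d : ℕ} {L : Matrix (Fin d) (Fin d) ℝ} (hL : L.PosDef)
    {P : ℕ → Matrix (Fin d) (Fin d) ℝ} (h : Tendsto P atTop (𝓝 L)) :
    Tendsto (fun k => (P k)⁻¹) atTop (𝓝 L⁻¹) := by
  have h1 : Tendsto (fun k => (P k).det) atTop (𝓝 L.det) :=
    ((continuous_id.matrix_det).tendsto L).comp h
  have h2 : Tendsto (fun k => (P k).adjugate) atTop (𝓝 L.adjugate) :=
    ((continuous_id.matrix_adjugate).tendsto L).comp h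
  simp only [Matrix.inv_def, Ring.inverse_eq_inv']
  exact (h1.inv₀ hL.det_pos.ne').smul h2

theorem inv_smul_pd {d : ℕ} {P : Matrix (Fin d) (Fin d) ℝ} (hP : P.PosDef) {t : ℝ} (ht : 0 < t) :
    (t⁻¹ • P)⁻¹ = t • P⁻¹ := by
  have hu : IsUnit P.det := (Matrix.isUnit_iff_isUnit_det _).1 hP.isUnit
  apply Matrix.inv_eq_right_inv
  rw [smul_mul_smul_comm, Matrix.mul_nonsing_inv _ hu, inv_mul_cancel₀ ht.ne', one_smul]

theorem pd_add {d : ℕ} {P : Matrix (Fin d) (Fin d) ℝ} (hP : P.PosDef) (u : Fin d → ℝ) :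
    (P + vecMulVec u u).PosDef := by
  refine hP.add_posSemidef ?_
  have := posSemidef_vecMulVec_self_star u
  simpa using this

theorem sm_lt {d : ℕ} {P : Matrix (Fin d) (Fin d) ℝ} (hP : P.PosDef) (u : Fin d → ℝ) :
    bf (P + vecMulVec u u)⁻¹ u u < 1 := by
  have hR := pd_add hP u
  set R := P + vecMulVec u u with hRd
  have hu : IsUnit R.det := (Matrix.isUnit_iff_isUnit_det _).1 hR.isUnit
  set w := R⁻¹ *ᵥ u with hw
  have e0 : R *ᵥ w = u := by rw [hw, mulVec_mulVec, Matrix.mul_nonsing_inv _ hu, one_mulVec]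
  by_cases hu0 : u = 0
  · rw [hu0]; simp [bf]
  have hw0 : w ≠ 0 := by
    intro h
    rw [h, mulVec_zero] at e0
    exact hu0 e0.symm
  have h1 := bf_pos hP hw0
  have e1 : bf R w w = bf P w w + (u ⬝ᵥ w) ^ 2 := by
    simp only [bf, hRd, add_mulVec, dotProduct_add, vecMulVec_mulVec]
    congr 1
    simp [dotProduct_comm w u]; ring
  have e2 : bf R w w = u ⬝ᵥ w := by unfold bf; rw [e0, dotProduct_comm]
  have e3 : bf R⁻¹ u u = u ⬝ᵥ w := rfl
  rw [e3]
  have : 0 < (u ⬝ᵥ w) * (1 - u ⬝ᵥ w) := by nlinarith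
  have h0 : 0 < u ⬝ᵥ w := by nlinarith [sq_nonneg (u ⬝ᵥ w)]
  by_contra hc
  push Not at hc
  nlinarith

theorem sherman {d : ℕ} {P : Matrix (Fin d) (Fin d) ℝ} (hP : P.PosDef) (u m : Fin d → ℝ) :
    bf P⁻¹ m m = bf (P + vecMulVec u u)⁻¹ m m +
      bf (P + vecMulVec u u)⁻¹ u m ^ 2 / (1 - bf (P + vecMulVec u u)⁻¹ u u) := by
  have hlt := sm_lt hP u
  have hR := pd_add hP u
  set R := P + vecMulVec u u with hRd
  have hRu : IsUnit R.det := (Matrix.isUnit_iff_isUnit_det _).1 hR.isUnit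
  have hPu : IsUnit P.det := (Matrix.isUnit_iff_isUnit_det _).1 hP.isUnit
  set g := bf R⁻¹ u u with hg
  set c := bf R⁻¹ u m / (1 - g) with hc
  have hne : 1 - g ≠ 0 := by linarith
  have e0 : ∀ v, R *ᵥ (R⁻¹ *ᵥ v) = v := fun v => by
    rw [mulVec_mulVec, Matrix.mul_nonsing_inv _ hRu, one_mulVec]
  have eP : ∀ v, P *ᵥ v = R *ᵥ v - (u ⬝ᵥ v) • u := fun v => by
    rw [hRd, add_mulVec, vecMulVec_mulVec]; simp
  have e1 : P *ᵥ (R⁻¹ *ᵥ m + c • (R⁻¹ *ᵥ u)) = m := by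
    rw [eP, mulVec_add, mulVec_smul, e0, e0, dotProduct_add, dotProduct_smul]
    have : u ⬝ᵥ R⁻¹ *ᵥ m + c • (u ⬝ᵥ R⁻¹ *ᵥ u) = c := by
      change bf R⁻¹ u m + c * g = c
      rw [hc]; field_simp; ring
    rw [this]; simp
  have e2 : P⁻¹ *ᵥ m = R⁻¹ *ᵥ m + c • (R⁻¹ *ᵥ u) := by
    conv_lhs => rw [← e1]
    rw [mulVec_mulVec, Matrix.nonsing_inv_mul _ hPu, one_mulVec]
  have e3 : bf P⁻¹ m m = bf R⁻¹ m m + c * bf R⁻¹ m u := by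
    unfold bf; rw [e2, dotProduct_add, dotProduct_smul]; rfl
  rw [e3, bf_symm hR.inv m u, hc]
  ring

theorem logdet {d : ℕ} {L : Matrix (Fin d) (Fin d) ℝ} (hL : L.PosDef)
    {P : ℕ → Matrix (Fin d) (Fin d) ℝ} (hP : ∀ k, (P k).PosDef) {T : ℕ → ℝ} (hT : ∀ k, 0 < T k)
    (hTt : Tendsto T atTop atTop) (h : Tendsto (fun k => (T k)⁻¹ • P k) atTop (𝓝 L)) :
    Tendsto (fun k => Real.log (P k).det / (1 + Real.log (T k))) atTop (𝓝 d) := by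
  have h1 : Tendsto (fun k => ((T k)⁻¹ • P k).det) atTop (𝓝 L.det) :=
    ((continuous_id.matrix_det).tendsto L).comp h
  have h2 := h1.log hL.det_pos.ne'
  have h3 : Tendsto (fun k => 1 + Real.log (T k)) atTop atTop :=
    tendsto_atTop_add_const_left _ _ (Real.tendsto_log_atTop.comp hTt)
  have h4 : Tendsto (fun k => (Real.log (((T k)⁻¹ • P k).det) - d) / (1 + Real.log (T k))) atTop (𝓝 0) :=
    (h2.sub_const (d : ℝ)).div_atTop h3
  have h5 : ∀ᶠ k in atTop, 0 < 1 + Real.log (T k) := h3.eventually_gt_atTop 0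
  have h6 := h4.const_add (d : ℝ)
  rw [add_zero] at h6
  refine h6.congr' ?_
  filter_upwards [h5] with k hk
  have e1 : ((T k)⁻¹ • P k).det = (T k)⁻¹ ^ d * (P k).det := by simp [det_smul]
  rw [e1, Real.log_mul (pow_pos (inv_pos.2 (hT k)) _).ne' (hP k).det_pos.ne', Real.log_pow, Real.log_inv]
  field_simp
  ring

theorem minv {Ω : Type*} {m : MeasurableSpace Ω} {d : ℕ} {P : Ω → Matrix (Fin d) (Fin d) ℝ}
    (hP : ∀ i j, Measurable fun ω => P ω i j) (i j : Fin d) : Measurable fun ω => (P ω)⁻¹ i j := by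
  have h0 : Measurable fun ω => (fun i j => P ω i j : Fin d → Fin d → ℝ) :=
    measurable_pi_lambda _ fun i => measurable_pi_lambda _ fun j => hP i j
  have hof : Continuous fun M : Fin d → Fin d → ℝ => (Matrix.of M : Matrix (Fin d) (Fin d) ℝ) := continuous_id
  have h1 : Continuous fun M : Fin d → Fin d → ℝ => (Matrix.of M).det := hof.matrix_det
  have h2 : Continuous fun M : Fin d → Fin d → ℝ => (Matrix.of M).adjugate i j :=
    (hof.matrix_adjugate).matrix_elem i j
  have h3 := (h1.measurable.comp h0).inv.mul (h2.measurable.comp h0)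
  have e : (fun ω => (P ω)⁻¹ i j) = fun ω => ((P ω).det)⁻¹ * (P ω).adjugate i j := by
    ext ω
    rw [Matrix.inv_def, Ring.inverse_eq_inv', Matrix.smul_apply, smul_eq_mul]
  rw [e]
  exact h3

theorem mbf {Ω : Type*} {m : MeasurableSpace Ω} {d : ℕ} {Q : Ω → Matrix (Fin d) (Fin d) ℝ}
    {x y : Ω → Fin d → ℝ} (hQ : ∀ i j, Measurable fun ω => Q ω i j) (hx : Measurable x)
    (hy : Measurable y) : Measurable fun ω => bf (Q ω) (x ω) (y ω) := by
  simp only [bf, dotProduct, mulVec]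
  refine Finset.measurable_sum _ fun i _ => ((measurable_pi_apply i).comp hx).mul ?_
  exact Finset.measurable_sum _ fun j _ => (hQ i j).mul ((measurable_pi_apply j).comp hy)

/-- comparison data for the primed sequences -/
structure Prm {Ω : Type*} {m0 : MeasurableSpace Ω} (μ : Measure Ω) (F : Filtration ℕ m0)
    (e T A β γ V' A' β' γ' : ℕ → Ω → ℝ) : Prop where
  Am : ∀ k, Measurable[F k] (A' k)
  βm : ∀ k, Measurable[F k] (β' k)
  γm : ∀ k, Measurable[F k] (γ' k)
  hV : ∀ k ω, V' k ω = A' k ω + β' k ω ^ 2 / (1 - γ' k ω)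
  V1 : ∀ k ω, V' (k + 1) ω = A' k ω + 2 * e k ω * β' k ω + e k ω ^ 2 * γ' k ω
  Tt : ∀ᵐ ω ∂μ, Tendsto (fun k => T k ω) atTop atTop
  γt : ∀ᵐ ω ∂μ, Tendsto (fun k => γ' k ω) atTop (𝓝 0)
  cmp : ∀ᵐ ω ∂μ, ∃ c : ℕ → ℝ, Tendsto c atTop (𝓝 0) ∧ (∀ k, 0 ≤ c k) ∧
    ∀ k, |A' k ω - A k ω| ≤ c k * A k ω ∧ |β' k ω - β k ω| ≤ c k * (√(A k ω) * √(γ k ω)) ∧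
      |γ' k ω - γ k ω| ≤ c k * γ k ω

theorem small_of {f g c : ℕ → ℝ} (hc : Tendsto c atTop (𝓝 0)) (_hg : ∀ k, 0 ≤ g k)
    (h : ∀ k, |f k| ≤ c k * g k) : f =o[atTop] g := by
  have h1 : (fun k => c k * g k) =o[atTop] fun k => 1 * g k :=
    ((isLittleO_one_iff ℝ).2 hc).mul_isBigO (isBigO_refl _ _)
  have h2 : f =O[atTop] fun k => c k * g k := IsBigO.of_bound 1 (Eventually.of_forall fun k => by
    rw [Real.norm_eq_abs, Real.norm_eq_abs, one_mul]
    exact (h k).trans (le_abs_self _))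
  simpa using h2.trans_isLittleO h1

theorem sq_cmp {x y c s : ℝ} (hs : 0 ≤ s) (hc : 0 ≤ c) (h : |y - x| ≤ c * s) (hx : |x| ≤ s) :
    |y ^ 2 - x ^ 2| ≤ (c * (2 + c)) * s ^ 2 := by
  have h1 : |y + x| ≤ (2 + c) * s := by
    have : y + x = (y - x) + 2 * x := by ring
    rw [this]
    refine (abs_add_le _ _).trans ?_
    rw [abs_mul, abs_two]; nlinarith
  have : y ^ 2 - x ^ 2 = (y - x) * (y + x) := by ring
  rw [this, abs_mul]
  calc |y - x| * |y + x| ≤ (c * s) * ((2 + c) * s) := by gcongr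
    _ = _ := by ring

theorem mst {Ω : Type*} {m : MeasurableSpace Ω} {f : Ω → ℝ} (hf : Measurable f) :
    Measurable fun ω => √(f ω) := hf.sqrt

section
variable {Ω : Type*} {m0 : MeasurableSpace Ω} {μ : Measure Ω}
    {F : Filtration ℕ m0} {e T V A β γ V' A' β' γ' : ℕ → Ω → ℝ} {δ σ a : ℝ}

theorem Scal.Nt (H : Scal F e T V A β γ δ) {ω : Ω} (h : Tendsto (fun k => T k ω) atTop atTop) :
    Tendsto (fun k => NN T k ω) atTop atTop := by
  unfold NN
  exact tendsto_atTop_add_const_left _ _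
    (Real.tendsto_log_atTop.comp (h.atTop_div_const (H.Tpos 0 ω)))

theorem Scal.Lg (H : Scal F e T V A β γ δ) {ω : Ω} (hT : Tendsto (fun k => T k ω) atTop atTop)
    (hγ : Tendsto (fun k => γ k ω) atTop (𝓝 0)) :
    CL (fun k => NN T k ω) (fun k => γ k ω) δ := by
  have hδ := H.δpos
  have hNt := H.Nt hT
  have hb : ∀ n, ∑ k ∈ range n, γ k ω ≤ δ * NN T n ω := by
    intro n
    calc ∑ k ∈ range n, γ k ω ≤ ∑ k ∈ range n, δ * (NN T (k + 1) ω - NN T k ω) :=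
          sum_le_sum fun k _ => H.γN k ω
      _ = δ * (NN T n ω - NN T 0 ω) := by rw [← mul_sum, sum_range_sub (fun k => NN T k ω)]
      _ ≤ _ := by
          have := H.N1 0 ω
          gcongr; linarith
  have hl := hasDerivAt_iff_isLittleO_nhds_zero.1 (Real.hasDerivAt_log one_ne_zero)
  have ht : Tendsto (fun k => -(γ k ω / δ)) atTop (𝓝 0) := by
    simpa using (hγ.div_const δ).neg
  have h1 := hl.comp_tendsto ht
  have h2 : (fun k => γ k ω - δ * (NN T (k + 1) ω - NN T k ω)) =o[atTop] fun k => γ k ω := by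
    have h3 := (h1.const_mul_left δ).trans_isBigO (k := fun k => γ k ω) (by
      refine IsBigO.of_bound (1 / δ) (Eventually.of_forall fun k => ?_)
      simp only [Function.comp, norm_neg, norm_div, Real.norm_eq_abs, abs_of_pos hδ]
      apply le_of_eq; ring)
    refine h3.congr_left fun k => ?_
    have e : T k ω / T (k + 1) ω = 1 + -(γ k ω / δ) := by
      rw [H.hγ]; field_simp; ring
    rw [H.Nd, e]
    simp only [Function.comp, Real.log_one, smul_eq_mul, inv_one]
    field_simp
    ring
  have h4 := toeplitz (fun k => H.γ0 k ω) (H.Nmono ω) (fun k => H.N1 k ω) hNt h2 hb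
  refine CL.of_sub (g := fun k => δ * (NN T (k + 1) ω - NN T k ω)) ?_ h4
  have h5 : Tendsto (fun n => δ * (1 - NN T 0 ω / NN T n ω)) atTop (𝓝 (δ * (1 - 0))) :=
    ((hNt.const_div_atTop (NN T 0 ω)).const_sub 1).const_mul δ
  rw [sub_zero, mul_one] at h5
  refine h5.congr fun n => ?_
  rw [← mul_sum, sum_range_sub (fun k => NN T k ω)]
  have := H.N1 n ω
  have h0 : NN T n ω ≠ 0 := by linarith
  field_simp

theorem Prm.gt (H : Scal F e T V A β γ δ) (Q : Prm μ F e T A β γ V' A' β' γ') :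
    ∀ᵐ ω ∂μ, Tendsto (fun k => γ k ω) atTop (𝓝 0) := by
  filter_upwards [Q.γt, Q.cmp] with ω h1 ⟨c, hc, hc0, h⟩
  have h2 : Tendsto (fun k => 2 * γ' k ω) atTop (𝓝 0) := by simpa using h1.const_mul 2
  refine squeeze_zero' (Eventually.of_forall fun k => H.γ0 k ω) ?_ h2
  filter_upwards [hc.eventually_lt_const (show (0 : ℝ) < 1 / 2 by norm_num)] with k hk
  have h3 := (h k).2.2
  have h4 := H.γ0 k ω
  have := (abs_le.1 h3).1
  nlinarith

end

theorem scal_main {Ω : Type*} {m0 : MeasurableSpace Ω} {μ : Measure Ω} [IsProbabilityMeasure μ]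
    {F : Filtration ℕ m0} {e T V A β γ V' A' β' γ' : ℕ → Ω → ℝ} {δ σ a : ℝ} {p : ℕ}
    (hn : Noise μ F e σ a) (H : Scal F e T V A β γ δ) (Q : Prm μ F e T A β γ V' A' β' γ')
    (hp : 1 ≤ p) (hpa : 2 * p < a) :
    ∀ᵐ ω ∂μ, CL (fun k => NN T k ω) (fun k => V' k ω ^ p - A' k ω ^ p) (p * hh δ σ (p - 1)) := by
  have hp1 : (1 : ℝ) ≤ p := by exact_mod_cast hp
  have hp0 : (0 : ℝ) < p := by linarith
  obtain ⟨b, hbdef⟩ : ∃ b, b = min (1 + 1 / (p : ℝ)) (a / (2 * p)) := ⟨_, rfl⟩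
  have hb : 1 < b := by
    rw [hbdef, lt_min_iff]
    refine ⟨?_, ?_⟩
    · have : 0 < 1 / (p : ℝ) := by positivity
      linarith
    · rw [lt_div_iff₀ (by positivity)]; linarith
  have hbp : b ≤ 1 + 1 / (p : ℝ) := hbdef ▸ min_le_left _ _
  have hba : 2 * p * b ≤ a := by
    have : b ≤ a / (2 * p) := hbdef ▸ min_le_right _ _
    rw [le_div_iff₀ (by positivity)] at this
    linarith
  have hb2 : b ≤ 2 := by
    have : 1 / (p : ℝ) ≤ 1 := by rw [div_le_one hp0]; exact hp1
    linarith
  set κ := (1 + b) / 2 with hκ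
  have hκ1 : 1 < κ := by rw [hκ]; linarith
  have hκb : κ < b := by rw [hκ]; linarith
  have hr2 : b * p ≤ p + 1 := by
    have : b * p ≤ (1 + 1 / p) * p := by gcongr
    rw [add_mul, one_mul, one_div_mul_cancel hp0.ne'] at this
    exact this
  have hR := robbins hn H (p := p) (r := b * p) (κ := κ) (by nlinarith) (by nlinarith) hr2 (by linarith) hκ1
  have hγt := Q.gt H
  have hδ := H.δpos
  -- power growth
  have hVN : ∀ ω, (∃ C, ∀ n, V n ω ^ (b * p) ≤ C * NN T n ω ^ κ) →
      ∃ C, 0 ≤ C ∧ ∀ n, V n ω ^ p ≤ C * NN T n ω ^ (κ / b) := by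
    rintro ω ⟨C, hC⟩
    have hb0 : 0 < b := by linarith
    refine ⟨|C| ^ (1 / b), by positivity, fun n => ?_⟩
    have hV0 : 0 ≤ V n ω := (H.A0 n ω).trans (H.AV' n ω)
    have hN0 : 0 ≤ NN T n ω := by linarith [H.N1 n ω]
    have h1 : V n ω ^ (b * p) ≤ |C| * NN T n ω ^ κ :=
      (hC n).trans (by have := le_abs_self C; gcongr)
    have h2 := Real.rpow_le_rpow (by positivity) h1 (show 0 ≤ 1 / b by positivity)
    rw [Real.mul_rpow (by positivity) (by positivity), ← Real.rpow_mul hV0, ← Real.rpow_mul hN0] at h2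
    have e1 : b * p * (1 / b) = p := by field_simp
    have e2 : κ * (1 / b) = κ / b := by ring
    rw [e1, e2, Real.rpow_natCast] at h2
    exact h2
  have hκb1 : κ / b < 1 := by rw [div_lt_one (by linarith)]; exact hκb
  have sX : ∀ k ω, √(A k ω) ^ 2 = A k ω := fun k ω => Real.sq_sqrt (H.A0 k ω)
  have sW : ∀ k ω, √(γ k ω) ^ 2 = γ k ω := fun k ω => Real.sq_sqrt (H.γ0 k ω)
  have D : Dat μ F (NN T) (fun k ω => √(A k ω)) (fun k ω => √(γ k ω)) p b κ := by
    refine ⟨hp, hb, hb2, hκb.le, hκb.le.trans hbp, H.Nmono, H.N1, H.Nm, ?_, fun k ω => Real.sqrt_nonneg _,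
      fun k ω => Real.sqrt_nonneg _, fun k => mst (H.Am k), fun k => mst (H.γm k), ?_, ?_, ?_⟩
    · filter_upwards [Q.Tt] with ω h using H.Nt h
    · filter_upwards [hγt] with ω h
      simpa using h.sqrt
    · filter_upwards [hR] with ω h
      simpa only [sX, sW] using h.1
    · filter_upwards [hR] with ω h
      obtain ⟨C, hC0, hC⟩ := hVN ω h.2
      refine ⟨C, fun k => ?_⟩
      rw [pow_mul, sX]
      calc A k ω ^ p ≤ V k ω ^ p := pow_le_pow_left₀ (H.A0 k ω) (H.AV' k ω) p
        _ ≤ C * NN T k ω ^ (κ / b) := hC k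
        _ ≤ C * NN T k ω := by
            gcongr
            exact Real.rpow_le_self_of_one_le (H.N1 k ω) hκb1.le
        _ ≤ C * NN T (k + 1) ω := by
            gcongr
            exact H.Nmono ω k.le_succ
  have hβ : ∀ k ω, |β k ω| ≤ √(A k ω) * √(γ k ω) := fun k ω => by
    rw [← Real.sqrt_mul (H.A0 k ω)]
    exact Real.abs_le_sqrt (H.cs k ω)
  have I1 : ∀ q, ∀ᵐ ω ∂μ, 1 ≤ q → q ≤ p → (∃ C, ∀ n, ∑ k ∈ range n, √(γ k ω) ^ 2 * (1 + √(A k ω) ^ (2 * (q - 1))) ≤ C * NN T n ω) →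
      (fun n => ∑ k ∈ range n, ((A k ω + 2 * e k ω * β k ω + e k ω ^ 2 * γ k ω) ^ q - A k ω ^ q
        - σ ^ 2 * c2 q (A k ω) (β k ω) (γ k ω))) =o[atTop] fun n => NN T n ω := by
    intro q
    by_cases hq : 1 ≤ q ∧ q ≤ p
    · have := lemmaI hn D hba hq.1 hq.2 H.Am H.βm H.γm (Eventually.of_forall fun ω =>
        ⟨1, zero_le_one, fun k => ⟨by rw [sX, abs_of_nonneg (H.A0 k ω), one_mul],
          by rw [one_mul]; exact hβ k ω, by rw [sW, abs_of_nonneg (H.γ0 k ω), one_mul]⟩⟩)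
      filter_upwards [this] with ω h _ _ using h
    · exact Eventually.of_forall fun ω h1 h2 => absurd ⟨h1, h2⟩ hq
  have I2 : ∀ q, ∀ᵐ ω ∂μ, 1 ≤ q → q ≤ p → (∃ C, ∀ n, ∑ k ∈ range n, √(γ k ω) ^ 2 * (1 + √(A k ω) ^ (2 * (q - 1))) ≤ C * NN T n ω) →
      (fun n => ∑ k ∈ range n, ((A' k ω + 2 * e k ω * β' k ω + e k ω ^ 2 * γ' k ω) ^ q - A' k ω ^ q
        - σ ^ 2 * c2 q (A' k ω) (β' k ω) (γ' k ω))) =o[atTop] fun n => NN T n ω := by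
    intro q
    by_cases hq : 1 ≤ q ∧ q ≤ p
    · have := lemmaI hn D hba hq.1 hq.2 Q.Am Q.βm Q.γm (by
        filter_upwards [Q.cmp] with ω ⟨c, hc, hc0, h⟩
        obtain ⟨B, hB⟩ := hc.bddAbove_range
        have hB' : ∀ k, c k ≤ B := fun k => hB ⟨k, rfl⟩
        have hB0 : 0 ≤ B := (hc0 0).trans (hB' 0)
        have key : ∀ x y s c : ℝ, 0 ≤ s → c ≤ B → |y - x| ≤ c * s → |x| ≤ s → |y| ≤ (1 + B) * s := by
          intro x y s c hs hcB h1 h2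
          have : y = (y - x) + x := by ring
          rw [this]
          refine (abs_add_le _ _).trans ?_
          nlinarith
        refine ⟨1 + B, by linarith, fun k => ⟨?_, ?_, ?_⟩⟩
        · rw [sX]; exact key _ _ _ _ (H.A0 k ω) (hB' k) (h k).1 (abs_of_nonneg (H.A0 k ω)).le
        · rw [mul_assoc]; exact key _ _ _ _ (by positivity) (hB' k) (h k).2.1 (hβ k ω)
        · rw [sW]; exact key _ _ _ _ (H.γ0 k ω) (hB' k) (h k).2.2 (abs_of_nonneg (H.γ0 k ω)).le)
      filter_upwards [this] with ω h _ _ using h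
    · exact Eventually.of_forall fun ω h1 h2 => absurd ⟨h1, h2⟩ hq
  filter_upwards [ae_all_iff.2 I1, ae_all_iff.2 I2, hR, hγt, Q.Tt, Q.cmp] with ω I1 I2 hR hγt hT ⟨c, hc, hc0, h⟩
  obtain ⟨C, hC0, hC⟩ := hVN ω hR.2
  have hNt := H.Nt hT
  have hV0 : ∀ n, 0 ≤ V n ω := fun n => (H.A0 n ω).trans (H.AV' n ω)
  have cv : ∀ q, (∃ C, ∀ n, ∑ k ∈ range n, γ k ω * (1 + A k ω ^ (q - 1)) ≤ C * NN T n ω) →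
      ∃ C, ∀ n, ∑ k ∈ range n, √(γ k ω) ^ 2 * (1 + √(A k ω) ^ (2 * (q - 1))) ≤ C * NN T n ω := by
    rintro q ⟨C, hC⟩
    refine ⟨C, fun n => ?_⟩
    simpa only [pow_mul, sX, sW] using hC n
  have P : PW (fun k => NN T k ω) (fun k => V k ω) (fun k => A k ω) (fun k => β k ω) (fun k => γ k ω)
      (fun k => V' k ω) (fun k => A' k ω) (fun k => β' k ω) (fun k => γ' k ω) δ σ p := by
    refine ⟨hδ, H.Nmono ω, fun k => H.N1 k ω, hNt, fun k => H.A0 k ω, fun k => H.γ0 k ω,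
      fun k => H.cs k ω, hγt, ?_, fun k => H.AV k ω, H.Lg hT hγt, ?_, fun k => Q.hV k ω, ?_, ?_, ?_, ?_, ?_⟩
    · intro k
      have h1 := (H.Tpos (k + 1) ω).ne'
      have h2 := H.V0 k ω
      rw [H.hγ, mul_div_cancel_left₀ _ hδ.ne']
      field_simp
      linarith
    · intro q _ hqp
      have hN1 : (fun _ : ℕ => (1 : ℝ)) =o[atTop] fun n => NN T n ω :=
        (isLittleO_const_left.2 (Or.inr (tendsto_norm_atTop_atTop.comp hNt)))
      have hN2 : (fun n => C * NN T n ω ^ (κ / b)) =o[atTop] fun n => NN T n ω := by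
        have ht := ((tendsto_rpow_neg_atTop (show 0 < 1 - κ / b by linarith)).comp hNt).const_mul C
        rw [mul_zero] at ht
        refine small_of ht (fun n => by linarith [H.N1 n ω]) fun n => ?_
        have hN0 : 0 < NN T n ω := by linarith [H.N1 n ω]
        rw [abs_of_nonneg (by positivity)]
        apply le_of_eq
        simp only [Function.comp]
        rw [mul_assoc]
        congr 1
        nth_rewrite 3 [← Real.rpow_one (NN T n ω)]
        rw [← Real.rpow_add hN0]
        congr 1; ring
      refine IsBigO.trans_isLittleO ?_ (hN1.add hN2)
      refine IsBigO.of_bound 1 (Eventually.of_forall fun n => ?_)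
      rw [one_mul, Real.norm_eq_abs, Real.norm_eq_abs, abs_of_nonneg (pow_nonneg (hV0 n) q)]
      refine le_trans ?_ (le_abs_self _)
      exact (pow_le_one_add' (hV0 n) hqp).trans (by linarith [hC n])
    · exact small_of hc (fun k => H.A0 k ω) fun k => (h k).1
    · exact small_of hc (fun k => H.γ0 k ω) fun k => (h k).2.2
    · refine small_of (c := fun k => c k * (2 + c k)) ?_ (fun k => mul_nonneg (H.A0 k ω) (H.γ0 k ω)) fun k => ?_
      · simpa using hc.mul (hc.const_add 2)
      · have := sq_cmp (by positivity) (hc0 k) (h k).2.1 (hβ k ω)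
        rwa [mul_pow, sX, sW] at this
    · intro q h1 h2 h3
      refine (I1 q h1 h2 (cv q h3)).congr_left fun n => sum_congr rfl fun k _ => ?_
      rw [H.V1]
    · intro q h1 h2 h3
      refine (I2 q h1 h2 (cv q h3)).congr_left fun n => sum_congr rfl fun k _ => ?_
      rw [Q.V1]
  have := (P.main (p - 1) (by omega)).2.2
  rwa [Nat.sub_add_cancel hp] at this

/-- shifted matrix -/
def Pm {Ω : Type*} {d : ℕ} (S : Matrix (Fin d) (Fin d) ℝ)
    (Φ : ℕ → Ω → Fin d → ℝ) (n : ℕ) (ω : Ω) : Matrix (Fin d) (Fin d) ℝ :=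
  S + ∑ k ∈ Finset.range n, vecMulVec (Φ k ω) (Φ k ω)

/-- scalar clock -/
def Tc {Ω : Type*} {d : ℕ} (L : Matrix (Fin d) (Fin d) ℝ)
    (Φ : ℕ → Ω → Fin d → ℝ) (n : ℕ) (ω : Ω) : ℝ :=
  1 + ∑ k ∈ Finset.range n, bf L⁻¹ (Φ k ω) (Φ k ω) / d

section
variable {Ω : Type*} {d : ℕ} {S L : Matrix (Fin d) (Fin d) ℝ} {Φ : ℕ → Ω → Fin d → ℝ}

theorem Pm_succ (n : ℕ) (ω : Ω) : Pm S Φ (n + 1) ω = Pm S Φ n ω + vecMulVec (Φ n ω) (Φ n ω) := by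
  unfold Pm; rw [sum_range_succ, add_assoc]

theorem Pm_pd (hS : S.PosDef) (n : ℕ) (ω : Ω) : (Pm S Φ n ω).PosDef := by
  induction n with
  | zero => simpa [Pm] using hS
  | succ n ih => rw [Pm_succ]; exact pd_add ih _

theorem Tc_succ (n : ℕ) (ω : Ω) : Tc L Φ (n + 1) ω = Tc L Φ n ω + bf L⁻¹ (Φ n ω) (Φ n ω) / d := by
  unfold Tc; rw [sum_range_succ, add_assoc]

theorem Tc_zero (ω : Ω) : Tc L Φ 0 ω = 1 := by simp [Tc]

theorem Tc_mono (hL : L.PosDef) (ω : Ω) : Monotone fun n => Tc L Φ n ω := by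
  refine monotone_nat_of_le_succ fun n => ?_
  rw [Tc_succ]
  have := bf_nonneg hL.inv (Φ n ω)
  have : 0 ≤ bf L⁻¹ (Φ n ω) (Φ n ω) / d := by positivity
  linarith

theorem Tc_pos (hL : L.PosDef) (n : ℕ) (ω : Ω) : 0 < Tc L Φ n ω := by
  have := Tc_mono (Φ := Φ) hL ω (Nat.zero_le n)
  simp only [Tc_zero] at this
  linarith

theorem Tc_trace (hd : 0 < d) (n : ℕ) (ω : Ω) :
    (L⁻¹ * Pm S Φ n ω).trace = (L⁻¹ * S).trace + d * (Tc L Φ n ω - 1) := by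
  have hd0 : (d : ℝ) ≠ 0 := by positivity
  induction n with
  | zero => simp [Pm, Tc]
  | succ n ih =>
    rw [Pm_succ, Tc_succ, Matrix.mul_add, trace_add, ih, mul_vecMulVec, trace_vecMulVec]
    have : (L⁻¹ *ᵥ Φ n ω) ⬝ᵥ Φ n ω = bf L⁻¹ (Φ n ω) (Φ n ω) := dotProduct_comm _ _
    rw [this]
    field_simp
    ring

theorem Tc_conv (hd : 0 < d) (hL : L.PosDef) {ω : Ω} {α : ℕ → ℝ} (hα : ∀ n, 0 < α n)
    (hαt : Tendsto α atTop atTop) (h : Tendsto (fun n => (α n)⁻¹ • Pm S Φ (n + 1) ω) atTop (𝓝 L)) :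
    Tendsto (fun n => Tc L Φ (n + 1) ω) atTop atTop ∧
      Tendsto (fun n => (Tc L Φ (n + 1) ω)⁻¹ • Pm S Φ (n + 1) ω) atTop (𝓝 L) := by
  have hd0 : (d : ℝ) ≠ 0 := by positivity
  have hu : IsUnit L.det := (Matrix.isUnit_iff_isUnit_det _).1 hL.isUnit
  have hc : Continuous fun M : Matrix (Fin d) (Fin d) ℝ => (L⁻¹ * M).trace :=
    (continuous_const.matrix_mul continuous_id).matrix_trace
  have h1 := (hc.tendsto L).comp h
  simp only [Function.comp_def, Matrix.nonsing_inv_mul _ hu, trace_one, Fintype.card_fin] at h1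
  have h2 : Tendsto (fun n => ((L⁻¹ * S).trace - d) / α n) atTop (𝓝 0) := hαt.const_div_atTop _
  have h3 := (h1.sub h2).div_const (d : ℝ)
  rw [sub_zero, div_self hd0] at h3
  have h4 : Tendsto (fun n => Tc L Φ (n + 1) ω / α n) atTop (𝓝 1) := by
    refine h3.congr fun n => ?_
    have := (hα n).ne'
    rw [Matrix.mul_smul, trace_smul, Tc_trace hd, smul_eq_mul]
    field_simp
    ring
  refine ⟨?_, ?_⟩
  · refine (h4.pos_mul_atTop one_pos hαt).congr fun n => ?_
    have := (hα n).ne'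
    field_simp
  · have h5 := (h4.inv₀ one_ne_zero).smul h
    rw [inv_one, one_smul] at h5
    refine h5.congr fun n => ?_
    rw [smul_smul]
    congr 1
    have := (hα n).ne'
    have := (Tc_pos (Φ := Φ) hL (n + 1) ω).ne'
    field_simp

theorem Mart_succ {M0 : Ω → Fin d → ℝ} {ε : ℕ → Ω → ℝ} (n : ℕ) (ω : Ω) :
    Mart M0 Φ ε (n + 1) ω = Mart M0 Φ ε n ω + ε (n + 1) ω • Φ n ω := by
  unfold Mart; rw [sum_range_succ, add_assoc]

theorem mMart {m : MeasurableSpace Ω} {M0 : Ω → Fin d → ℝ} {ε : ℕ → Ω → ℝ} {n : ℕ}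
    (h0 : Measurable M0) (h1 : ∀ i < n, Measurable (ε (i + 1))) (h2 : ∀ i < n, Measurable (Φ i)) :
    Measurable (Mart M0 Φ ε n) := by
  refine h0.add (Finset.measurable_sum _ fun i hi => ?_)
  exact (h1 i (mem_range.1 hi)).smul (h2 i (mem_range.1 hi))

theorem mTc {m : MeasurableSpace Ω} {n : ℕ} (h2 : ∀ i < n, Measurable (Φ i)) :
    Measurable (Tc L Φ n) := by
  refine measurable_const.add (Finset.measurable_sum _ fun i hi => ?_)
  have h := h2 i (mem_range.1 hi)
  exact (mbf (Q := fun _ => L⁻¹) (fun _ _ => measurable_const) h h).div_const _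

theorem mPm {m : MeasurableSpace Ω} {n : ℕ} (h2 : ∀ i < n, Measurable (Φ i)) (i j : Fin d) :
    Measurable fun ω => Pm S Φ n ω i j := by
  simp only [Pm, Matrix.add_apply, Matrix.sum_apply, vecMulVec_apply]
  refine measurable_const.add (Finset.measurable_sum _ fun k hk => ?_)
  have h := h2 k (mem_range.1 hk)
  exact ((measurable_pi_apply i).comp h).mul ((measurable_pi_apply j).comp h)

theorem bf_sub_smul (Q R : Matrix (Fin d) (Fin d) ℝ) {t : ℝ} (ht : t ≠ 0) (x y : Fin d → ℝ) :
    bf Q x y - bf R x y / t = bf (t • Q - R) x y / t := by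
  simp only [bf, sub_mulVec, smul_mulVec, dotProduct_sub, dotProduct_smul, smul_eq_mul]
  field_simp

theorem bf_cmp (hL : L.PosDef) (Q : Matrix (Fin d) (Fin d) ℝ) {t : ℝ} (ht : 0 < t) (x y : Fin d → ℝ) :
    |bf Q x y - bf L⁻¹ x y / t| ≤
      cc L (t • Q - L⁻¹) * (√(bf L⁻¹ x x / t) * √(bf L⁻¹ y y / t)) := by
  rw [bf_sub_smul Q _ ht.ne', abs_div, abs_of_pos ht, Real.sqrt_div' _ ht.le, Real.sqrt_div' _ ht.le,
    div_le_iff₀ ht]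
  refine (cc_bound hL _ x y).trans (le_of_eq ?_)
  have h1 : √t * √t = t := Real.mul_self_sqrt ht.le
  have h2 : √t ≠ 0 := (Real.sqrt_pos.2 ht).ne'
  rw [div_mul_div_comm, h1, mul_assoc, div_mul_cancel₀ _ ht.ne']

end

/-- **Theorem 2, second part**: a.s. `(1/log d_n) ∑_{k=1}^n [(M_kᵗS_{k-1}⁻¹M_k)^p - (M_kᵗS_k⁻¹M_k)^p] → λ(p) = (p/d) ℓ(p)`. -/
theorem asclt_moments_vector_diff
    {Ω : Type*} {m0 : MeasurableSpace Ω} {μ : Measure Ω} [IsProbabilityMeasure μ]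
    (F : Filtration ℕ m0) {d : ℕ} (hd : 0 < d)
    (ε : ℕ → Ω → ℝ) (Φ : ℕ → Ω → Fin d → ℝ) (M0 : Ω → Fin d → ℝ)
    (S L : Matrix (Fin d) (Fin d) ℝ) (hS : S.PosDef) (hL : L.PosDef)
    (σ : ℝ) (p : ℕ) (hp : 1 ≤ p) (a : ℝ) (ha : 2 * p < a)
    (α : ℕ → Ω → ℝ)
    (hεadapt : ∀ n, StronglyMeasurable[F n] (ε n))
    (hεint : ∀ n, Integrable (ε n) μ)
    (hΦadapt : ∀ n, StronglyMeasurable[F n] (Φ n))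
    (hM0 : StronglyMeasurable[F 0] M0)
    (hmds : ∀ n, μ[ε (n + 1)|F n] =ᵐ[μ] 0)
    (hvar : ∀ n, μ[fun ω => ε (n + 1) ω ^ 2|F n] =ᵐ[μ] fun _ => σ ^ 2)
    (hmomint : ∀ n, Integrable (fun ω => |ε (n + 1) ω| ^ a) μ)
    (hmom : ∀ᵐ ω ∂μ, ∃ C : ℝ, ∀ n, (μ[fun ω => |ε (n + 1) ω| ^ a|F n]) ω ≤ C)
    (hf0 : ∀ᵐ ω ∂μ, Tendsto (fun n => expl S Φ n ω) atTop (𝓝 0))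
    (hαmeas : ∀ n, Measurable (α n))
    (hαpos : ∀ n ω, 0 < α n ω)
    (hαmono : ∀ᵐ ω ∂μ, Monotone fun n => α n ω)
    (hαtop : ∀ᵐ ω ∂μ, Tendsto (fun n => α n ω) atTop atTop)
    (hconv : ∀ᵐ ω ∂μ, Tendsto (fun n => (α n ω)⁻¹ • Smat S Φ n ω) atTop (𝓝 L)) :
    ∀ᵐ ω ∂μ, Tendsto (fun n =>
      (Real.log ((Smat S Φ n ω).det))⁻¹ *
        ∑ k ∈ Finset.Icc 1 n,
          ((Mart M0 Φ ε k ω ⬝ᵥ ((Smat S Φ (k - 1) ω)⁻¹ *ᵥ Mart M0 Φ ε k ω)) ^ p -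
            (Mart M0 Φ ε k ω ⬝ᵥ ((Smat S Φ k ω)⁻¹ *ᵥ Mart M0 Φ ε k ω)) ^ p))
      atTop (𝓝 ((p : ℝ) / (d : ℝ) * elllim d p σ)) := by
  have hdR : (0 : ℝ) < d := by exact_mod_cast hd
  have hLi := hL.inv
  have mε : ∀ n, Measurable[F n] (ε n) := fun n => (hεadapt n).measurable
  have mΦ : ∀ n, Measurable[F n] (Φ n) := fun n => (hΦadapt n).measurable
  have mε' : ∀ k n, n ≤ k → Measurable[F k] (ε n) := fun k n h => (mε n).mono (F.mono h) le_rfl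
  have mΦ' : ∀ k n, n ≤ k → Measurable[F k] (Φ n) := fun k n h => (mΦ n).mono (F.mono h) le_rfl
  have mM0 : ∀ k, Measurable[F k] M0 := fun k => hM0.measurable.mono (F.mono (Nat.zero_le k)) le_rfl
  have mM : ∀ k, Measurable[F k] (Mart M0 Φ ε k) := fun k =>
    mMart (mM0 k) (fun i hi => mε' k _ hi) (fun i hi => mΦ' k _ hi.le)
  have mT : ∀ k, Measurable[F k] (Tc L Φ (k + 1)) := fun k =>
    mTc fun i hi => mΦ' k _ (Nat.lt_succ_iff.1 hi)
  have mP : ∀ k i j, Measurable[F k] fun ω => (Pm S Φ (k + 1) ω)⁻¹ i j := fun k i j =>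
    minv (fun i j => mPm (fun n hn => mΦ' k _ (Nat.lt_succ_iff.1 hn)) i j) i j
  have mc : ∀ {f g : ℕ → Ω → Fin d → ℝ} (k : ℕ), Measurable[F k] (f k) → Measurable[F k] (g k) →
      Measurable[F k] fun ω => bf L⁻¹ (f k ω) (g k ω) / Tc L Φ (k + 1) ω := fun k hf hg =>
    meas_div (mbf (Q := fun _ => L⁻¹) (fun _ _ => measurable_const) hf hg) (mT k)
  have hn : Noise μ F (fun k => ε (k + 1)) σ a :=
    ⟨fun k => mε (k + 1), fun k => hεint _, hmds, hvar, hmomint, hmom⟩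
  have hTp : ∀ k ω, 0 < Tc L Φ k ω := fun k ω => Tc_pos hL k ω
  have H : Scal F (fun k => ε (k + 1)) (Tc L Φ)
      (fun k ω => bf L⁻¹ (Mart M0 Φ ε k ω) (Mart M0 Φ ε k ω) / Tc L Φ k ω)
      (fun k ω => bf L⁻¹ (Mart M0 Φ ε k ω) (Mart M0 Φ ε k ω) / Tc L Φ (k + 1) ω)
      (fun k ω => bf L⁻¹ (Φ k ω) (Mart M0 Φ ε k ω) / Tc L Φ (k + 1) ω)
      (fun k ω => bf L⁻¹ (Φ k ω) (Φ k ω) / Tc L Φ (k + 1) ω) d := by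
    refine ⟨hdR, hTp, Tc_mono hL, mTc fun i hi => absurd hi (Nat.not_lt_zero i), mT, fun k => mc k (mM k) (mM k), fun k => mc k (mΦ k) (mM k),
      ?_, ?_, ?_, ?_, ?_⟩
    · exact fun k ω => div_nonneg (bf_nonneg hLi _) (hTp _ ω).le
    · intro k ω
      have := hTp (k + 1) ω
      rw [div_pow, div_mul_div_comm, ← sq]
      have := bf_cs hLi (Φ k ω) (Mart M0 Φ ε k ω)
      gcongr
      linarith
    · intro k ω
      have := (hTp (k + 1) ω).ne'
      have e := Tc_succ (L := L) (Φ := Φ) k ω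
      have e2 : Tc L Φ k ω = Tc L Φ (k + 1) ω - bf L⁻¹ (Φ k ω) (Φ k ω) / d := by linarith
      rw [e2]
      field_simp
      ring
    · intro k ω
      simp only [Mart_succ, bf_expand hLi]
      ring
    · intro k ω
      have := (hTp (k + 1) ω).ne'
      have := (hTp k ω).ne'
      field_simp
  have hcv : ∀ᵐ ω ∂μ, Tendsto (fun n => Tc L Φ (n + 1) ω) atTop atTop ∧
      Tendsto (fun n => (Tc L Φ (n + 1) ω)⁻¹ • Pm S Φ (n + 1) ω) atTop (𝓝 L) := by
    filter_upwards [hαtop, hconv] with ω h1 h2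
    exact Tc_conv hd hL (fun n => hαpos n ω) h1 h2
  have Q : Prm μ F (fun k => ε (k + 1)) (Tc L Φ)
      (fun k ω => bf L⁻¹ (Mart M0 Φ ε k ω) (Mart M0 Φ ε k ω) / Tc L Φ (k + 1) ω)
      (fun k ω => bf L⁻¹ (Φ k ω) (Mart M0 Φ ε k ω) / Tc L Φ (k + 1) ω)
      (fun k ω => bf L⁻¹ (Φ k ω) (Φ k ω) / Tc L Φ (k + 1) ω)
      (fun k ω => bf (Pm S Φ k ω)⁻¹ (Mart M0 Φ ε k ω) (Mart M0 Φ ε k ω))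
      (fun k ω => bf (Pm S Φ (k + 1) ω)⁻¹ (Mart M0 Φ ε k ω) (Mart M0 Φ ε k ω))
      (fun k ω => bf (Pm S Φ (k + 1) ω)⁻¹ (Φ k ω) (Mart M0 Φ ε k ω))
      (fun k ω => bf (Pm S Φ (k + 1) ω)⁻¹ (Φ k ω) (Φ k ω)) := by
    refine ⟨fun k => mbf (mP k) (mM k) (mM k), fun k => mbf (mP k) (mΦ k) (mM k),
      fun k => mbf (mP k) (mΦ k) (mΦ k), ?_, ?_, ?_, ?_, ?_⟩
    · intro k ω
      simp only [Pm_succ]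
      exact sherman (Pm_pd hS k ω) _ _
    · intro k ω
      simp only [Mart_succ, bf_expand (Pm_pd hS (k + 1) ω).inv]
    · filter_upwards [hcv] with ω h
      exact (tendsto_add_atTop_iff_nat 1).1 h.1
    · exact hf0
    · filter_upwards [hcv] with ω h
      refine ⟨fun k => cc L (Tc L Φ (k + 1) ω • (Pm S Φ (k + 1) ω)⁻¹ - L⁻¹), ?_, fun k => cc_nonneg _ _, fun k => ⟨?_, ?_, ?_⟩⟩
      · apply cc_tendsto
        have h1 := (inv_tendsto hL h.2).sub_const L⁻¹
        rw [sub_self] at h1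
        refine h1.congr fun k => ?_
        rw [inv_smul_pd (Pm_pd hS (k + 1) ω) (hTp (k + 1) ω)]
      · have := bf_cmp hL (Pm S Φ (k + 1) ω)⁻¹ (hTp (k + 1) ω) (Mart M0 Φ ε k ω) (Mart M0 Φ ε k ω)
        rwa [Real.mul_self_sqrt (div_nonneg (bf_nonneg hLi _) (hTp _ ω).le)] at this
      · have := bf_cmp hL (Pm S Φ (k + 1) ω)⁻¹ (hTp (k + 1) ω) (Φ k ω) (Mart M0 Φ ε k ω)
        rwa [mul_comm (√_)] at this
      · have := bf_cmp hL (Pm S Φ (k + 1) ω)⁻¹ (hTp (k + 1) ω) (Φ k ω) (Φ k ω)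
        rwa [Real.mul_self_sqrt (div_nonneg (bf_nonneg hLi _) (hTp _ ω).le)] at this
  filter_upwards [scal_main hn H Q hp ha, hcv] with ω hmain hc
  set g : ℕ → ℝ := fun k => bf (Pm S Φ k ω)⁻¹ (Mart M0 Φ ε k ω) (Mart M0 Φ ε k ω) ^ p -
    bf (Pm S Φ (k + 1) ω)⁻¹ (Mart M0 Φ ε k ω) (Mart M0 Φ ε k ω) ^ p with hg
  have hdet := logdet hL (fun k => Pm_pd (Φ := Φ) hS (k + 1) ω) (fun k => hTp (k + 1) ω) hc.1 hc.2
  have hlog : Tendsto (fun n => 1 + Real.log (Tc L Φ (n + 1) ω)) atTop atTop :=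
    tendsto_atTop_add_const_left _ _ (Real.tendsto_log_atTop.comp hc.1)
  have h1 : Tendsto (fun n => (∑ k ∈ range (n + 1), g k) / (1 + Real.log (Tc L Φ (n + 1) ω))) atTop
      (𝓝 (p * hh d σ (p - 1))) := by
    have := (tendsto_add_atTop_iff_nat 1).2 hmain
    refine this.congr fun n => ?_
    simp only [NN, Tc_zero, div_one]
  have h2 : Tendsto (fun n => g 0 / (1 + Real.log (Tc L Φ (n + 1) ω))) atTop (𝓝 0) :=
    hlog.const_div_atTop _
  have h3 := (h1.sub h2).div hdet hdR.ne'
  have elim : (p * hh d σ (p - 1) - 0) / (d : ℝ) = (p : ℝ) / d * elllim d p σ := by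
    have e : hh d σ (p - 1) = elllim d p σ := by
      unfold hh elllim
      rw [Nat.sub_add_cancel hp]
    rw [e]; ring
  rw [elim] at h3
  refine h3.congr' ?_
  filter_upwards [hlog.eventually_gt_atTop 0] with n hn0
  have es : ∑ k ∈ Finset.Icc 1 n, g k = ∑ k ∈ range (n + 1), g k - g 0 := by
    rw [sum_range_succ', add_sub_cancel_right, Finset.range_eq_Ico, Finset.sum_Ico_add' g 0 n 1]
    congr 1
  have es2 : (∑ k ∈ Finset.Icc 1 n,
          ((Mart M0 Φ ε k ω ⬝ᵥ ((Smat S Φ (k - 1) ω)⁻¹ *ᵥ Mart M0 Φ ε k ω)) ^ p -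
            (Mart M0 Φ ε k ω ⬝ᵥ ((Smat S Φ k ω)⁻¹ *ᵥ Mart M0 Φ ε k ω)) ^ p)) = ∑ k ∈ Finset.Icc 1 n, g k := by
    refine sum_congr rfl fun k hk => ?_
    obtain ⟨j, rfl⟩ : ∃ j, k = j + 1 := ⟨k - 1, by have := (Finset.mem_Icc.1 hk).1; omega⟩
    rfl
  rw [es2, es]
  have e3 : Smat S Φ n ω = Pm S Φ (n + 1) ω := rfl
  rw [e3, Pi.div_apply, ← sub_div, div_div_div_cancel_right₀ hn0.ne', inv_mul_eq_div]
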